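/- There exists a shift space X ⊆ {0,1}^∞ which is minimal, topologically mixing, has positive topological entropy, and has the d̄-shadowing property; moreover, the ergodic measures of X are entropy dense in M_σ(X) and the set of ergodic measures of X is uncountable. -/

import Mathlib

open MeasureTheory Filter Topology

namespace DbarPaper

variable {A : Type} [Fintype A] [DecidableEq A] [Inhabited A]
  [TopologicalSpace A] [DiscreteTopology A]
  [MeasurableSpace A] [MeasurableSingletonClass A]

/-- The shift map on the full shift `𝒜^∞ = ℕ → A`. -/
def shift : (ℕ → A) → (ℕ → A) := fun x n => x (n + 1)

/-- A shift space: a nonempty, closed, shift-invariant subset of the full shift. -/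
def ShiftSpace (X : Set (ℕ → A)) : Prop :=
  X.Nonempty ∧ IsClosed X ∧ ∀ x ∈ X, shift x ∈ X

/-- The word `w` appears in the sequence `x`. -/
def occursIn (w : List A) (x : ℕ → A) : Prop :=
  ∃ i : ℕ, w = List.ofFn (fun k : Fin w.length => x (i + (k : ℕ)))

/-- The language of a set `X`: all finite words appearing in points of `X`. -/
def lang (X : Set (ℕ → A)) : Set (List A) := {w | ∃ x ∈ X, occursIn w x}

/-- Words of length `n` in the language of `X`. -/
def langN (n : ℕ) (X : Set (ℕ → A)) : Set (List A) := {w | w ∈ lang X ∧ w.length = n}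

/-- The pseudometric `d̄` on the full shift. -/
noncomputable def dbar (x y : ℕ → A) : ℝ :=
  Filter.limsup
    (fun n => (((Finset.range n).filter (fun j => x j ≠ y j)).card : ℝ) / (n : ℝ))
    Filter.atTop

/-- Hausdorff "distance" between two sets induced by a `ℝ`-valued distance. -/
noncomputable def hausdist {Z : Type*} (d : Z → Z → ℝ) (P Q : Set Z) : ℝ :=
  max (⨆ p : P, ⨅ q : Q, d p q) (⨆ q : Q, ⨅ p : P, d p q)

/-- A probability measure is shift-invariant. -/
def invariantPM (μ : ProbabilityMeasure (ℕ → A)) : Prop :=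
  (μ : Measure (ℕ → A)).map shift = (μ : Measure (ℕ → A))

/-- `M_σ(X)`: shift-invariant Borel probability measures giving `X` full measure. -/
def Msigma (X : Set (ℕ → A)) : Set (ProbabilityMeasure (ℕ → A)) :=
  {μ | invariantPM μ ∧ μ X = 1}

/-- `ξ` is a joining of `μ` and `ν`: a `σ×σ`-invariant measure on the product with
marginals `μ` and `ν`. -/
def IsJoining (ξ : Measure ((ℕ → A) × (ℕ → A))) (μ ν : ProbabilityMeasure (ℕ → A)) : Prop :=
  ξ.map (Prod.map shift shift) = ξ ∧
  ξ.map Prod.fst = (μ : Measure (ℕ → A)) ∧ ξ.map Prod.snd = (ν : Measure (ℕ → A))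

/-- Ornstein's metric `d̄_M` on invariant measures. -/
noncomputable def dbarM (μ ν : ProbabilityMeasure (ℕ → A)) : ℝ :=
  sInf {r : ℝ | ∃ ξ : Measure ((ℕ → A) × (ℕ → A)),
    IsJoining ξ μ ν ∧ r = (ξ {p | p.1 0 ≠ p.2 0}).toReal}

/-- `d̄_M`-stability of a shift space (Austin). -/
def DbarMStable (X : Set (ℕ → A)) : Prop :=
  ∀ ε : ℝ, 0 < ε → ∃ U : Set (ProbabilityMeasure (ℕ → A)), IsOpen U ∧ Msigma X ⊆ U ∧
    ∀ ν ∈ U, invariantPM ν → ∃ μ ∈ Msigma X, dbarM μ ν < ε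

/-- The infinite concatenation of a sequence of (nonempty) words. -/
def concatSeq (w : ℕ → List A) : ℕ → A := fun n =>
  ((List.ofFn (fun i : Fin (n + 1) => w (i : ℕ))).flatten).getD n default

/-- The `d̄`-shadowing property. -/
def DbarShadowing (X : Set (ℕ → A)) : Prop :=
  ∀ ε : ℝ, 0 < ε → ∃ N : ℕ, 0 < N ∧ ∀ w : ℕ → List A,
    (∀ j, w j ∈ lang X) → (∀ j, N ≤ (w j).length) →
    ∃ x' ∈ X, dbar (concatSeq w) x' < ε

/-- `U_n(X)`: the union of cylinders of words of length `n` in the language of `X`. -/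
def cylNbhd (X : Set (ℕ → A)) (n : ℕ) : Set (ℕ → A) :=
  {x | List.ofFn (fun k : Fin n => x (k : ℕ)) ∈ lang X}

/-- The `n`-th (topological) Markov approximation of `X`: all sequences whose subwords of
length `n+1` belong to the language of `X`. -/
def markovApprox (X : Set (ℕ → A)) (n : ℕ) : Set (ℕ → A) :=
  {x | ∀ i : ℕ, List.ofFn (fun k : Fin (n + 1) => x (i + (k : ℕ))) ∈ lang X}

/-- Transitivity, in terms of the language. -/
def TransitiveShift (X : Set (ℕ → A)) : Prop :=
  ∀ u ∈ lang X, ∀ w ∈ lang X, ∃ v : List A, u ++ v ++ w ∈ lang X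

/-- Topological mixing, in terms of the language. -/
def MixingShift (X : Set (ℕ → A)) : Prop :=
  ∀ u ∈ lang X, ∀ w ∈ lang X, ∃ N : ℕ, ∀ m : ℕ, N ≤ m →
    ∃ v : List A, v.length = m ∧ u ++ v ++ w ∈ lang X

/-- Chain mixing: all but finitely many Markov approximations are topologically mixing. -/
def ChainMixing (X : Set (ℕ → A)) : Prop :=
  ∃ N : ℕ, ∀ n : ℕ, N ≤ n → MixingShift (markovApprox X n)

/-- `C` is the measure center of `X`: the smallest shift space contained in `X` of full
measure for every invariant measure of `X`. -/
def IsMeasureCenter (X C : Set (ℕ → A)) : Prop :=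
  ShiftSpace C ∧ C ⊆ X ∧ (∀ μ ∈ Msigma X, μ C = 1) ∧
  ∀ Y : Set (ℕ → A), ShiftSpace Y → Y ⊆ X → (∀ μ ∈ Msigma X, μ Y = 1) → C ⊆ Y

/-- Measure of the cylinder determined by a word of length `n`. -/
noncomputable def cylMeasure (μ : ProbabilityMeasure (ℕ → A)) {n : ℕ} (w : Fin n → A) : ℝ :=
  ((μ : Measure (ℕ → A)) {x | ∀ k : Fin n, x (k : ℕ) = w k}).toReal

/-- Entropy of the partition into cylinders of length `n`. -/
noncomputable def blockEntropy (μ : ProbabilityMeasure (ℕ → A)) (n : ℕ) : ℝ :=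
  -∑ w : Fin n → A, cylMeasure μ w * Real.log (cylMeasure μ w)

/-- Kolmogorov–Sinai entropy of a shift-invariant measure. -/
noncomputable def ksEntropy (μ : ProbabilityMeasure (ℕ → A)) : ℝ :=
  Filter.limsup (fun n => blockEntropy μ n / (n : ℝ)) Filter.atTop

/-- `μ` is ergodic for the shift. -/
def ErgodicPM (μ : ProbabilityMeasure (ℕ → A)) : Prop :=
  Ergodic shift (μ : Measure (ℕ → A))

/-- Ergodic measures are entropy dense in `M_σ(X)`. -/
def EntropyDense (X : Set (ℕ → A)) : Prop :=
  ∀ μ ∈ Msigma X, ∀ U : Set (ProbabilityMeasure (ℕ → A)), IsOpen U → μ ∈ U →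
    ∀ ε : ℝ, 0 < ε →
      ∃ ν ∈ Msigma X, ν ∈ U ∧ ErgodicPM ν ∧ |ksEntropy ν - ksEntropy μ| < ε

/-- Topological entropy of a shift space. -/
noncomputable def topEntropy (X : Set (ℕ → A)) : ℝ :=
  Filter.limsup (fun n => Real.log (Nat.card ↥(langN n X)) / (n : ℝ)) Filter.atTop

/-- The standard metric on the full shift. -/
noncomputable def rho (x y : ℕ → A) : ℝ :=
  open scoped Classical in
  if x = y then 0 else (2 : ℝ) ^ (-((sInf {j : ℕ | x j ≠ y j} : ℕ) : ℤ))

/-- Proximality of a shift space. -/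
def ProximalShift (X : Set (ℕ → A)) : Prop :=
  ∀ x ∈ X, ∀ y ∈ X,
    Filter.liminf (fun n => rho (shift^[n] x) (shift^[n] y)) Filter.atTop = 0

/-- Minimality of a shift space. -/
def MinimalShift (X : Set (ℕ → A)) : Prop :=
  ShiftSpace X ∧ ∀ Y : Set (ℕ → A), ShiftSpace Y → Y ⊆ X → Y = X

/-- An `A`-labeled directed multigraph on vertices `V` with edges `E`. -/
structure LabeledGraph (A V E : Type*) where
  src : E → V
  dst : E → V
  lab : E → A

namespace LabeledGraph

variable {A' V E : Type*}

/-- `es` is a path in `G` from `u` to `v`. -/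
def PathFromTo (G : LabeledGraph A' V E) (es : List E) (u v : V) : Prop :=
  es.Chain' (fun e f => G.dst e = G.src f) ∧
  es.head?.map G.src = some u ∧ es.getLast?.map G.dst = some v

/-- `G` is strongly connected. -/
def StronglyConnected (G : LabeledGraph A' V E) : Prop :=
  ∀ u v : V, ∃ es : List E, G.PathFromTo es u v

/-- `d` is the period of `G`: the gcd of lengths of closed paths. -/
def HasPeriod (G : LabeledGraph A' V E) (d : ℕ) : Prop :=
  (∀ (es : List E) (u : V), G.PathFromTo es u u → d ∣ es.length) ∧
  ∀ d' : ℕ, (∀ (es : List E) (u : V), G.PathFromTo es u u → d' ∣ es.length) → d' ∣ d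

/-- `b` is a safe symbol for `G`. -/
def SafeSymbol (G : LabeledGraph A' V E) (b : A') : Prop :=
  ∀ e : E, ∃ e' : E, G.src e' = G.src e ∧ G.dst e' = G.dst e ∧ G.lab e' = b

/-- The shift space presented by the labeled graph `G`: labels read along infinite paths. -/
def presents (G : LabeledGraph A' V E) : Set (ℕ → A') :=
  {x | ∃ e : ℕ → E, (∀ j, G.dst (e j) = G.src (e (j + 1))) ∧ ∀ j, x j = G.lab (e j)}

end LabeledGraph

/-- The coupling of a family of labeled graphs: an edge labeled `a` from `v` to `v'` exists
iff each `G k` has an edge from `v k` to `v' k` labeled `a`. -/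
def coupling {A' : Type*} {n : ℕ} {V E : Fin n → Type*}
    (G : ∀ k, LabeledGraph A' (V k) (E k)) :
    LabeledGraph A' (∀ k, V k) {p : (∀ k, E k) × A' // ∀ k, (G k).lab (p.1 k) = p.2} where
  src p := fun k => (G k).src (p.1.1 k)
  dst p := fun k => (G k).dst (p.1.1 k)
  lab p := p.1.2

/-- Sofic shift spaces: those presented by some finite labeled graph. -/
def Sofic (X : Set (ℕ → A)) : Prop :=
  ∃ (V E : Type) (_ : Fintype V) (_ : Fintype E) (G : LabeledGraph A V E),
    X = G.presents

/-- The coded shift generated by a finite set of words `B`: the closure of the set of all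
shifts of infinite concatenations of words from `B`. -/
def codedShift (B : Finset (List A)) : Set (ℕ → A) :=
  closure {x | ∃ (b : ℕ → List A) (k : ℕ), (∀ i, b i ∈ B) ∧ x = shift^[k] (concatSeq b)}

/-!
A block of level `k + 1` is a concatenation of blocks of level `k`, of length between `L` and `4 L`
with `L = blen (k + 1)`, that ends with a marker containing all words of length at most `k` that
occur in concatenations of blocks of level `k`. The shift space consists of the sequences all of
whose words are factors of concatenations of blocks of level `k`, for each `k`. Each of its points
contains the marker of each level, whence minimality. Since the lengths of blocks are otherwise
free, any sufficiently large gap between two words can be filled, whence mixing.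

The marker fits into a final segment that makes up a fraction `2 ^ (-k - 10)` of a block. Hence a
concatenation of blocks of level `k` becomes a point of the shift space if for every `j ≥ k` the end
of each block of level `j + 1` is overwritten by a fixed word, and the density of the overwritten
positions tends to `0` as `k → ∞`. At level `0` the remaining positions are free, so the entropy is
positive; overwriting independent letters with different laws gives uncountably many ergodic
measures. A sequence of long words of the shift space is changed in few places into a concatenation
of blocks, and then overwritten, whence shadowing.

For entropy density, cut sequences into independent words of length `blen (k + 1)` with the law that
an invariant measure `μ` gives to words of that length, replace each word by a nearby block,
overwrite, and average over shifts. The resulting measure is ergodic because overwriting at finitely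
many levels commutes with the shift by a period and the remaining levels change few positions.
Without replacing and overwriting the same construction gives a measure whose entropy is at least
that of `μ`, and the two measures have a joining that charges `x 0 ≠ y 0` with mass at most
`δ = 2 / 2 ^ (k + 6)`. This bounds the loss of entropy by the binary entropy of `δ` and yields
convergence to `μ`, while upper semicontinuity bounds the entropy from above.
-/

open Computability

/-! ### Finite words -/

section Words

variable {α : Type*}

/-- The word of length `n` read in `x` from position `i`. -/
def wordAt (x : ℕ → α) (i n : ℕ) : List α := List.ofFn fun k : Fin n => x (i + k)

@[simp] lemma length_wordAt (x : ℕ → α) (i n : ℕ) : (wordAt x i n).length = n :=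
  List.length_ofFn

lemma wordAt_add (x : ℕ → α) (i m n : ℕ) :
    wordAt x i (m + n) = wordAt x i m ++ wordAt x (i + m) n := by
  simp [wordAt, List.ofFn_add, add_assoc]

lemma wordAt_eq_wordAt_iff {x y : ℕ → α} {i j n : ℕ} :
    wordAt x i n = wordAt y j n ↔ ∀ k < n, x (i + k) = y (j + k) := by
  simp [wordAt, List.ofFn_inj, funext_iff, Fin.forall_iff]

lemma wordAt_isInfix_wordAt (x : ℕ → α) {i j m n : ℕ} (hji : j ≤ i) (h : i + n ≤ j + m) :
    wordAt x i n <:+: wordAt x j m := by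
  obtain ⟨c, rfl⟩ := Nat.exists_eq_add_of_le hji
  obtain ⟨d, rfl⟩ := Nat.exists_eq_add_of_le (show c + n ≤ m by omega)
  exact ⟨wordAt x j c, wordAt x (j + (c + n)) d, by rw [wordAt_add, wordAt_add]⟩

lemma exists_eq_wordAt_of_isInfix {x : ℕ → α} {i n : ℕ} {w : List α} (h : w <:+: wordAt x i n) :
    ∃ j, w = wordAt x j w.length := by
  obtain ⟨a, b, hab⟩ := h
  obtain rfl : a.length + w.length + b.length = n := by
    simpa [add_assoc] using congrArg List.length hab
  rw [wordAt_add, wordAt_add] at hab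
  have hleft := (List.append_inj hab (by simp)).1
  exact ⟨_, (List.append_inj hleft (by simp)).2⟩

/-- All factors of finite concatenations of words of `B`. -/
def factors (B : Language α) : Language α := {w | ∃ z ∈ B∗, w <:+: z}

variable {B : Language α}

lemma mem_kstar_of_mem {b : List α} (hb : b ∈ B) : b ∈ B∗ := (le_kstar : B ≤ B∗) hb

lemma append_mem_kstar {u v : List α} (hu : u ∈ B∗) (hv : v ∈ B∗) : u ++ v ∈ B∗ :=
  (kstar_mul_kstar B).le (Language.append_mem_mul hu hv)

@[elab_as_elim]
lemma kstar_induction {p : ∀ z, z ∈ B∗ → Prop} (nil : p [] (Language.nil_mem_kstar B))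
    (append : ∀ b (hb : b ∈ B) z (hz : z ∈ B∗), p z hz →
      p (b ++ z) (append_mem_kstar (mem_kstar_of_mem hb) hz))
    {z : List α} (hz : z ∈ B∗) : p z hz := by
  obtain ⟨bs, rfl, hbs⟩ := Language.mem_kstar.1 hz
  induction bs with
  | nil => exact nil
  | cons b bs ih =>
    rw [List.forall_mem_cons] at hbs
    exact append b hbs.1 _ _ (ih hbs.2 (Language.join_mem_kstar hbs.2))

lemma mem_factors_of_isInfix {u w : List α} (hw : w ∈ factors B) (h : u <:+: w) :
    u ∈ factors B := by
  obtain ⟨z, hz, hwz⟩ := hw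
  exact ⟨z, hz, h.trans hwz⟩

lemma mem_factors_of_mem_kstar {w : List α} (hw : w ∈ B∗) : w ∈ factors B :=
  ⟨w, hw, List.infix_rfl⟩

lemma factors_mono {B' : Language α} (h : B∗ ≤ B'∗) : factors B ≤ factors B' := by
  rintro w ⟨z, hz, hwz⟩
  exact ⟨z, h hz, hwz⟩

lemma exists_isInfix_of_mem_kstar {z : List α} (hz : z ∈ B∗) (hne : z ≠ []) :
    ∃ b ∈ B, b <:+: z := by
  obtain ⟨bs, rfl, hbs⟩ := Language.mem_kstar.1 hz
  obtain ⟨b, hb⟩ := List.exists_mem_of_ne_nil bs (by rintro rfl; exact hne rfl)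
  exact ⟨b, hbs b hb, List.infix_of_mem_flatten hb⟩

lemma exists_eq_append_of_isPrefix {C : ℕ} (hC : ∀ b ∈ B, b.length ≤ C) {z : List α}
    (hz : z ∈ B∗) {w : List α} (hw : w <+: z) :
    ∃ c ∈ B∗, ∃ e, w = c ++ e ∧ e.length ≤ C := by
  induction hz using kstar_induction generalizing w with
  | nil => exact ⟨[], Language.nil_mem_kstar B, w, rfl, by simp_all⟩
  | append b hb z _ ih =>
    rcases List.prefix_or_prefix_of_prefix hw (List.prefix_append b z) with h | ⟨v, rfl⟩
    · exact ⟨[], Language.nil_mem_kstar B, w, rfl, h.length_le.trans (hC b hb)⟩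
    · obtain ⟨c, hc, e, rfl, he⟩ := ih ((List.prefix_append_right_inj b).1 hw)
      exact ⟨b ++ c, append_mem_kstar (mem_kstar_of_mem hb) hc, e, by simp, he⟩

lemma exists_eq_append_of_mem_factors {C : ℕ} (hC : ∀ b ∈ B, b.length ≤ C) {w : List α}
    (hw : w ∈ factors B) :
    ∃ a, ∃ c ∈ B∗, ∃ e, w = a ++ (c ++ e) ∧ a.length ≤ C ∧ e.length ≤ C := by
  obtain ⟨z, hz, hwz⟩ := hw
  induction hz using kstar_induction with
  | nil => exact ⟨[], [], Language.nil_mem_kstar B, [], by simpa using hwz, by simp⟩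
  | append b hb z hz ih =>
    rcases List.infix_append_iff.1 hwz with h | h | ⟨u, v, rfl, hu, hv⟩
    · exact ⟨w, [], Language.nil_mem_kstar B, [], by simp, h.length_le.trans (hC b hb), by simp⟩
    · exact ih h
    · obtain ⟨c, hc, e, rfl, he⟩ := exists_eq_append_of_isPrefix hC hz hv
      exact ⟨u, c, hc, e, rfl, hu.length_le.trans (hC b hb), he⟩

lemma exists_mem_kstar_forall_isInfix {S : Set (List α)} (hS : S.Finite)
    (h : ∀ w ∈ S, w ∈ factors B) : ∃ M ∈ B∗, ∀ w ∈ S, w <:+: M := by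
  induction S, hS using Set.Finite.induction_on with
  | empty => exact ⟨[], Language.nil_mem_kstar B, by simp⟩
  | @insert a S _ _ ih =>
    rw [Set.forall_mem_insert] at h
    obtain ⟨M, hM, hSM⟩ := ih h.2
    obtain ⟨z, hz, haz⟩ := h.1
    refine ⟨z ++ M, append_mem_kstar hz hM, Set.forall_mem_insert.2 ⟨?_, fun w hw => ?_⟩⟩
    · exact List.infix_append_of_infix_left haz
    · exact List.infix_append_of_infix_right (hSM w hw)

lemma exists_marker [Finite α] (B : Language α) (n : ℕ) :
    ∃ M ∈ B∗, ∀ w ∈ factors B, w.length ≤ n → w <:+: M := by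
  obtain ⟨M, hM, h⟩ := exists_mem_kstar_forall_isInfix
    ((List.finite_length_le α n).inter_of_left {w | w ∈ factors B}) fun _ hw => hw.2
  exact ⟨M, hM, fun w hw hn => h w ⟨hn, hw⟩⟩

/-- A concatenation of words of `B` in which every factor of length at most `n` of such
concatenations occurs. -/
noncomputable def marker [Finite α] (B : Language α) (n : ℕ) : List α :=
  (exists_marker B n).choose

lemma marker_mem_kstar [Finite α] (B : Language α) (n : ℕ) : marker B n ∈ B∗ :=
  (exists_marker B n).choose_spec.1

lemma isInfix_marker [Finite α] {n : ℕ} {w : List α} (hw : w ∈ factors B) (hn : w.length ≤ n) :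
    w <:+: marker B n :=
  (exists_marker B n).choose_spec.2 w hw hn

lemma hammingDist_le_of_ofFn_eq_append [DecidableEq α] {n : ℕ} {v w : Fin n → α}
    {a a' c e e' : List α} (hv : List.ofFn v = a ++ (c ++ e)) (hw : List.ofFn w = a' ++ (c ++ e'))
    (ha : a.length = a'.length) : hammingDist v w ≤ a.length + e.length := by
  have hn : a.length + (c.length + e.length) = n := by
    simpa using (congrArg List.length hv).symm
  have hagree (i : Fin n) (hai : a.length ≤ i) (hie : i < a.length + c.length) : v i = w i := by
    have hgetv : (List.ofFn v)[(i : ℕ)]? = some (v i) := by simp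
    have hgetw : (List.ofFn w)[(i : ℕ)]? = some (w i) := by simp
    rw [hv, List.getElem?_append_right hai, List.getElem?_append_left (by omega)] at hgetv
    rw [hw, List.getElem?_append_right (ha ▸ hai), List.getElem?_append_left (by omega),
      ← ha, hgetv] at hgetw
    exact Option.some.inj hgetw
  have hsub : (Finset.univ.filter fun i => v i ≠ w i).map Fin.valEmbedding ⊆
      Finset.range a.length ∪ Finset.Ico (a.length + c.length) n := by
    intro j hj
    obtain ⟨i, hi, rfl⟩ := Finset.mem_map.1 hj
    have hne : v i ≠ w i := (Finset.mem_filter.1 hi).2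
    by_contra hj
    simp only [Fin.valEmbedding_apply, Finset.mem_union, Finset.mem_range, Finset.mem_Ico,
      i.isLt, and_true, not_or, not_lt, not_le] at hj
    exact hne (hagree i hj.1 hj.2)
  calc hammingDist v w = _ := (Finset.card_map Fin.valEmbedding).symm
    _ ≤ _ := Finset.card_le_card hsub
    _ ≤ a.length + (n - (a.length + c.length)) := by
        simpa using Finset.card_union_le (Finset.range a.length)
          (Finset.Ico (a.length + c.length) n)
    _ = a.length + e.length := by omega

end Words

/-! ### The hierarchy of blocks -/

/-- The set of blocks of level `k` together with its length parameter. A block of level `k + 1`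
is a concatenation of blocks of level `k` ending with a marker that contains every word of length
at most `4 * blen k + k` occurring at level `k`. -/
noncomputable def stage : ℕ → Language Bool × ℕ
  | 0 => ({b | 1 ≤ b.length ∧ b.length ≤ 4}, 1)
  | k + 1 =>
    let B := (stage k).1
    let L := (stage k).2
    let M := marker B (4 * L + k)
    let L' := 2 ^ (k + 10) * ((M.length + 1) * L)
    ({w | ∃ z ∈ B∗, w = z ++ M ∧ L' ≤ w.length ∧ w.length ≤ 4 * L'}, L')

/-- The blocks of level `k`. -/
noncomputable def blocks (k : ℕ) : Language Bool := (stage k).1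

/-- The standard length of a block of level `k`; block lengths lie in `[blen k, 4 * blen k]`. -/
noncomputable def blen (k : ℕ) : ℕ := (stage k).2

/-- The marker terminating each block of level `k + 1`. -/
noncomputable def mark (k : ℕ) : List Bool := marker (blocks k) (4 * blen k + k)

/-- The length of the final segment of a block of level `k + 1` that will be overwritten. It is
a multiple of `blen k` and leaves room for the marker. -/
noncomputable def tailLen (k : ℕ) : ℕ := ((mark k).length + 1) * blen k

/-- The length of the part of a block of level `k + 1` that is not overwritten. -/
noncomputable def headLen (k : ℕ) : ℕ := (2 ^ (k + 10) - 1) * tailLen k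

lemma blen_zero : blen 0 = 1 := rfl

lemma blen_succ (k : ℕ) : blen (k + 1) = 2 ^ (k + 10) * tailLen k := rfl

lemma mem_blocks_zero {w : List Bool} : w ∈ blocks 0 ↔ 1 ≤ w.length ∧ w.length ≤ 4 := Iff.rfl

lemma mem_blocks_succ {k : ℕ} {w : List Bool} : w ∈ blocks (k + 1) ↔
    ∃ z ∈ (blocks k)∗, w = z ++ mark k ∧ blen (k + 1) ≤ w.length ∧
      w.length ≤ 4 * blen (k + 1) := Iff.rfl

lemma mark_mem_kstar (k : ℕ) : mark k ∈ (blocks k)∗ := marker_mem_kstar _ _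

lemma isInfix_mark {k : ℕ} {w : List Bool} (hw : w ∈ factors (blocks k))
    (h : w.length ≤ 4 * blen k + k) : w <:+: mark k :=
  isInfix_marker hw h

lemma length_of_mem_blocks {k : ℕ} {b : List Bool} (h : b ∈ blocks k) :
    blen k ≤ b.length ∧ b.length ≤ 4 * blen k := by
  cases k with
  | zero => exact h
  | succ k => exact (mem_blocks_succ.1 h).choose_spec.2.2

lemma blen_pos (k : ℕ) : 0 < blen k := by
  induction k with
  | zero => exact one_pos
  | succ k ih => rw [blen_succ, tailLen]; positivity

lemma tailLen_pos (k : ℕ) : 0 < tailLen k := Nat.mul_pos (Nat.succ_pos _) (blen_pos k)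

lemma length_mark_add_blen_le (k : ℕ) : (mark k).length + blen k ≤ tailLen k := by
  have := blen_pos k
  unfold tailLen
  nlinarith

lemma blen_le_tailLen (k : ℕ) : blen k ≤ tailLen k :=
  (Nat.le_add_left _ _).trans (length_mark_add_blen_le k)

lemma headLen_add_tailLen (k : ℕ) : headLen k + tailLen k = blen (k + 1) := by
  rw [headLen, blen_succ, Nat.sub_mul, one_mul]
  exact Nat.sub_add_cancel (Nat.le_mul_of_pos_left _ (by positivity))

lemma tailLen_mul_le (k : ℕ) : 1024 * tailLen k ≤ blen (k + 1) := by
  rw [blen_succ, show 1024 = 2 ^ 10 by rfl]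
  gcongr
  · norm_num
  · omega

lemma lt_headLen (k : ℕ) : k + 1 < headLen k := by
  have hpow : k + 10 < 2 ^ (k + 10) := Nat.lt_two_pow_self
  have hle : (2 ^ (k + 10) - 1) * 1 ≤ headLen k := Nat.mul_le_mul_left _ (tailLen_pos k)
  omega

lemma blen_strictMono : StrictMono blen := by
  refine strictMono_nat_of_lt_succ fun k => ?_
  have := tailLen_mul_le k
  have := blen_le_tailLen k
  have := blen_pos k
  omega

lemma blen_dvd_tailLen (k : ℕ) : blen k ∣ tailLen k := dvd_mul_left _ _

lemma blen_dvd_headLen (k : ℕ) : blen k ∣ headLen k := (blen_dvd_tailLen k).mul_left _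

lemma blen_dvd_blen {j k : ℕ} (h : j ≤ k) : blen j ∣ blen k := by
  induction k, h using Nat.le_induction with
  | base => exact dvd_rfl
  | succ k _ ih => exact ih.trans ((blen_dvd_tailLen k).mul_left _)

lemma kstar_blocks_antitone : Antitone fun k => (blocks k)∗ := by
  refine antitone_nat_of_succ_le fun k z hz => ?_
  induction hz using kstar_induction with
  | nil => exact Language.nil_mem_kstar _
  | append b hb _ _ ih =>
    obtain ⟨z, hz, rfl, -⟩ := mem_blocks_succ.1 hb
    exact append_mem_kstar (append_mem_kstar hz (mark_mem_kstar k)) ih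

lemma factors_blocks_antitone : Antitone fun k => factors (blocks k) :=
  fun _ _ h => factors_mono (kstar_blocks_antitone h)

lemma exists_mem_kstar_length_eq {B : Language Bool} {L : ℕ} (hL : 0 < L)
    (hB : ∀ n, L ≤ n → n ≤ 4 * L → ∃ b ∈ B, b.length = n) (n : ℕ) (hn : L ≤ n) :
    ∃ z ∈ B∗, z.length = n := by
  induction n using Nat.strong_induction_on with
  | _ n ih =>
    by_cases h4 : n ≤ 4 * L
    · obtain ⟨b, hb, hbn⟩ := hB n hn h4
      exact ⟨b, mem_kstar_of_mem hb, hbn⟩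
    · obtain ⟨z, hz, hzn⟩ := ih (n - L) (by omega) (by omega)
      obtain ⟨b, hb, hbn⟩ := hB L le_rfl (by omega)
      exact ⟨b ++ z, append_mem_kstar (mem_kstar_of_mem hb) hz, by simp; omega⟩

lemma exists_mem_blocks_length_eq (k : ℕ) :
    ∀ n, blen k ≤ n → n ≤ 4 * blen k → ∃ b ∈ blocks k, b.length = n := by
  induction k with
  | zero =>
    intro n h1 h4
    exact ⟨List.replicate n false, by simpa [mem_blocks_zero] using ⟨h1, h4⟩, by simp⟩
  | succ k ih =>
    intro n h1 h4
    have hmark := length_mark_add_blen_le k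
    have htail := tailLen_mul_le k
    obtain ⟨z, hz, hzn⟩ :=
      exists_mem_kstar_length_eq (blen_pos k) ih (n - (mark k).length) (by omega)
    have hlen : (z ++ mark k).length = n := by rw [List.length_append]; omega
    exact ⟨z ++ mark k, mem_blocks_succ.2 ⟨z, hz, rfl, by omega, by omega⟩, hlen⟩

lemma exists_mem_kstar_blocks_length_eq {k n : ℕ} (hn : blen k ≤ n) :
    ∃ z ∈ (blocks k)∗, z.length = n :=
  exists_mem_kstar_length_eq (blen_pos k) (exists_mem_blocks_length_eq k) n hn

lemma exists_block_isInfix {k : ℕ} {w : List Bool} (hw : w ∈ factors (blocks k))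
    (h : 8 * blen k < w.length) : ∃ b ∈ blocks k, b <:+: w := by
  obtain ⟨a, c, hc, e, rfl, ha, he⟩ :=
    exists_eq_append_of_mem_factors (fun b hb => (length_of_mem_blocks hb).2) hw
  obtain ⟨b, hb, hbc⟩ := exists_isInfix_of_mem_kstar hc (by rintro rfl; simp at h; omega)
  exact ⟨b, hb, hbc.trans ⟨a, e, by simp⟩⟩

lemma mark_isInfix {k : ℕ} {w : List Bool} (hw : w ∈ factors (blocks (k + 1)))
    (h : 8 * blen (k + 1) < w.length) : mark k <:+: w := by
  obtain ⟨b, hb, hbw⟩ := exists_block_isInfix hw h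
  obtain ⟨z, _, rfl, -⟩ := mem_blocks_succ.1 hb
  exact (List.infix_append_of_infix_right List.infix_rfl).trans hbw

lemma exists_tail (k : ℕ) :
    ∃ t : List Bool, t.length = tailLen k ∧ ∃ z ∈ (blocks k)∗, t = z ++ mark k := by
  have h := length_mark_add_blen_le k
  obtain ⟨z, hz, hzn⟩ := exists_mem_kstar_blocks_length_eq
    (show blen k ≤ tailLen k - (mark k).length by omega)
  exact ⟨z ++ mark k, by rw [List.length_append]; omega, z, hz, rfl⟩

lemma exists_block_eq_append {k m n : ℕ} {c : List Bool} (hc : c ∈ (blocks k)∗) (hm : blen k ≤ m)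
    (hn : blen k + (mark k).length ≤ n) (h : m + (c.length + n) = blen (k + 1)) :
    ∃ v : Fin (blen (k + 1)) → Bool, List.ofFn v ∈ blocks (k + 1) ∧
      ∃ a e, List.ofFn v = a ++ (c ++ e) ∧ a.length = m ∧ e.length = n := by
  obtain ⟨a, ha, hal⟩ := exists_mem_kstar_blocks_length_eq hm
  obtain ⟨e, he, hel⟩ := exists_mem_kstar_blocks_length_eq
    (show blen k ≤ n - (mark k).length by omega)
  have hlen : (a ++ (c ++ (e ++ mark k))).length = blen (k + 1) := by
    simp only [List.length_append]
    omega
  obtain ⟨v, hv⟩ : ∃ v : Fin (blen (k + 1)) → Bool,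
      List.ofFn v = a ++ (c ++ (e ++ mark k)) := by
    rw [← hlen]
    exact ⟨_, List.ofFn_get _⟩
  have hmem : a ++ (c ++ e) ∈ (blocks k)∗ := append_mem_kstar ha (append_mem_kstar hc he)
  refine ⟨v, hv ▸ mem_blocks_succ.2 ⟨_, hmem, by simp, hlen.ge, by omega⟩, a, _, hv, hal, ?_⟩
  rw [List.length_append]
  omega

lemma exists_block_hammingDist_le {k : ℕ} (w : Fin (blen (k + 1)) → Bool)
    (hw : List.ofFn w ∈ factors (blocks k)) :
    ∃ v, List.ofFn v ∈ blocks (k + 1) ∧ hammingDist v w ≤ 10 * tailLen k := by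
  have hmark := length_mark_add_blen_le k
  have htail := tailLen_mul_le k
  have hL := blen_le_tailLen k
  have hlen : (List.ofFn w).length = blen (k + 1) := List.length_ofFn
  -- The letters cut off at both ends make the replacements long enough to exist.
  obtain ⟨w₁, w₂, w₃, hsplit, hw₁, hw₃⟩ : ∃ w₁ w₂ w₃ : List Bool,
      List.ofFn w = w₁ ++ (w₂ ++ w₃) ∧ w₁.length = blen k ∧ w₃.length = tailLen k := by
    refine ⟨(List.ofFn w).take (blen k),
      ((List.ofFn w).drop (blen k)).take (blen (k + 1) - blen k - tailLen k),
      ((List.ofFn w).drop (blen k)).drop (blen (k + 1) - blen k - tailLen k), by simp, ?_, ?_⟩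
    all_goals simp only [List.length_take, List.length_drop, hlen]; omega
  obtain ⟨a, c, hc, e, rfl, ha, he⟩ := exists_eq_append_of_mem_factors
    (fun b hb => (length_of_mem_blocks hb).2)
    (mem_factors_of_isInfix hw ⟨w₁, w₃, by rw [hsplit, List.append_assoc]⟩ :
      w₂ ∈ factors (blocks k))
  rw [hsplit] at hlen
  simp only [List.length_append] at hlen
  obtain ⟨v, hvmem, a', e', hv, ha', he'⟩ := exists_block_eq_append hc
    (Nat.le_add_right (blen k) a.length)
    (show blen k + (mark k).length ≤ e.length + tailLen k by omega) (by omega)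
  refine ⟨v, hvmem, (hammingDist_le_of_ofFn_eq_append (a' := w₁ ++ a) (e' := e ++ w₃) hv
    (by rw [hsplit]; simp only [List.append_assoc]) (by simp [ha', hw₁])).trans ?_⟩
  omega

/-! ### Overwriting the ends of blocks -/

/-- The word of length `tailLen k` that `overwrite` writes at the end of each block of level
`k + 1`. It is a concatenation of blocks of level `k` followed by the marker. -/
noncomputable def tailWord (k : ℕ) : List Bool := (exists_tail k).choose

/-- The positions that lie in the final segment of a block of level `k + 1`, when the sequence is
cut into blocks of length `blen (k + 1)`. -/
def tailPositions (k : ℕ) : Set ℕ := {i | headLen k ≤ i % blen (k + 1)}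

/-- The positions lying in a final segment at some level from `k` on. -/
def overwritten (k : ℕ) : Set ℕ := {i | ∃ j, k ≤ j ∧ i ∈ tailPositions j}

/-- The sequences that are concatenations of blocks of level `k` of standard length. -/
def aligned (k : ℕ) : Set (ℕ → Bool) :=
  {y | ∀ g, wordAt y (g * blen k) (blen k) ∈ blocks k}

open scoped Classical in
/-- Overwrite the end of each block of level `k + 1` with `tailWord k`. This turns a
concatenation of blocks of level `k` into a concatenation of blocks of level `k + 1`. -/
noncomputable def overwrite (k : ℕ) (y : ℕ → Bool) : ℕ → Bool := fun i =>
  if i ∈ tailPositions k then (tailWord k).getD (i % blen (k + 1) - headLen k) false else y i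

/-- Apply `overwrite` at the levels `k, …, k + t - 1`. -/
noncomputable def overwrites (k : ℕ) : ℕ → (ℕ → Bool) → ℕ → Bool
  | 0, y => y
  | t + 1, y => overwrite (k + t) (overwrites k t y)

/-- Apply `overwrite` at all levels from `k` on. Since position `i` can only lie in a final
segment at a level below `i`, the first `i` steps determine the letter at `i`. -/
noncomputable def shadow (k : ℕ) (y : ℕ → Bool) : ℕ → Bool := fun i => overwrites k i y i

/-- The shift space of all sequences whose words are, for each `k`, factors of concatenations of
blocks of level `k`. -/
def hierShift : Set (ℕ → Bool) := {x | ∀ k i n, wordAt x i n ∈ factors (blocks k)}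

lemma length_tailWord (k : ℕ) : (tailWord k).length = tailLen k :=
  (exists_tail k).choose_spec.1

lemma exists_tailWord_eq_append_mark (k : ℕ) : ∃ z ∈ (blocks k)∗, tailWord k = z ++ mark k :=
  (exists_tail k).choose_spec.2

lemma mem_tailPositions {k i : ℕ} : i ∈ tailPositions k ↔ headLen k ≤ i % blen (k + 1) := Iff.rfl

lemma overwrite_of_mem {k i : ℕ} (y : ℕ → Bool) (h : i ∈ tailPositions k) :
    overwrite k y i = (tailWord k).getD (i % blen (k + 1) - headLen k) false := if_pos h

lemma overwrite_of_notMem {k i : ℕ} (y : ℕ → Bool) (h : i ∉ tailPositions k) :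
    overwrite k y i = y i := if_neg h

lemma lt_of_mem_tailPositions {k i : ℕ} (h : i ∈ tailPositions k) : k + 1 < i :=
  (lt_headLen k).trans_le (h.trans (Nat.mod_le _ _))

lemma lt_of_mem_overwritten {k i : ℕ} (h : i ∈ overwritten k) : k + 1 < i := by
  obtain ⟨j, hj, hi⟩ := h
  have := lt_of_mem_tailPositions hi
  omega

lemma add_mem_tailPositions_iff {k i d : ℕ} (hd : blen (k + 1) ∣ d) :
    d + i ∈ tailPositions k ↔ i ∈ tailPositions k := by
  obtain ⟨c, rfl⟩ := hd
  rw [mem_tailPositions, mem_tailPositions, Nat.mul_add_mod]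

lemma wordAt_mul_mem_kstar {k : ℕ} {y : ℕ → Bool} (hy : y ∈ aligned k) {i n : ℕ}
    (hi : blen k ∣ i) (hn : blen k ∣ n) : wordAt y i n ∈ (blocks k)∗ := by
  obtain ⟨g, rfl⟩ := hi
  obtain ⟨q, rfl⟩ := hn
  induction q with
  | zero => exact Language.nil_mem_kstar _
  | succ q ih =>
    rw [Nat.mul_succ, wordAt_add, ← Nat.mul_add, Nat.mul_comm _ (g + q)]
    exact append_mem_kstar ih (mem_kstar_of_mem (hy _))

lemma wordAt_mem_factors {k : ℕ} {y : ℕ → Bool} (hy : y ∈ aligned k) (i n : ℕ) :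
    wordAt y i n ∈ factors (blocks k) := by
  refine ⟨_, wordAt_mul_mem_kstar hy (dvd_zero _) (dvd_mul_left (blen k) (i + n)), ?_⟩
  refine wordAt_isInfix_wordAt y i.zero_le ?_
  rw [zero_add]
  exact Nat.le_mul_of_pos_right _ (blen_pos k)

lemma aligned_zero : aligned 0 = Set.univ :=
  Set.eq_univ_of_forall fun y g => by simp [mem_blocks_zero, blen_zero]

lemma wordAt_overwrite_head (k g : ℕ) (y : ℕ → Bool) :
    wordAt (overwrite k y) (g * blen (k + 1)) (headLen k) =
      wordAt y (g * blen (k + 1)) (headLen k) := by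
  refine wordAt_eq_wordAt_iff.2 fun i hi => overwrite_of_notMem y ?_
  have := headLen_add_tailLen k
  rw [add_mem_tailPositions_iff (dvd_mul_left _ g), mem_tailPositions,
    Nat.mod_eq_of_lt (by omega)]
  omega

lemma wordAt_overwrite_tail (k g : ℕ) (y : ℕ → Bool) :
    wordAt (overwrite k y) (g * blen (k + 1) + headLen k) (tailLen k) = tailWord k := by
  have hlen := headLen_add_tailLen k
  refine List.ext_getElem (by rw [length_wordAt, length_tailWord]) fun i hi hi' => ?_
  rw [length_wordAt] at hi
  have hmod : (g * blen (k + 1) + (headLen k + i)) % blen (k + 1) = headLen k + i := by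
    rw [Nat.mul_add_mod_self_right, Nat.mod_eq_of_lt (by omega)]
  simp only [wordAt, List.getElem_ofFn]
  rw [add_assoc, overwrite_of_mem y (by rw [mem_tailPositions, hmod]; omega), hmod,
    Nat.add_sub_cancel_left, List.getD_eq_getElem _ _ hi']

lemma overwrite_mem_aligned {k : ℕ} {y : ℕ → Bool} (hy : y ∈ aligned k) :
    overwrite k y ∈ aligned (k + 1) := by
  intro g
  obtain ⟨z, hz, hzt⟩ := exists_tailWord_eq_append_mark k
  have hword : wordAt (overwrite k y) (g * blen (k + 1)) (blen (k + 1)) =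
      wordAt y (g * blen (k + 1)) (headLen k) ++ z ++ mark k := by
    rw [← headLen_add_tailLen, wordAt_add, headLen_add_tailLen, wordAt_overwrite_head,
      wordAt_overwrite_tail, hzt, List.append_assoc]
  refine mem_blocks_succ.2 ⟨_, append_mem_kstar (wordAt_mul_mem_kstar hy ?_ ?_) hz, hword, ?_, ?_⟩
  · exact (blen_dvd_blen k.le_succ).mul_left g
  · exact blen_dvd_headLen k
  · rw [length_wordAt]
  · rw [length_wordAt]
    omega

lemma overwrites_mem_aligned {k : ℕ} {y : ℕ → Bool} (hy : y ∈ aligned k) (t : ℕ) :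
    overwrites k t y ∈ aligned (k + t) := by
  induction t with
  | zero => exact hy
  | succ t ih => exact overwrite_mem_aligned ih

lemma overwrites_eq_of_notMem {k t u i : ℕ} (y : ℕ → Bool) (htu : t ≤ u)
    (hi : i ∉ overwritten (k + t)) : overwrites k u y i = overwrites k t y i := by
  induction u, htu using Nat.le_induction with
  | base => rfl
  | succ u hu ih =>
    rw [← ih]
    exact overwrite_of_notMem _ fun h => hi ⟨k + u, by omega, h⟩

lemma shadow_eq_of_le {k t i : ℕ} (y : ℕ → Bool) (h : i ≤ t) :
    shadow k y i = overwrites k t y i := by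
  refine (overwrites_eq_of_notMem y h fun hi => ?_).symm
  have := lt_of_mem_overwritten hi
  omega

lemma shadow_eq_of_notMem {k t i : ℕ} (y : ℕ → Bool) (h : i ∉ overwritten (k + t)) :
    shadow k y i = overwrites k t y i := by
  rw [shadow_eq_of_le y (Nat.le_add_right i t)]
  exact overwrites_eq_of_notMem y (Nat.le_add_left t i) h

lemma shadow_mem_hierShift {k : ℕ} {y : ℕ → Bool} (hy : y ∈ aligned k) :
    shadow k y ∈ hierShift := by
  intro l i n
  have hword : wordAt (shadow k y) i n = wordAt (overwrites k (i + n + l) y) i n :=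
    wordAt_eq_wordAt_iff.2 fun m hm => shadow_eq_of_le y (by omega)
  rw [hword]
  exact factors_blocks_antitone (by omega)
    (wordAt_mem_factors (overwrites_mem_aligned hy (i + n + l)) i n)

lemma overwrite_congr {k i : ℕ} {y y' : ℕ → Bool} (h : y i = y' i) :
    overwrite k y i = overwrite k y' i := by
  simp only [overwrite, h]

lemma overwrites_congr {k t i : ℕ} {y y' : ℕ → Bool} (h : y i = y' i) :
    overwrites k t y i = overwrites k t y' i := by
  induction t with
  | zero => exact h
  | succ t ih => exact overwrite_congr ih

lemma shadow_congr {k i : ℕ} {y y' : ℕ → Bool} (h : y i = y' i) :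
    shadow k y i = shadow k y' i := overwrites_congr h

lemma overwrites_eq_of_mem_tailPositions {k t j i : ℕ} (hj : j < t)
    (h : i ∈ tailPositions (k + j)) (y y' : ℕ → Bool) :
    overwrites k t y i = overwrites k t y' i := by
  induction t, hj using Nat.le_induction with
  | base => simp only [overwrites, overwrite_of_mem _ h]
  | succ t _ ih => exact overwrite_congr ih

lemma shadow_eq_of_mem_overwritten {k i : ℕ} (h : i ∈ overwritten k) (y y' : ℕ → Bool) :
    shadow k y i = shadow k y' i := by
  obtain ⟨j, hj, hi⟩ := h
  obtain ⟨d, rfl⟩ := Nat.exists_eq_add_of_le hj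
  have := lt_of_mem_tailPositions hi
  exact overwrites_eq_of_mem_tailPositions (by omega) hi y y'

lemma overwrites_add_left {k t d : ℕ} (hd : blen (k + t) ∣ d) (y : ℕ → Bool) (i : ℕ) :
    overwrites k t (fun j => y (d + j)) i = overwrites k t y (d + i) := by
  induction t with
  | zero => rfl
  | succ t ih =>
    rw [← add_assoc] at hd
    have hmod : (d + i) % blen (k + t + 1) = i % blen (k + t + 1) := by
      rw [Nat.add_mod, Nat.mod_eq_zero_of_dvd hd, zero_add, Nat.mod_mod]
    have ih := ih ((blen_dvd_blen (Nat.le_succ _)).trans hd)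
    by_cases hi : i ∈ tailPositions (k + t)
    · have hdi := (add_mem_tailPositions_iff hd).2 hi
      simp only [overwrites, overwrite_of_mem _ hi, overwrite_of_mem _ hdi, hmod]
    · have hdi := mt (add_mem_tailPositions_iff hd).1 hi
      simp only [overwrites, overwrite_of_notMem _ hi, overwrite_of_notMem _ hdi, ih]

/-- The residues counted come last in each period, so an incomplete period has too few of them. -/
lemma count_le_mod_mul_le (h s n : ℕ) :
    Nat.count (fun i => h ≤ i % (h + s)) n * (h + s) ≤ n * s := by
  rcases Nat.eq_zero_or_pos (h + s) with hzero | hpos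
  · simp [hzero]
  have base (n : ℕ) (hn : n ≤ h + s) :
      Nat.count (fun i => h ≤ i % (h + s)) n * (h + s) ≤ n * s := by
    have hcount : Nat.count (fun i => h ≤ i % (h + s)) n ≤ n - h := by
      rw [Nat.count_eq_card_filter_range, ← Nat.card_Ico]
      refine Finset.card_le_card fun i hi => ?_
      rw [Finset.mem_filter, Finset.mem_range] at hi
      rw [Nat.mod_eq_of_lt (by omega)] at hi
      exact Finset.mem_Ico.2 ⟨hi.2, hi.1⟩
    refine (Nat.mul_le_mul_right _ hcount).trans ?_
    rcases Nat.le_total n h with hle | hle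
    · simp [Nat.sub_eq_zero_of_le hle]
    · obtain ⟨r, rfl⟩ := Nat.exists_eq_add_of_le hle
      rw [Nat.add_sub_cancel_left]
      nlinarith [Nat.le_of_add_le_add_left hn]
  induction n using Nat.strong_induction_on with
  | _ n ih =>
    rcases Nat.le_or_ge n (h + s) with hn | hn
    · exact base n hn
    · obtain ⟨m, rfl⟩ := Nat.exists_eq_add_of_le hn
      have hperiod := base (h + s) le_rfl
      have hrest := ih m (by omega)
      rw [Nat.count_add, add_mul, add_mul (h + s) m s]
      simpa only [Nat.add_mod_left] using add_le_add hperiod hrest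

open scoped Classical in
lemma card_tailPositions_mul_le (k n : ℕ) :
    ((Finset.range n).filter (· ∈ tailPositions k)).card * 2 ^ (k + 10) ≤ n := by
  have hcount := count_le_mod_mul_le (headLen k) (tailLen k) n
  rw [headLen_add_tailLen] at hcount
  refine Nat.le_of_mul_le_mul_right ?_ (tailLen_pos k)
  rw [mul_assoc, ← blen_succ, ← Nat.count_eq_card_filter_range]
  convert hcount
  exact Iff.rfl

open scoped Classical in
lemma card_overwritten_le (k n : ℕ) :
    (((Finset.range n).filter (· ∈ overwritten k)).card : ℝ) ≤ n / 2 ^ (k + 9) := by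
  have hsub : (Finset.range n).filter (· ∈ overwritten k) ⊆
      (Finset.range n).biUnion fun j => (Finset.range n).filter (· ∈ tailPositions (k + j)) := by
    intro i hi
    simp only [Finset.mem_filter, Finset.mem_range, Finset.mem_biUnion] at hi ⊢
    obtain ⟨hin, j, hj, hji⟩ := hi
    have := lt_of_mem_tailPositions hji
    exact ⟨j - k, by omega, hin, by rwa [Nat.add_sub_cancel' hj]⟩
  have hlevel (j : ℕ) : (((Finset.range n).filter (· ∈ tailPositions (k + j))).card : ℝ) ≤
      n / 2 ^ (k + 10) * (1 / 2) ^ j := by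
    rw [one_div, inv_pow, ← div_eq_mul_inv, div_div, ← pow_add, le_div_iff₀ (by positivity),
      show k + 10 + j = k + j + 10 by omega]
    exact_mod_cast card_tailPositions_mul_le (k + j) n
  calc (((Finset.range n).filter (· ∈ overwritten k)).card : ℝ)
      ≤ ∑ j ∈ Finset.range n, (((Finset.range n).filter (· ∈ tailPositions (k + j))).card : ℝ) :=
        by exact_mod_cast (Finset.card_le_card hsub).trans Finset.card_biUnion_le
    _ ≤ ∑ j ∈ Finset.range n, n / 2 ^ (k + 10) * (1 / 2 : ℝ) ^ j :=
        Finset.sum_le_sum fun j _ => hlevel j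
    _ ≤ n / 2 ^ (k + 10) * 2 := by
        rw [← Finset.mul_sum]
        gcongr
        exact sum_geometric_two_le n
    _ = n / 2 ^ (k + 9) := by rw [pow_succ 2 (k + 9)]; field_simp

/-! ### Topological dynamics of the shift space -/

section FullShift

variable {α : Type}

lemma shift_iterate_apply (x : ℕ → α) (i j : ℕ) : shift^[i] x j = x (i + j) := by
  induction i generalizing x with
  | zero => rw [Function.iterate_zero_apply, zero_add]
  | succ i ih =>
    rw [Function.iterate_succ_apply, ih, shift, add_right_comm]

lemma occursIn_iff_exists_eq_wordAt {w : List α} {x : ℕ → α} :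
    occursIn w x ↔ ∃ i, w = wordAt x i w.length := Iff.rfl

lemma wordAt_mem_langN {X : Set (ℕ → α)} {x : ℕ → α} (hx : x ∈ X) (i n : ℕ) :
    wordAt x i n ∈ langN n X :=
  ⟨⟨x, hx, occursIn_iff_exists_eq_wordAt.2 ⟨i, by rw [length_wordAt]⟩⟩, length_wordAt x i n⟩

lemma wordAt_mem_lang {X : Set (ℕ → α)} {x : ℕ → α} (hx : x ∈ X) (i n : ℕ) :
    wordAt x i n ∈ lang X :=
  (wordAt_mem_langN hx i n).1

lemma occursIn_of_isInfix {u w : List α} {x : ℕ → α} (hw : occursIn w x) (h : u <:+: w) :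
    occursIn u x := by
  obtain ⟨i, hi⟩ := occursIn_iff_exists_eq_wordAt.1 hw
  rw [hi] at h
  exact exists_eq_wordAt_of_isInfix h

lemma mem_lang_of_isInfix {X : Set (ℕ → α)} {u w : List α} (hw : w ∈ lang X) (h : u <:+: w) :
    u ∈ lang X := by
  obtain ⟨x, hx, hwx⟩ := hw
  exact ⟨x, hx, occursIn_of_isInfix hwx h⟩

lemma finite_langN [Finite α] (n : ℕ) (X : Set (ℕ → α)) : (langN n X).Finite :=
  (List.finite_length_eq α n).subset fun _ hw => hw.2

lemma card_langN_le [Fintype α] (n : ℕ) (X : Set (ℕ → α)) :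
    Nat.card (langN n X) ≤ Fintype.card α ^ n := by
  let toVector : langN n X → List.Vector α n := fun w => ⟨w.1, w.2.2⟩
  have hinj : Function.Injective toVector := fun u v huv =>
    Subtype.ext (congrArg List.Vector.toList huv)
  simpa using Nat.card_le_card_of_injective toVector hinj

lemma log_card_langN_div_le [Fintype α] {X : Set (ℕ → α)} (hX : X.Nonempty) (n : ℕ) :
    Real.log (Nat.card (langN n X)) / n ≤ Real.log (Fintype.card α) := by
  obtain ⟨x, hx⟩ := hX
  have : Finite (langN n X) := finite_langN n X
  have : Nonempty (langN n X) := ⟨⟨_, wordAt_mem_langN hx 0 n⟩⟩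
  refine div_le_of_le_mul₀ n.cast_nonneg (Real.log_natCast_nonneg _) ?_
  rw [mul_comm, ← Real.log_pow]
  refine Real.log_le_log (by exact_mod_cast Nat.card_pos) ?_
  exact_mod_cast card_langN_le n X

/-- Each point of `X` lies in the orbit closure of each other point. -/
lemma minimalShift_of_forall_occursIn {X : Set (ℕ → α)} [TopologicalSpace α]
    (hX : ShiftSpace X) (hocc : ∀ w ∈ lang X, ∀ x ∈ X, occursIn w x) : MinimalShift X := by
  refine ⟨hX, fun Y ⟨⟨y, hy⟩, hclosed, hshift⟩ hYX => hYX.antisymm fun x hx => ?_⟩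
  have horbit (i : ℕ) : shift^[i] y ∈ Y := by
    induction i with
    | zero => exact hy
    | succ i ih => rw [Function.iterate_succ_apply']; exact hshift _ ih
  have hagree (n : ℕ) : ∃ i, ∀ k < n, x k = y (i + k) := by
    obtain ⟨i, hi⟩ := occursIn_iff_exists_eq_wordAt.1
      (hocc _ (wordAt_mem_lang hx 0 n) y (hYX hy))
    rw [length_wordAt, wordAt_eq_wordAt_iff] at hi
    exact ⟨i, by simpa only [zero_add] using hi⟩
  choose i hi using hagree
  refine hclosed.mem_of_tendsto (b := atTop) (tendsto_pi_nhds.2 fun k => ?_)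
    (Eventually.of_forall fun n => horbit (i n))
  refine tendsto_const_nhds.congr' ?_
  filter_upwards [eventually_gt_atTop k] with n hn
  rw [shift_iterate_apply]
  exact hi n k hn

end FullShift

lemma mem_factors_of_mem_lang {w : List Bool} (hw : w ∈ lang hierShift) (k : ℕ) :
    w ∈ factors (blocks k) := by
  obtain ⟨x, hx, hwx⟩ := hw
  obtain ⟨i, hi⟩ := occursIn_iff_exists_eq_wordAt.1 hwx
  rw [hi]
  exact hx k i _

lemma isClosed_hierShift : IsClosed hierShift := by
  simp only [hierShift, Set.ofPred_forall]
  refine isClosed_iInter fun k => isClosed_iInter fun i => isClosed_iInter fun n => ?_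
  have hcont : Continuous fun (x : ℕ → Bool) (j : Fin n) => x (i + j) :=
    continuous_pi fun _ => continuous_apply _
  exact (isClosed_discrete {v : Fin n → Bool | List.ofFn v ∈ factors (blocks k)}).preimage hcont

lemma shift_mem_hierShift {x : ℕ → Bool} (hx : x ∈ hierShift) : shift x ∈ hierShift := by
  intro k i n
  have hword : wordAt (shift x) i n = wordAt x (i + 1) n :=
    wordAt_eq_wordAt_iff.2 fun m _ => by rw [shift, add_right_comm]
  rw [hword]
  exact hx k (i + 1) n

lemma shiftSpace_hierShift : ShiftSpace hierShift :=
  ⟨⟨_, shadow_mem_hierShift (aligned_zero ▸ Set.mem_univ fun _ => false)⟩, isClosed_hierShift,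
    fun _ hx => shift_mem_hierShift hx⟩

lemma occursIn_mark {x : ℕ → Bool} (hx : x ∈ hierShift) (k : ℕ) : occursIn (mark k) x :=
  exists_eq_wordAt_of_isInfix (mark_isInfix (hx (k + 1) 0 (8 * blen (k + 1) + 1)) (by simp))

lemma mem_lang_of_isInfix_mark {k : ℕ} {w : List Bool} (hw : w <:+: mark k) :
    w ∈ lang hierShift := by
  obtain ⟨x, hx⟩ := shiftSpace_hierShift.1
  exact mem_lang_of_isInfix ⟨x, hx, occursIn_mark hx k⟩ hw

lemma isInfix_mark_of_mem_lang {w : List Bool} (hw : w ∈ lang hierShift) {k : ℕ}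
    (hk : w.length ≤ k) : w <:+: mark k :=
  isInfix_mark (mem_factors_of_mem_lang hw k) (by omega)

lemma minimalShift_hierShift : MinimalShift hierShift :=
  minimalShift_of_forall_occursIn shiftSpace_hierShift fun _ hw _ hx =>
    occursIn_of_isInfix (occursIn_mark hx _) (isInfix_mark_of_mem_lang hw le_rfl)

lemma block_isInfix_mark {k : ℕ} {b : List Bool} (hb : b ∈ blocks k) : b <:+: mark k :=
  isInfix_mark (mem_factors_of_mem_kstar (mem_kstar_of_mem hb))
    ((length_of_mem_blocks hb).2.trans (Nat.le_add_right _ _))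

lemma mark_ne_nil (k : ℕ) : mark k ≠ [] := by
  obtain ⟨b, hb, hbn⟩ := exists_mem_blocks_length_eq k (blen k) le_rfl (by omega)
  have hlen := (block_isInfix_mark hb).length_le
  have hpos := blen_pos k
  intro hnil
  rw [hnil, List.length_nil] at hlen
  omega

lemma mark_isSuffix_of_mem_kstar {k : ℕ} {z : List Bool} (hz : z ∈ (blocks (k + 1))∗)
    (hne : z ≠ []) : mark k <:+ z := by
  induction hz using kstar_induction with
  | nil => exact absurd rfl hne
  | append b hb z _ ih =>
    rcases eq_or_ne z [] with rfl | hz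
    · obtain ⟨v, -, rfl, -⟩ := mem_blocks_succ.1 hb
      exact ⟨v, by simp⟩
    · exact (ih hz).trans (List.suffix_append b z)

lemma mark_isSuffix_mark {j k : ℕ} (h : j ≤ k) : mark j <:+ mark k := by
  induction k, h using Nat.le_induction with
  | base => exact List.suffix_rfl
  | succ k _ ih =>
    exact ih.trans (mark_isSuffix_of_mem_kstar (mark_mem_kstar (k + 1)) (mark_ne_nil (k + 1)))

lemma exists_block_isPrefix {j k : ℕ} (h : j ≤ k) {b : List Bool} (hb : b ∈ blocks j) :
    ∃ b' ∈ blocks k, b <+: b' := by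
  induction k, h using Nat.le_induction with
  | base => exact ⟨b, hb, List.prefix_rfl⟩
  | succ k _ ih =>
    obtain ⟨b', hb', hbb⟩ := ih
    obtain ⟨z, hz, hzn⟩ := exists_mem_kstar_blocks_length_eq (blen_strictMono k.lt_add_one).le
    have := (length_of_mem_blocks hb').2
    have := length_mark_add_blen_le k
    have := tailLen_mul_le k
    refine ⟨b' ++ z ++ mark k, mem_blocks_succ.2 ⟨_, append_mem_kstar (mem_kstar_of_mem hb') hz,
      rfl, ?_, ?_⟩, hbb.trans ⟨z ++ mark k, by simp⟩⟩ <;> simp only [List.length_append] <;> omega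

lemma mark_append_mem_lang {k : ℕ} {z : List Bool} (hz : z ∈ (blocks k)∗)
    (hlen : z.length ≤ 2 * blen (k + 1)) : mark k ++ z ∈ lang hierShift := by
  obtain ⟨a, ha, han⟩ := exists_mem_kstar_blocks_length_eq (blen_strictMono k.lt_add_one).le
  have := length_mark_add_blen_le k
  have := tailLen_mul_le k
  have hblock : a ++ (mark k ++ z) ++ mark k ∈ blocks (k + 1) := by
    refine mem_blocks_succ.2 ⟨_, append_mem_kstar ha (append_mem_kstar (mark_mem_kstar k) hz),
      rfl, ?_, ?_⟩ <;> simp only [List.length_append] <;> omega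
  exact mem_lang_of_isInfix_mark (List.IsInfix.trans ⟨a, mark k, rfl⟩ (block_isInfix_mark hblock))

lemma exists_blen_le_and_lt {j n : ℕ} (h : blen j ≤ n) :
    ∃ k, j ≤ k ∧ blen k ≤ n ∧ n < blen (k + 1) := by
  have hunbdd : ¬ BddAbove (blen '' Set.Ici j) := by
    rintro ⟨C, hC⟩
    have hle : blen (j + C + 1) ≤ C := hC ⟨_, Set.mem_Ici.2 (by omega), rfl⟩
    have := blen_strictMono.le_apply (x := j + C + 1)
    omega
  have hmem : n ∈ ⋃ k ∈ Set.Ici j, Set.Ico (blen k) (blen (Order.succ k)) :=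
    (biUnion_Ici_Ico_map_succ (fun _ hk => blen_strictMono.monotone hk) hunbdd).symm ▸ h
  simpa only [Set.mem_iUnion, Set.mem_Ici, Set.mem_Ico, Order.succ_eq_add_one, exists_prop]
    using hmem

lemma mixingShift_hierShift : MixingShift hierShift := by
  intro u hu w hw
  obtain ⟨c, d, hu⟩ := isInfix_mark_of_mem_lang hu (le_max_left u.length w.length)
  have hw := isInfix_mark_of_mem_lang hw (le_max_right u.length w.length)
  set j := max u.length w.length
  obtain ⟨b, hb, -⟩ := exists_mem_blocks_length_eq (j + 1) (blen (j + 1)) le_rfl (by omega)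
  obtain ⟨p, r, hwb⟩ : w <:+: b := by
    obtain ⟨z, -, rfl, -⟩ := mem_blocks_succ.1 hb
    exact List.infix_append_of_infix_right hw
  refine ⟨d.length + p.length + blen (j + 1), fun m hm => ?_⟩
  obtain ⟨k, hjk, hkm, hmk⟩ := exists_blen_le_and_lt
    (show blen (j + 1) ≤ m - d.length - p.length by omega)
  obtain ⟨z, hz, hzn⟩ := exists_mem_kstar_blocks_length_eq hkm
  obtain ⟨b', hb', s, hs⟩ := exists_block_isPrefix hjk hb
  obtain ⟨e, he⟩ := mark_isSuffix_mark (show j ≤ k by omega)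
  refine ⟨d ++ z ++ p, by simp only [List.length_append]; omega, ?_⟩
  refine mem_lang_of_isInfix (mark_append_mem_lang
    (append_mem_kstar hz (mem_kstar_of_mem hb')) ?_) ⟨e ++ c, r ++ s, ?_⟩
  · have := (length_of_mem_blocks hb').2
    have := tailLen_mul_le k
    have := blen_le_tailLen k
    rw [List.length_append]
    omega
  · simp only [← he, ← hu, ← hs, ← hwb, List.append_assoc]

open scoped Classical in
lemma two_pow_le_card_langN (n : ℕ) :
    2 ^ ((Finset.range n).filter (· ∉ overwritten 0)).card ≤ Nat.card (langN n hierShift) := by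
  set S := (Finset.range n).filter (· ∉ overwritten 0)
  have hfin : Finite (langN n hierShift) := finite_langN n hierShift
  let extend : (S → Bool) → ℕ → Bool := fun f i => if h : i ∈ S then f ⟨i, h⟩ else false
  let word : (S → Bool) → langN n hierShift := fun f =>
    ⟨wordAt (shadow 0 (extend f)) 0 n,
      wordAt_mem_langN (shadow_mem_hierShift (aligned_zero ▸ Set.mem_univ _)) 0 n⟩
  have hinj : Function.Injective word := by
    intro f g hfg
    funext ⟨i, hi⟩
    obtain ⟨hin, hi'⟩ := Finset.mem_filter.1 hi
    have hfree (y : ℕ → Bool) : shadow 0 y i = y i := shadow_eq_of_notMem (t := 0) y hi'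
    have hletter := wordAt_eq_wordAt_iff.1 (congrArg Subtype.val hfg) i (Finset.mem_range.1 hin)
    rw [Nat.zero_add, hfree, hfree] at hletter
    simpa only [extend, hi, dite_true] using hletter
  simpa using Nat.card_le_card_of_injective word hinj

open scoped Classical in
lemma half_le_card_notMem_overwritten (n : ℕ) :
    (n : ℝ) / 2 ≤ ((Finset.range n).filter (· ∉ overwritten 0)).card := by
  have hle := card_overwritten_le 0 n
  have hsum : (((Finset.range n).filter (· ∈ overwritten 0)).card : ℝ) +
      ((Finset.range n).filter (· ∉ overwritten 0)).card = n := by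
    rw [← Nat.cast_add, Finset.card_filter_add_card_filter_not, Finset.card_range]
  have : (n : ℝ) / 2 ^ (0 + 9) ≤ n / 2 := by
    gcongr
    norm_num
  linarith

lemma log_two_div_two_le_log_card_langN_div {n : ℕ} (hn : 0 < n) :
    Real.log 2 / 2 ≤ Real.log (Nat.card (langN n hierShift)) / n := by
  classical
  rw [le_div_iff₀ (by exact_mod_cast hn)]
  calc Real.log 2 / 2 * n = n / 2 * Real.log 2 := by ring
    _ ≤ ((Finset.range n).filter (· ∉ overwritten 0)).card * Real.log 2 := by
        gcongr
        convert half_le_card_notMem_overwritten n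
    _ = Real.log (2 ^ ((Finset.range n).filter (· ∉ overwritten 0)).card) :=
        (Real.log_pow _ _).symm
    _ ≤ Real.log (Nat.card (langN n hierShift)) := by
        refine Real.log_le_log (by positivity) ?_
        exact_mod_cast (by convert two_pow_le_card_langN n)

lemma topEntropy_hierShift_pos : 0 < topEntropy hierShift := by
  have hlog : 0 < Real.log 2 / 2 := half_pos (Real.log_pos one_lt_two)
  refine hlog.trans_le (le_limsup_of_frequently_le (Eventually.frequently ?_)
    (isBoundedUnder_of ⟨_, log_card_langN_div_le shiftSpace_hierShift.1⟩))
  filter_upwards [eventually_gt_atTop 0] with n hn using log_two_div_two_le_log_card_langN_div hn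

/-! ### Counting disagreements -/

section Diffs

variable {α : Type}

/-- The first `m` coordinates of a sequence. -/
def restr (m : ℕ) (x : ℕ → α) : Fin m → α := fun i => x i

lemma ofFn_restr_shift_iterate (x : ℕ → α) (i m : ℕ) :
    List.ofFn (restr m (shift^[i] x)) = wordAt x i m := by
  exact congrArg List.ofFn (funext fun j => shift_iterate_apply x i j)

variable [DecidableEq α]

/-- The number of positions below `n` at which the sequences `x` and `y` disagree, so that `dbar`
is the upper limit of `diffs x y n / n`. -/
def diffs (x y : ℕ → α) (n : ℕ) : ℕ := ((Finset.range n).filter fun j => x j ≠ y j).card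

lemma diffs_eq_sum (x y : ℕ → α) (n : ℕ) :
    diffs x y n = ∑ j ∈ Finset.range n, if x j ≠ y j then 1 else 0 :=
  Finset.card_filter _ _

lemma diffs_comm (x y : ℕ → α) (n : ℕ) : diffs x y n = diffs y x n := by
  simp only [diffs, ne_comm]

lemma diffs_mono (x y : ℕ → α) : Monotone (diffs x y) := fun _ _ h =>
  Finset.card_le_card (Finset.filter_subset_filter _ (Finset.range_subset_range.2 h))

lemma diffs_le (x y : ℕ → α) (n : ℕ) : diffs x y n ≤ n :=
  (Finset.card_filter_le _ _).trans_eq (Finset.card_range n)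

lemma diffs_triangle (x y z : ℕ → α) (n : ℕ) : diffs x z n ≤ diffs x y n + diffs y z n := by
  refine (Finset.card_le_card fun j hj => ?_).trans (Finset.card_union_le _ _)
  simp only [Finset.mem_filter, Finset.mem_union] at hj ⊢
  grind

lemma diffs_add (x y : ℕ → α) (m n : ℕ) :
    diffs x y (m + n) = diffs x y m + diffs (shift^[m] x) (shift^[m] y) n := by
  simp only [diffs_eq_sum, shift_iterate_apply, Finset.sum_range_add]

lemma diffs_shift_le (x y : ℕ → α) (m n : ℕ) :
    diffs (shift^[m] x) (shift^[m] y) n ≤ diffs x y (m + n) := by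
  rw [diffs_add]
  exact Nat.le_add_left _ _

lemma sum_diffs_shift_le (x y : ℕ → α) (T m : ℕ) :
    ∑ t ∈ Finset.range T, diffs (shift^[t] x) (shift^[t] y) m ≤ m * diffs x y (T + m) := by
  calc ∑ t ∈ Finset.range T, diffs (shift^[t] x) (shift^[t] y) m
      = ∑ i ∈ Finset.range m, diffs (shift^[i] x) (shift^[i] y) T := by
        simp only [diffs_eq_sum, shift_iterate_apply]
        rw [Finset.sum_comm]
        simp only [add_comm]
    _ ≤ ∑ _i ∈ Finset.range m, diffs x y (T + m) := by
        refine Finset.sum_le_sum fun _ hi => (diffs_shift_le x y _ T).trans (diffs_mono x y ?_)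
        have := Finset.mem_range.1 hi
        omega
    _ = m * diffs x y (T + m) := by rw [Finset.sum_const, Finset.card_range, smul_eq_mul]

lemma diffs_eq_hammingDist (x y : ℕ → α) (n : ℕ) :
    diffs x y n = hammingDist (restr n x) (restr n y) := by
  rw [diffs_eq_sum, Finset.sum_range fun j => if x j ≠ y j then 1 else 0, ← Finset.card_filter]
  rfl

lemma diffs_mul (x y : ℕ → α) (n G : ℕ) :
    diffs x y (G * n) = ∑ g ∈ Finset.range G,
      hammingDist (restr n (shift^[g * n] x)) (restr n (shift^[g * n] y)) := by
  induction G with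
  | zero => simp [diffs]
  | succ G ih => rw [Nat.succ_mul, diffs_add, ih, Finset.sum_range_succ, diffs_eq_hammingDist]

end Diffs

/-! ### The shadowing property -/

section Concatenation

variable {α : Type}

/-- The concatenation of a sequence of words of length `n`. -/
def unblock (n : ℕ) [NeZero n] (ω : ℕ → Fin n → α) : ℕ → α := fun i => ω (i / n) (Fin.ofNat n i)

lemma restr_shift_unblock {n : ℕ} [NeZero n] (ω : ℕ → Fin n → α) (g : ℕ) :
    restr n (shift^[g * n] (unblock n ω)) = ω g := by
  funext j
  rw [restr, shift_iterate_apply, unblock, Nat.add_comm, Nat.add_mul_div_right _ _ (NeZero.pos n),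
    Nat.div_eq_of_lt j.2, zero_add]
  congr 1
  ext
  simp [Fin.ofNat, Nat.mod_eq_of_lt j.2]

lemma unblock_restr_shift (n : ℕ) [NeZero n] (x : ℕ → α) :
    unblock n (fun g => restr n (shift^[g * n] x)) = x := by
  funext i
  rw [unblock, restr, shift_iterate_apply, Fin.val_ofNat, Nat.div_add_mod']

lemma length_flatten_ofFn (w : ℕ → List α) (n : ℕ) :
    (List.ofFn fun l : Fin n => w l).flatten.length = ∑ l ∈ Finset.range n, (w l).length := by
  rw [List.length_flatten, List.map_ofFn, List.sum_ofFn, Finset.sum_range]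
  rfl

variable [Inhabited α] {w : ℕ → List α}

lemma concatSeq_apply (hw : ∀ j, 0 < (w j).length) {j i : ℕ} (hi : i < (w j).length) :
    concatSeq w (∑ l ∈ Finset.range j, (w l).length + i) = (w j)[i] := by
  have hj : j ≤ ∑ l ∈ Finset.range j, (w l).length := by
    simpa using Finset.card_nsmul_le_sum (Finset.range j) (fun l => (w l).length) 1 fun l _ => hw l
  obtain ⟨r, hr⟩ := Nat.exists_eq_add_of_le
    (show j + 1 ≤ ∑ l ∈ Finset.range j, (w l).length + i + 1 by omega)
  rw [concatSeq, hr, List.ofFn_add, List.ofFn_add, List.flatten_append, List.flatten_append,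
    List.append_assoc, ← length_flatten_ofFn]
  simp only [Fin.val_castLE, Fin.val_natAdd]
  rw [List.getD_append_right _ _ _ _ (Nat.le_add_right _ _), Nat.add_sub_cancel_left,
    List.ofFn_succ, List.ofFn_zero, List.flatten_singleton]
  exact (List.getD_append _ _ _ _ hi).trans (List.getD_eq_getElem _ _ hi)

lemma wordAt_concatSeq (hw : ∀ j, 0 < (w j).length) (j : ℕ) :
    wordAt (concatSeq w) (∑ l ∈ Finset.range j, (w l).length) (w j).length = w j := by
  refine List.ext_getElem (length_wordAt _ _ _) fun i _ hi => ?_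
  rw [← concatSeq_apply hw hi]
  simp only [wordAt, List.getElem_ofFn]

lemma exists_boundary_of_notMem_lang {X : Set (ℕ → α)} (hpos : ∀ j, 0 < (w j).length)
    (hw : ∀ j, w j ∈ lang X) {i n : ℕ} (h : wordAt (concatSeq w) i n ∉ lang X) :
    ∃ j, i < ∑ l ∈ Finset.range j, (w l).length ∧
      ∑ l ∈ Finset.range j, (w l).length < i + n := by
  have hmono : StrictMono fun j => ∑ l ∈ Finset.range j, (w l).length :=
    strictMono_nat_of_lt_succ fun j => by
      simpa only [Finset.sum_range_succ] using Nat.lt_add_of_pos_right (hpos j)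
  have hex : ∃ j, i < ∑ l ∈ Finset.range j, (w l).length := ⟨i + 1, hmono.le_apply⟩
  refine ⟨Nat.find hex, Nat.find_spec hex, ?_⟩
  by_contra! hcon
  obtain ⟨j, hj⟩ : ∃ j, Nat.find hex = j + 1 := Nat.exists_eq_succ_of_ne_zero fun h0 => by
    simpa [h0] using Nat.find_spec hex
  have hle : ∑ l ∈ Finset.range j, (w l).length ≤ i := not_lt.1 (Nat.find_min hex (by omega))
  rw [hj, Finset.sum_range_succ] at hcon
  have hmem := hw j
  rw [← wordAt_concatSeq hpos j] at hmem
  exact h (mem_lang_of_isInfix hmem (wordAt_isInfix_wordAt _ hle hcon))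

end Concatenation

lemma card_filter_exists_boundary_le {P : ℕ → ℕ} {n K : ℕ} (hK : 0 < K)
    (hP : ∀ j, j * (n * K) ≤ P j) (s : ℕ → Prop) [DecidablePred s]
    (hs : ∀ g, s g → ∃ j, g * n < P j ∧ P j < g * n + n) (G : ℕ) :
    ((Finset.range G).filter s).card ≤ G / K + 1 := by
  choose! J hlt hgt using hs
  rw [← Finset.card_range (G / K + 1)]
  refine Finset.card_le_card_of_injOn J (fun g hg => ?_) fun g hg g' hg' heq => ?_
  · simp only [Finset.coe_filter, Finset.mem_range, Set.mem_ofPred_eq] at hg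
    have hlt' : J g * K * n < G * n :=
      calc J g * K * n = J g * (n * K) := by ring
        _ ≤ P (J g) := hP _
        _ < (g + 1) * n := by rw [Nat.succ_mul]; exact hgt g hg.2
        _ ≤ G * n := Nat.mul_le_mul_right _ hg.1
    rw [Finset.coe_range, Set.mem_Iio, Nat.lt_succ_iff]
    exact (Nat.le_div_iff_mul_le hK).2 (Nat.lt_of_mul_lt_mul_right hlt').le
  · simp only [Finset.coe_filter, Set.mem_ofPred_eq] at hg hg'
    have hg₁ := hlt g hg.2
    have hg₂ := hgt g hg.2
    have hg'₁ := hlt g' hg'.2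
    have hg'₂ := hgt g' hg'.2
    rw [heq] at hg₁ hg₂
    have hle : g ≤ g' :=
      Nat.lt_succ_iff.1 (Nat.lt_of_mul_lt_mul_right (a := n) (by rw [Nat.succ_mul]; omega))
    have hge : g' ≤ g :=
      Nat.lt_succ_iff.1 (Nat.lt_of_mul_lt_mul_right (a := n) (by rw [Nat.succ_mul]; omega))
    exact hle.antisymm hge

open scoped Classical in
lemma card_wordAt_concatSeq_notMem_lang_le {α : Type} [Inhabited α] {X : Set (ℕ → α)}
    {w : ℕ → List α} (hw : ∀ j, w j ∈ lang X) {n K : ℕ} (hn : 0 < n) (hK : 0 < K)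
    (hlen : ∀ j, n * K ≤ (w j).length) (G : ℕ) :
    ((Finset.range G).filter fun g => wordAt (concatSeq w) (g * n) n ∉ lang X).card ≤
      G / K + 1 := by
  have hpos (j : ℕ) : 0 < (w j).length := (Nat.mul_pos hn hK).trans_le (hlen j)
  have hP (j : ℕ) : j * (n * K) ≤ ∑ l ∈ Finset.range j, (w l).length := by
    simpa using Finset.card_nsmul_le_sum (Finset.range j) (fun l => (w l).length) (n * K)
      fun l _ => hlen l
  exact card_filter_exists_boundary_le hK hP _
    (fun g hg => exists_boundary_of_notMem_lang hpos hw hg) G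

instance neZero_blen (k : ℕ) : NeZero (blen k) := ⟨(blen_pos k).ne'⟩

lemma unblock_mem_aligned {k : ℕ} {ω : ℕ → Fin (blen k) → Bool}
    (h : ∀ g, List.ofFn (ω g) ∈ blocks k) : unblock (blen k) ω ∈ aligned k := fun g => by
  rw [← ofFn_restr_shift_iterate, restr_shift_unblock]
  exact h g

lemma exists_code (k : ℕ) (v : Fin (blen (k + 1)) → Bool) :
    ∃ u : Fin (blen (k + 1)) → Bool, List.ofFn u ∈ blocks (k + 1) ∧
      (List.ofFn v ∈ lang hierShift → hammingDist u v ≤ 10 * tailLen k) := by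
  by_cases hv : List.ofFn v ∈ lang hierShift
  · obtain ⟨u, hu, huv⟩ := exists_block_hammingDist_le v (mem_factors_of_mem_lang hv k)
    exact ⟨u, hu, fun _ => huv⟩
  · obtain ⟨b, hb, hbn⟩ := exists_mem_blocks_length_eq (k + 1) (blen (k + 1)) le_rfl (by omega)
    refine ⟨fun i => b.get (i.cast hbn.symm), ?_, fun h => absurd h hv⟩
    convert hb
    exact List.ext_getElem (by simp [hbn]) fun i _ _ => by simp

/-- A map from words of length `blen (k + 1)` to blocks of level `k + 1` that changes the words of
the shift space in few places. -/
noncomputable def blockCode (k : ℕ) (v : Fin (blen (k + 1)) → Bool) : Fin (blen (k + 1)) → Bool :=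
  (exists_code k v).choose

lemma ofFn_blockCode_mem (k : ℕ) (v : Fin (blen (k + 1)) → Bool) :
    List.ofFn (blockCode k v) ∈ blocks (k + 1) := (exists_code k v).choose_spec.1

lemma hammingDist_blockCode_le {k : ℕ} {v : Fin (blen (k + 1)) → Bool}
    (hv : List.ofFn v ∈ lang hierShift) : hammingDist (blockCode k v) v ≤ 10 * tailLen k :=
  (exists_code k v).choose_spec.2 hv

/-- The point obtained from a sequence of words by applying the code `ψ` to each word,
concatenating, and overwriting at all levels from `k` on. -/
noncomputable def hierPoint {k : ℕ} (ψ : (Fin (blen k) → Bool) → Fin (blen k) → Bool)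
    (ω : ℕ → Fin (blen k) → Bool) : ℕ → Bool :=
  shadow k (unblock (blen k) (ψ ∘ ω))

lemma hierPoint_mem_hierShift {k : ℕ} {ψ : (Fin (blen k) → Bool) → Fin (blen k) → Bool}
    (hψ : ∀ v, List.ofFn (ψ v) ∈ blocks k) (ω : ℕ → Fin (blen k) → Bool) :
    hierPoint ψ ω ∈ hierShift :=
  shadow_mem_hierShift (unblock_mem_aligned fun _ => hψ _)

open scoped Classical in
lemma diffs_le_card_overwritten {x y : ℕ → Bool} {k : ℕ} (h : ∀ i ∉ overwritten k, x i = y i)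
    (n : ℕ) : diffs x y n ≤ ((Finset.range n).filter (· ∈ overwritten k)).card :=
  Finset.card_le_card fun i hi => by
    simp only [Finset.mem_filter] at hi ⊢
    exact ⟨hi.1, by_contra fun hiw => hi.2 (h i hiw)⟩

lemma diffs_shadow_overwrites_le (k t : ℕ) (y : ℕ → Bool) (n : ℕ) :
    (diffs (shadow k y) (overwrites k t y) n : ℝ) ≤ n / 2 ^ (k + t + 9) := by
  classical
  refine le_trans ?_ (card_overwritten_le (k + t) n)
  exact_mod_cast (diffs_le_card_overwritten (fun i hi => shadow_eq_of_notMem y hi) n).trans_eq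
    (by congr)

open scoped Classical in
lemma diffs_unblock_blockCode_le (k : ℕ) (ω : ℕ → Fin (blen (k + 1)) → Bool) (G : ℕ) :
    diffs (unblock _ (blockCode k ∘ ω)) (unblock _ ω) (G * blen (k + 1)) ≤
      G * (10 * tailLen k) + blen (k + 1) *
        ((Finset.range G).filter fun g => List.ofFn (ω g) ∉ lang hierShift).card := by
  have hterm (g : ℕ) : hammingDist (blockCode k (ω g)) (ω g) ≤
      10 * tailLen k + blen (k + 1) * if List.ofFn (ω g) ∉ lang hierShift then 1 else 0 := by
    by_cases hg : List.ofFn (ω g) ∈ lang hierShift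
    · exact (hammingDist_blockCode_le hg).trans (Nat.le_add_right _ _)
    · rw [if_pos hg, mul_one]
      refine le_add_left (hammingDist_le_card_fintype.trans_eq (Fintype.card_fin _))
  rw [diffs_mul]
  simp only [restr_shift_unblock, Function.comp_apply]
  refine (Finset.sum_le_sum fun g _ => hterm g).trans_eq ?_
  rw [Finset.sum_add_distrib, ← Finset.mul_sum _ _ (blen (k + 1)), ← Finset.card_filter,
    Finset.sum_const, Finset.card_range, smul_eq_mul]

open scoped Classical in
lemma diffs_hierPoint_blockCode_le (k : ℕ) (ω : ℕ → Fin (blen (k + 1)) → Bool) (T : ℕ) :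
    (diffs (hierPoint (blockCode k) ω) (unblock _ ω) T : ℝ) ≤
      (T + blen (k + 1)) / 2 ^ (k + 6) + blen (k + 1) *
        ((Finset.range (T / blen (k + 1) + 1)).filter fun g =>
          List.ofFn (ω g) ∉ lang hierShift).card := by
  set n : ℝ := (blen (k + 1) : ℝ) with hndef
  set G := T / blen (k + 1) + 1
  set bad := ((Finset.range G).filter fun g => List.ofFn (ω g) ∉ lang hierShift).card
  set y := unblock _ (blockCode k ∘ ω)
  have hshadow : (diffs (hierPoint (blockCode k) ω) y T : ℝ) ≤ T / 2 ^ (k + 10) := by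
    rw [show k + 10 = k + 1 + 0 + 9 by omega]
    exact diffs_shadow_overwrites_le (k + 1) 0 y T
  have hcode : (diffs y (unblock _ ω) T : ℝ) ≤ (T / n + 1) * (10 * tailLen k) + n * bad := by
    have hT : T ≤ G * blen (k + 1) := by
      rw [mul_comm]
      exact (Nat.lt_mul_div_succ T (blen_pos _)).le
    have hle := (diffs_mono y (unblock _ ω) hT).trans (diffs_unblock_blockCode_le k ω G)
    calc (diffs y (unblock _ ω) T : ℝ)
        ≤ ((T / blen (k + 1) : ℕ) + 1) * (10 * tailLen k) + n * bad := by
          rw [hndef]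
          exact_mod_cast hle
      _ ≤ _ := by gcongr; exact Nat.cast_div_le
  have hlen : n = 2 ^ (k + 10) * tailLen k := by rw [hndef]; exact_mod_cast blen_succ k
  have hn : 0 < n := Nat.cast_pos.2 (blen_pos (k + 1))
  have htail : (tailLen k : ℝ) = n / 2 ^ (k + 10) := by
    rw [hlen, mul_div_cancel_left₀ _ (by positivity)]
  calc (diffs (hierPoint (blockCode k) ω) (unblock _ ω) T : ℝ)
      ≤ diffs (hierPoint (blockCode k) ω) y T + diffs y (unblock _ ω) T := by
        exact_mod_cast diffs_triangle _ _ _ T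
    _ ≤ T / 2 ^ (k + 10) + ((T / n + 1) * (10 * (n / 2 ^ (k + 10))) + n * bad) := by
        rw [htail] at hcode
        gcongr
    _ = (11 * T + 10 * n) / 2 ^ (k + 10) + n * bad := by field_simp; ring
    _ ≤ (16 * T + 16 * n) / 2 ^ (k + 10) + n * bad := by gcongr <;> norm_num
    _ = (T + n) / 2 ^ (k + 6) + n * bad := by rw [pow_add, pow_add _ k 6]; field_simp; ring

lemma dbar_le_of_diffs_le {α : Type} [DecidableEq α] {x y : ℕ → α} {c C : ℝ}
    (h : ∀ n, (diffs x y n : ℝ) ≤ c * n + C) : dbar x y ≤ c := by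
  have hlim : Tendsto (fun n : ℕ => c + C / n) atTop (𝓝 c) := by
    simpa using (tendsto_const_div_atTop_nhds_zero_nat C).const_add c
  refine (limsup_le_limsup ?_ ?_ hlim.isBoundedUnder_le).trans_eq hlim.limsup_eq
  · filter_upwards [eventually_gt_atTop 0] with n hn
    have hn' : (0 : ℝ) < n := by exact_mod_cast hn
    rw [div_le_iff₀ hn', add_mul, div_mul_cancel₀ _ hn'.ne']
    exact h n
  · exact isCoboundedUnder_le_of_le (x := 0) atTop fun n => by positivity

lemma tendsto_const_div_two_pow (c : ℝ) (m : ℕ) :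
    Tendsto (fun k : ℕ => c / 2 ^ (k + m)) atTop (𝓝 0) :=
  (tendsto_pow_atTop_atTop_of_one_lt one_lt_two).const_div_atTop c |>.comp
    (tendsto_add_atTop_nat m)

lemma dbarShadowing_hierShift : DbarShadowing hierShift := by
  classical
  intro ε hε
  obtain ⟨k, hk⟩ := ((tendsto_const_div_two_pow 2 6).eventually_lt_const hε).exists
  refine ⟨blen (k + 1) * 2 ^ (k + 6), Nat.mul_pos (blen_pos _) (by positivity),
    fun w hw hlen => ?_⟩
  set n : ℝ := (blen (k + 1) : ℝ)
  set K : ℝ := 2 ^ (k + 6) with hK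
  refine ⟨hierPoint (blockCode k) fun g => restr _ (shift^[g * blen (k + 1)] (concatSeq w)),
    hierPoint_mem_hierShift (ofFn_blockCode_mem k) _,
    lt_of_le_of_lt (dbar_le_of_diffs_le (C := 2 * n / K + n) fun T => ?_) hk⟩
  have hdiffs := diffs_hierPoint_blockCode_le k
    (fun g => restr _ (shift^[g * blen (k + 1)] (concatSeq w))) T
  have hbad := card_wordAt_concatSeq_notMem_lang_le hw (blen_pos (k + 1)) (by positivity) hlen
    (T / blen (k + 1) + 1)
  simp only [ofFn_restr_shift_iterate] at hdiffs
  rw [unblock_restr_shift] at hdiffs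
  set bad := ((Finset.range (T / blen (k + 1) + 1)).filter fun g =>
    wordAt (concatSeq w) (g * blen (k + 1)) (blen (k + 1)) ∉ lang hierShift).card
  have hbad' : n * bad ≤ n * ((T / n + 1) / K + 1) := by
    gcongr
    calc (bad : ℝ) ≤ ((T / blen (k + 1) + 1) / 2 ^ (k + 6) : ℕ) + 1 := by exact_mod_cast hbad
      _ ≤ ((T / blen (k + 1) : ℕ) + 1) / K + 1 := by
        gcongr
        exact Nat.cast_div_le.trans_eq (by rw [hK]; push_cast; rfl)
      _ ≤ (T / n + 1) / K + 1 := by gcongr; exact Nat.cast_div_le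
  have hn0 : 0 < n := Nat.cast_pos.2 (blen_pos (k + 1))
  rw [diffs_comm]
  calc _ ≤ (T + n) / K + n * bad := hdiffs
    _ ≤ (T + n) / K + n * ((T / n + 1) / K + 1) := by gcongr
    _ = 2 / K * T + (2 * n / K + n) := by field_simp; ring

/-! ### Birkhoff averages and ergodicity -/

section BirkhoffAverage

variable {X : Type*} {T : X → X} {f : X → ℝ}

lemma birkhoffAverage_comp_self (T : X → X) (f : X → ℝ) (n : ℕ) (x : X) :
    birkhoffAverage ℝ T (f ∘ T) n x = birkhoffAverage ℝ T f n (T x) := by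
  simp only [birkhoffAverage, birkhoffSum, Function.comp_apply, ← Function.iterate_succ_apply',
    Function.iterate_succ_apply]

lemma dist_birkhoffAverage_apply_le (T : X → X) {C : ℝ} (hf : ∀ x, |f x| ≤ C) (n : ℕ) (x : X) :
    dist (birkhoffAverage ℝ T f n (T x)) (birkhoffAverage ℝ T f n x) ≤ 2 * C / n := by
  rw [dist_birkhoffAverage_apply_birkhoffAverage]
  gcongr
  refine (dist_triangle_right _ _ 0).trans ?_
  rw [dist_zero_right, dist_zero_right, two_mul]
  exact add_le_add (hf _) (hf _)

lemma birkhoffAverage_mul (T : X → X) (f : X → ℝ) (G N : ℕ) (x : X) :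
    birkhoffAverage ℝ T f (G * N) x = birkhoffAverage ℝ T^[N] (birkhoffAverage ℝ T f N) G x := by
  have hsum : birkhoffSum T f (G * N) x = birkhoffSum T^[N] (birkhoffSum T f N) G x := by
    induction G with
    | zero => rw [Nat.zero_mul, birkhoffSum_zero, birkhoffSum_zero]
    | succ G ih =>
      rw [Nat.succ_mul, birkhoffSum_add, birkhoffSum_succ, ih, ← Function.iterate_mul, mul_comm N]
  rw [birkhoffAverage, birkhoffAverage, hsum]
  simp only [birkhoffSum, birkhoffAverage, smul_eq_mul, ← Finset.mul_sum]
  rw [Nat.cast_mul, mul_inv, mul_assoc]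

lemma abs_birkhoffAverage_sub_le_of_forall {g : X → ℝ} {c : ℝ} (h : ∀ x, |f x - g x| ≤ c) (n : ℕ)
    (x : X) : |birkhoffAverage ℝ T f n x - birkhoffAverage ℝ T g n x| ≤ c := by
  have hc : 0 ≤ c := (abs_nonneg _).trans (h x)
  calc |birkhoffAverage ℝ T f n x - birkhoffAverage ℝ T g n x|
      = |∑ k ∈ Finset.range n, (f (T^[k] x) - g (T^[k] x))| / n := by
        simp only [birkhoffAverage, birkhoffSum, smul_eq_mul]
        rw [← mul_sub, ← Finset.sum_sub_distrib, abs_mul, abs_inv, Nat.abs_cast, inv_mul_eq_div]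
    _ ≤ (∑ _k ∈ Finset.range n, c) / n := by
        gcongr
        exact (Finset.abs_sum_le_sum_abs _ _).trans (Finset.sum_le_sum fun k _ => h _)
    _ ≤ c := by
        rw [Finset.sum_const, Finset.card_range, nsmul_eq_mul]
        exact div_le_of_le_mul₀ (Nat.cast_nonneg n) hc (mul_comm _ _).le

lemma dist_birkhoffAverage_iterate_le {C : ℝ} (hf : ∀ x, |f x| ≤ C) (n r : ℕ) (x : X) :
    dist (birkhoffAverage ℝ T f n (T^[r] x)) (birkhoffAverage ℝ T f n x) ≤ r * (2 * C / n) := by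
  induction r with
  | zero => simp
  | succ r ih =>
    rw [Function.iterate_succ_apply']
    push_cast
    linarith [dist_triangle (birkhoffAverage ℝ T f n (T (T^[r] x)))
      (birkhoffAverage ℝ T f n (T^[r] x)) (birkhoffAverage ℝ T f n x),
      dist_birkhoffAverage_apply_le T hf n (T^[r] x)]

variable {Y : Type*} [MeasurableSpace X] [MeasurableSpace Y] {μ : Measure X} {ν : Measure Y}

lemma integral_comp_of_measurePreserving {g : X → Y} (hg : MeasurePreserving g μ ν) {f : Y → ℝ}
    (hf : AEStronglyMeasurable f ν) : ∫ x, f (g x) ∂μ = ∫ y, f y ∂ν := by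
  rw [← hg.map_eq, integral_map hg.aemeasurable (hg.map_eq.symm ▸ hf)]

lemma integral_birkhoffAverage_eq_inv_mul_sum (ν : Measure X) (n : ℕ)
    (hf : ∀ j < n, Integrable (fun x => f (T^[j] x)) ν) :
    ∫ x, birkhoffAverage ℝ T f n x ∂ν =
      (n : ℝ)⁻¹ * ∑ j ∈ Finset.range n, ∫ x, f (T^[j] x) ∂ν := by
  simp only [birkhoffAverage, birkhoffSum, smul_eq_mul]
  rw [integral_const_mul, integral_finsetSum _ fun j hj => hf j (Finset.mem_range.1 hj)]

lemma integrable_birkhoffAverage (hT : MeasurePreserving T μ μ) (hf : Integrable f μ) (n : ℕ) :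
    Integrable (birkhoffAverage ℝ T f n) μ :=
  (integrable_finsetSum _ fun j _ =>
    (hT.iterate j).integrable_comp_of_integrable hf).const_mul (n : ℝ)⁻¹

lemma integral_birkhoffAverage (hT : MeasurePreserving T μ μ) (hf : Integrable f μ) {n : ℕ}
    (hn : n ≠ 0) : ∫ x, birkhoffAverage ℝ T f n x ∂μ = ∫ x, f x ∂μ := by
  rw [integral_birkhoffAverage_eq_inv_mul_sum _ _ fun j _ =>
    (hT.iterate j).integrable_comp_of_integrable hf]
  simp only [fun j => integral_comp_of_measurePreserving (hT.iterate j) hf.aestronglyMeasurable,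
    Finset.sum_const, Finset.card_range, nsmul_eq_mul]
  exact inv_mul_cancel_left₀ (Nat.cast_ne_zero.2 hn) _

lemma abs_setIntegral_sub_le [IsFiniteMeasure μ] (hT : MeasurePreserving T μ μ)
    (hf : Integrable f μ) {B : Set X} (hB : MeasurableSet B) (hTB : T ⁻¹' B = B) {n : ℕ}
    (hn : n ≠ 0) (c : ℝ) :
    |∫ x in B, f x ∂μ - μ.real B * c| ≤ ∫ x, |birkhoffAverage ℝ T f n x - c| ∂μ := by
  have hTr : MeasurePreserving T (μ.restrict B) (μ.restrict B) := by
    simpa only [hTB] using hT.restrict_preimage hB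
  have hi := (integrable_birkhoffAverage hT hf n).sub (integrable_const c)
  calc |∫ x in B, f x ∂μ - μ.real B * c|
      = |∫ x in B, (birkhoffAverage ℝ T f n x - c) ∂μ| := by
        rw [integral_sub (integrable_birkhoffAverage hTr hf.integrableOn n) (integrable_const c),
          integral_birkhoffAverage hTr hf.integrableOn hn, setIntegral_const, smul_eq_mul]
    _ ≤ ∫ x in B, |birkhoffAverage ℝ T f n x - c| ∂μ := abs_integral_le_integral_abs
    _ ≤ ∫ x, |birkhoffAverage ℝ T f n x - c| ∂μ :=
        setIntegral_le_integral hi.abs (Eventually.of_forall fun _ => abs_nonneg _)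

lemma measure_inter_eq_mul_of_forall [IsProbabilityMeasure μ] (hT : MeasurePreserving T μ μ)
    {B C : Set X} (hB : MeasurableSet B) (hTB : T ⁻¹' B = B) (hC : MeasurableSet C)
    (h : ∀ ε : ℝ, 0 < ε → ∃ n : ℕ, n ≠ 0 ∧ ∃ c : ℝ,
      ∫ x, |birkhoffAverage ℝ T (C.indicator 1) n x - c| ∂μ ≤ ε) :
    μ (B ∩ C) = μ B * μ C := by
  have hf : Integrable (C.indicator (1 : X → ℝ)) μ := (integrable_const 1).indicator hC
  have hreal : μ.real (B ∩ C) = μ.real B * μ.real C := by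
    refine eq_of_abs_sub_le_all fun ε hε => ?_
    obtain ⟨n, hn, c, hc⟩ := h (ε / 2) (half_pos hε)
    have hBC := (abs_setIntegral_sub_le hT hf hB hTB hn c).trans hc
    have hCc := (abs_setIntegral_sub_le hT hf .univ Set.preimage_univ hn c).trans hc
    rw [integral_indicator_one hC, measureReal_restrict_apply hC, Set.inter_comm] at hBC
    rw [setIntegral_univ, integral_indicator_one hC, probReal_univ, one_mul] at hCc
    calc |μ.real (B ∩ C) - μ.real B * μ.real C|
        = |(μ.real (B ∩ C) - μ.real B * c) - μ.real B * (μ.real C - c)| := by ring_nf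
      _ ≤ |μ.real (B ∩ C) - μ.real B * c| + μ.real B * |μ.real C - c| := by
        refine (abs_sub _ _).trans_eq ?_
        rw [abs_mul, abs_of_nonneg measureReal_nonneg]
      _ ≤ ε / 2 + 1 * (ε / 2) := by
        gcongr
        exact measureReal_le_one
      _ = ε := by ring
  rwa [measureReal_def, measureReal_def, measureReal_def, ← ENNReal.toReal_mul,
    ENNReal.toReal_eq_toReal_iff' (by finiteness) (by finiteness)] at hreal

theorem ergodic_of_integral_abs_birkhoffAverage_sub_le [IsProbabilityMeasure μ]
    (hT : MeasurePreserving T μ μ) {𝒞 : Set (Set X)}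
    (hgen : ‹MeasurableSpace X› = MeasurableSpace.generateFrom 𝒞) (hpi : IsPiSystem 𝒞)
    (h : ∀ C ∈ 𝒞, ∀ ε : ℝ, 0 < ε → ∃ n : ℕ, n ≠ 0 ∧ ∃ c : ℝ,
      ∫ x, |birkhoffAverage ℝ T (C.indicator 1) n x - c| ∂μ ≤ ε) :
    Ergodic T μ := by
  have hmeas : ∀ C ∈ 𝒞, MeasurableSet C := fun C hC =>
    hgen ▸ MeasurableSpace.measurableSet_generateFrom hC
  refine ⟨hT, ⟨fun B hB hTB => ?_⟩⟩
  have hindep : ProbabilityTheory.IndepSets {B} 𝒞 μ := by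
    rw [ProbabilityTheory.IndepSets_iff]
    rintro _ C rfl hC
    exact measure_inter_eq_mul_of_forall hT hB hTB (hmeas C hC) (h C hC)
  have hself : ProbabilityTheory.IndepSet B B μ :=
    ProbabilityTheory.indep_of_indep_of_le_right
      (ProbabilityTheory.IndepSets.indep' (by simpa using hB) hmeas (IsPiSystem.singleton B) hpi
        hindep)
      (hgen ▸ MeasurableSpace.generateFrom_le (by simpa using hB))
  rw [eventuallyConst_set', ae_eq_empty, eventuallyEq_univ, mem_ae_iff, prob_compl_eq_zero_iff hB]
  exact ProbabilityTheory.measure_eq_zero_or_one_of_indepSet_self hself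

lemma tendsto_integral_abs_birkhoffAverage_sub [IsProbabilityMeasure μ]
    (hT : MeasurePreserving T μ μ) (hf : Integrable f μ)
    (hindep : Pairwise fun i j => ProbabilityTheory.IndepFun (f ∘ T^[i]) (f ∘ T^[j]) μ) :
    Tendsto (fun n => ∫ x, |birkhoffAverage ℝ T f n x - ∫ y, f y ∂μ| ∂μ) atTop (𝓝 0) := by
  have hident : ∀ i, ProbabilityTheory.IdentDistrib (f ∘ T^[i]) (f ∘ T^[0]) μ μ := fun i =>
    ⟨((hT.iterate i).integrable_comp_of_integrable hf).aemeasurable, hf.aemeasurable, by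
      rw [← AEMeasurable.map_map_of_aemeasurable ((hT.iterate i).map_eq.symm ▸ hf.aemeasurable)
        (hT.iterate i).aemeasurable, (hT.iterate i).map_eq, Function.iterate_zero,
        Function.comp_id]⟩
  have hlln := ProbabilityTheory.strong_law_Lp (p := 1) le_rfl ENNReal.one_ne_top
    (fun i => f ∘ T^[i]) (memLp_one_iff_integrable.2 hf) hindep hident
  refine ((ENNReal.tendsto_toReal ENNReal.zero_ne_top).comp hlln).congr fun n => ?_
  rw [Function.comp_apply, eLpNorm_one_eq_lintegral_enorm]
  exact (integral_norm_eq_lintegral_enorm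
    ((integrable_birkhoffAverage hT hf n).sub (integrable_const _)).aestronglyMeasurable).symm

end BirkhoffAverage

section AverageLimit

variable {α : Type}

lemma measurable_shift [MeasurableSpace α] : Measurable (shift : (ℕ → α) → ℕ → α) :=
  measurable_pi_lambda _ fun n => measurable_pi_apply (n + 1)

lemma continuous_shift [TopologicalSpace α] : Continuous (shift : (ℕ → α) → ℕ → α) :=
  continuous_pi fun n => continuous_apply (n + 1)

lemma measurable_restr [MeasurableSpace α] (m : ℕ) :
    Measurable (restr m : (ℕ → α) → Fin m → α) :=
  measurable_pi_lambda _ fun i => measurable_pi_apply (i : ℕ)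

lemma exists_eq_restr_preimage [MeasurableSpace α] {C : Set (ℕ → α)}
    (hC : C ∈ measurableCylinders fun _ : ℕ => α) :
    ∃ (m : ℕ) (T : Set (Fin m → α)), C = restr m ⁻¹' T := by
  obtain ⟨s, S, -, rfl⟩ := (mem_measurableCylinders _).1 hC
  have hs : ∀ i : s, (i : ℕ) < s.sup id + 1 := fun i =>
    Nat.lt_succ_of_le (Finset.le_sup (f := id) i.2)
  exact ⟨s.sup id + 1, {v | (fun i : s => v ⟨i, hs i⟩) ∈ S}, rfl⟩

variable [TopologicalSpace α]

lemma continuous_birkhoffAverage_shift {f : (ℕ → α) → ℝ} (hf : Continuous f) (n : ℕ) :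
    Continuous (birkhoffAverage ℝ shift f n) :=
  (continuous_finsetSum _ fun j _ => hf.comp (continuous_shift.iterate j)).const_smul (n : ℝ)⁻¹

variable [DiscreteTopology α]

lemma continuous_comp_restr {γ : Type*} [TopologicalSpace γ] {m : ℕ} (φ : (Fin m → α) → γ) :
    Continuous (φ ∘ restr m) :=
  continuous_of_discreteTopology.comp (continuous_pi fun i : Fin m => continuous_apply (i : ℕ))

variable [Finite α] [MeasurableSpace α] [DiscreteMeasurableSpace α] {f : (ℕ → α) → ℝ}

lemma integrable_of_continuous (hf : Continuous f) (ν : Measure (ℕ → α)) [IsFiniteMeasure ν] :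
    Integrable f ν :=
  hf.integrable_of_hasCompactSupport (HasCompactSupport.of_compactSpace f)

/-- The average of the laws of the first `S + 1` shifts of a random sequence with law `Λ`. -/
noncomputable def averagedLaw (Λ : ProbabilityMeasure (ℕ → α)) (S : ℕ) :
    ProbabilityMeasure (ℕ → α) :=
  ⟨((S + 1 : ℕ) : ENNReal)⁻¹ • ∑ j ∈ Finset.range (S + 1), (Λ : Measure (ℕ → α)).map shift^[j], by
    refine ⟨?_⟩
    have hmap : ∀ j, (Λ : Measure (ℕ → α)).map shift^[j] Set.univ = 1 := fun j =>
      (Measure.isProbabilityMeasure_map (measurable_shift.iterate j).aemeasurable).measure_univ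
    simp only [Measure.smul_apply, Measure.finsetSum_apply, hmap, Finset.sum_const,
      Finset.card_range, nsmul_one, smul_eq_mul]
    exact ENNReal.inv_mul_cancel (by positivity) (ENNReal.natCast_ne_top _)⟩

lemma integral_averagedLaw (Λ : ProbabilityMeasure (ℕ → α)) (hf : Continuous f) (S : ℕ) :
    ∫ x, f x ∂(averagedLaw Λ S : Measure (ℕ → α)) =
      ∫ x, birkhoffAverage ℝ shift f (S + 1) x ∂(Λ : Measure (ℕ → α)) := by
  have (j : ℕ) : IsProbabilityMeasure ((Λ : Measure (ℕ → α)).map shift^[j]) :=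
    Measure.isProbabilityMeasure_map (measurable_shift.iterate j).aemeasurable
  rw [integral_birkhoffAverage_eq_inv_mul_sum _ _ fun j _ =>
    integrable_of_continuous (hf.comp (continuous_shift.iterate j)) _]
  simp only [averagedLaw, ProbabilityMeasure.coe_mk]
  rw [integral_smul_measure, integral_finsetSum_measure fun j _ => integrable_of_continuous hf _,
    ENNReal.toReal_inv, ENNReal.toReal_natCast, smul_eq_mul]
  congr 1
  exact Finset.sum_congr rfl fun j _ => integral_map (measurable_shift.iterate j).aemeasurable
    hf.aestronglyMeasurable

/-- A limit, along a fixed ultrafilter, of the averaged laws of the shifts of a random sequence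
with law `Λ`; it exists by compactness. -/
noncomputable def averageLimit (Λ : ProbabilityMeasure (ℕ → α)) : ProbabilityMeasure (ℕ → α) :=
  ((hyperfilter ℕ).map (averagedLaw Λ)).lim

lemma tendsto_averagedLaw (Λ : ProbabilityMeasure (ℕ → α)) :
    Tendsto (averagedLaw Λ) (hyperfilter ℕ) (𝓝 (averageLimit Λ)) :=
  Ultrafilter.le_nhds_lim _

lemma tendsto_integral_averageLimit (Λ : ProbabilityMeasure (ℕ → α)) (hf : Continuous f) :
    Tendsto (fun S => ∫ x, birkhoffAverage ℝ shift f (S + 1) x ∂(Λ : Measure (ℕ → α)))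
      (hyperfilter ℕ) (𝓝 (∫ x, f x ∂(averageLimit Λ : Measure (ℕ → α)))) := by
  simp only [← integral_averagedLaw Λ hf]
  exact ProbabilityMeasure.tendsto_iff_forall_integral_tendsto.1 (tendsto_averagedLaw Λ)
    (BoundedContinuousFunction.mkOfCompact ⟨f, hf⟩)

lemma eventually_hyperfilter_succ {p : ℕ → Prop} (h : ∀ᶠ S in atTop, p S) :
    ∀ᶠ S in hyperfilter ℕ, p (S + 1) :=
  Nat.hyperfilter_le_atTop ((tendsto_add_atTop_nat 1).eventually h)

lemma integral_averageLimit_le {Λ : ProbabilityMeasure (ℕ → α)} (hf : Continuous f) {c : ℝ}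
    (h : ∀ᶠ S in atTop, ∫ x, birkhoffAverage ℝ shift f S x ∂(Λ : Measure (ℕ → α)) ≤ c) :
    ∫ x, f x ∂(averageLimit Λ : Measure (ℕ → α)) ≤ c :=
  le_of_tendsto (tendsto_integral_averageLimit Λ hf) (eventually_hyperfilter_succ h)

lemma invariantPM_averageLimit (Λ : ProbabilityMeasure (ℕ → α)) :
    invariantPM (averageLimit Λ) := by
  have := Measure.isProbabilityMeasure_map (μ := (averageLimit Λ : Measure (ℕ → α)))
    measurable_shift.aemeasurable
  refine ext_of_forall_integral_eq_of_IsFiniteMeasure fun f => ?_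
  rw [integral_map measurable_shift.aemeasurable f.continuous.aestronglyMeasurable]
  have hcont := f.continuous.comp (continuous_shift (α := α))
  have hdiff : Tendsto (fun S => ∫ x, birkhoffAverage ℝ shift (f ∘ shift) (S + 1) x ∂(Λ : Measure _)
      - ∫ x, birkhoffAverage ℝ shift f (S + 1) x ∂(Λ : Measure (ℕ → α))) (hyperfilter ℕ) (𝓝 0) := by
    refine squeeze_zero_norm (fun S => ?_) (((tendsto_const_div_atTop_nhds_zero_nat (2 * ‖f‖)).comp
      (tendsto_add_atTop_nat 1)).mono_left Nat.hyperfilter_le_atTop)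
    rw [← integral_sub (integrable_of_continuous (continuous_birkhoffAverage_shift hcont _) _)
      (integrable_of_continuous (continuous_birkhoffAverage_shift f.continuous _) _)]
    simp only [birkhoffAverage_comp_self]
    refine (norm_integral_le_of_norm_le_const (ae_of_all _
      (dist_birkhoffAverage_apply_le shift f.norm_coe_le_norm (S + 1)))).trans_eq ?_
    rw [probReal_univ, mul_one, Function.comp_apply]
  exact sub_eq_zero.1 (tendsto_nhds_unique ((tendsto_integral_averageLimit Λ hcont).sub
    (tendsto_integral_averageLimit Λ f.continuous)) hdiff)

lemma averageLimit_mem_Msigma {X : Set (ℕ → α)} (hX : ShiftSpace X)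
    {Λ : ProbabilityMeasure (ℕ → α)} (hΛ : ∀ᵐ x ∂(Λ : Measure (ℕ → α)), x ∈ X) :
    averageLimit Λ ∈ Msigma X := by
  have havg : ∀ S, (averagedLaw Λ S : Measure (ℕ → α)) X = 1 := fun S => by
    refine (prob_compl_eq_zero_iff hX.2.1.measurableSet).1 ?_
    have hzero : ∀ j, (Λ : Measure (ℕ → α)).map shift^[j] Xᶜ = 0 := fun j => by
      rw [Measure.map_apply (measurable_shift.iterate j) hX.2.1.measurableSet.compl]
      exact measure_mono_null (fun x hx hxX => hx (Set.MapsTo.iterate hX.2.2 j hxX)) hΛ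
    simp only [averagedLaw, ProbabilityMeasure.coe_mk, Measure.smul_apply,
      Measure.finsetSum_apply, hzero, Finset.sum_const_zero, smul_zero]
  have hlim := ProbabilityMeasure.limsup_measure_closed_le_of_tendsto (tendsto_averagedLaw Λ) hX.2.1
  simp only [havg, limsup_const] at hlim
  exact ⟨invariantPM_averageLimit Λ,
    (congrArg ENNReal.toNNReal (le_antisymm prob_le_one hlim)).trans ENNReal.toNNReal_one⟩

theorem ergodicPM_averageLimit {Λ : ProbabilityMeasure (ℕ → α)}
    (h : ∀ (m : ℕ) (φ : (Fin m → α) → ℝ), (∀ v, |φ v| ≤ 1) → ∀ ε : ℝ, 0 < ε →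
      ∃ n : ℕ, n ≠ 0 ∧ ∃ c : ℝ, ∀ᶠ S in atTop,
        ∫ x, birkhoffAverage ℝ shift
          (fun y => |birkhoffAverage ℝ shift (φ ∘ restr m) n y - c|) S x
          ∂(Λ : Measure (ℕ → α)) ≤ ε) :
    ErgodicPM (averageLimit Λ) := by
  have hinv : MeasurePreserving shift (averageLimit Λ : Measure (ℕ → α)) (averageLimit Λ) :=
    ⟨measurable_shift, invariantPM_averageLimit Λ⟩
  refine ergodic_of_integral_abs_birkhoffAverage_sub_le hinv
    generateFrom_measurableCylinders.symm isPiSystem_measurableCylinders fun C hC ε hε => ?_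
  obtain ⟨m, T, rfl⟩ := exists_eq_restr_preimage hC
  obtain ⟨n, hn, c, hc⟩ := h m (T.indicator 1) (fun v => by
    by_cases hv : v ∈ T <;> simp [hv]) ε hε
  refine ⟨n, hn, c, ?_⟩
  exact integral_averageLimit_le
    ((continuous_birkhoffAverage_shift (continuous_comp_restr _) n).sub continuous_const).abs hc

end AverageLimit

/-! ### Averages of functions of finitely many letters -/

section HammingLipschitz

variable {α : Type} [DecidableEq α] {C : ℝ} {l : ℕ} {f : (ℕ → α) → ℝ}

/-- A function of the first `l` letters which changes by at most `C` for each letter changed. -/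
def HammingLipschitz (C : ℝ) (l : ℕ) (f : (ℕ → α) → ℝ) : Prop :=
  ∀ x y, |f x - f y| ≤ C * diffs x y l

lemma hammingLipschitz_comp_restr {m : ℕ} {φ : (Fin m → α) → ℝ} (hφ : ∀ v, |φ v| ≤ 1) :
    HammingLipschitz 2 m (φ ∘ restr m) := by
  intro x y
  rcases Nat.eq_zero_or_pos (diffs x y m) with h | h
  · rw [diffs_eq_hammingDist, hammingDist_eq_zero] at h
    rw [Function.comp_apply, Function.comp_apply, h, sub_self, abs_zero]
    positivity
  · have h1 : (1 : ℝ) ≤ diffs x y m := Nat.one_le_cast.2 h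
    simp only [Function.comp_apply]
    linarith [abs_sub (φ (restr m x)) (φ (restr m y)), hφ (restr m x), hφ (restr m y)]

lemma HammingLipschitz.comp_birkhoffAverage (hC : 0 ≤ C) (hf : HammingLipschitz C l f) (n : ℕ) :
    HammingLipschitz (C * l / n) (n + l) (birkhoffAverage ℝ shift f n) := by
  intro x y
  calc |birkhoffAverage ℝ shift f n x - birkhoffAverage ℝ shift f n y|
      ≤ (∑ t ∈ Finset.range n, |f (shift^[t] x) - f (shift^[t] y)|) / n :=
        dist_birkhoffAverage_birkhoffAverage_le ℝ shift f n x y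
    _ ≤ (∑ t ∈ Finset.range n, C * diffs (shift^[t] x) (shift^[t] y) l) / n := by
        gcongr with t
        exact hf _ _
    _ ≤ C * (l * diffs x y (n + l) : ℕ) / n := by
        rw [← Finset.mul_sum]
        gcongr
        exact_mod_cast sum_diffs_shift_le x y n l
    _ = C * l / n * diffs x y (n + l) := by
        push_cast
        ring

lemma HammingLipschitz.abs_sub_const (hf : HammingLipschitz C l f) (c : ℝ) :
    HammingLipschitz C l fun x => |f x - c| := fun x y => by
  refine (abs_abs_sub_abs_le _ _).trans ?_
  rw [sub_sub_sub_cancel_right]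
  exact hf x y

lemma HammingLipschitz.abs_birkhoffAverage_sub_le_of_diffs_le (hC : 0 ≤ C)
    (hf : HammingLipschitz C l f) {x y : ℕ → α} {δ : ℝ} {n : ℕ} (hn : n ≠ 0) (hln : l ≤ n)
    (h : (diffs x y (n + l) : ℝ) ≤ δ * (n + l : ℕ)) :
    |birkhoffAverage ℝ shift f n x - birkhoffAverage ℝ shift f n y| ≤ 2 * C * l * δ := by
  have hδ : 0 ≤ δ := nonneg_of_mul_nonneg_left ((Nat.cast_nonneg _).trans h)
    (Nat.cast_pos.2 (by omega))
  have : (0 : ℝ) < n := by positivity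
  have hln' : (l : ℝ) ≤ n := Nat.cast_le.2 hln
  calc |birkhoffAverage ℝ shift f n x - birkhoffAverage ℝ shift f n y|
      ≤ C * l / n * (δ * (n + l : ℕ)) :=
        (hf.comp_birkhoffAverage hC n x y).trans (mul_le_mul_of_nonneg_left h (by positivity))
    _ ≤ C * l / n * (δ * (2 * n)) := by
        gcongr
        push_cast
        linarith
    _ = 2 * C * l * δ := by
        field_simp

end HammingLipschitz

/-! ### Ergodicity of limits of block-independent processes -/

section Extend

variable {α : Type} [Inhabited α]

/-- The sequence continuing the word `v` by the default letter. -/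
def extend {N : ℕ} (v : Fin N → α) : ℕ → α := fun i => if h : i < N then v ⟨i, h⟩ else default

lemma diffs_extend_restr_le [DecidableEq α] (x : ℕ → α) (N m : ℕ) :
    diffs x (extend (restr N x)) (N + m) ≤ m := by
  have hrestr : restr N (extend (restr N x)) = restr N x :=
    funext fun i => dif_pos i.2
  rw [diffs_add, diffs_eq_hammingDist, hrestr, hammingDist_self, zero_add]
  exact diffs_le _ _ _

lemma HammingLipschitz.abs_birkhoffAverage_sub_extend_le [DecidableEq α] {C : ℝ} {l : ℕ}
    {f : (ℕ → α) → ℝ} (hC : 0 ≤ C) (hf : HammingLipschitz C l f) (n : ℕ) (x : ℕ → α) :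
    |birkhoffAverage ℝ shift f n x - birkhoffAverage ℝ shift f n (extend (restr n x))| ≤
      C * l ^ 2 / n := by
  refine (hf.comp_birkhoffAverage hC n _ _).trans ?_
  have hext : (diffs x (extend (restr n x)) (n + l) : ℝ) ≤ l :=
    Nat.cast_le.2 (diffs_extend_restr_le x n l)
  exact (mul_le_mul_of_nonneg_left hext (by positivity)).trans_eq (by ring)

end Extend

section BlockIID

variable {α : Type} [MeasurableSpace α]

/-- The law `Λ` makes the consecutive words of length `N` identically distributed and pairwise
independent. -/
structure IsBlockIID (Λ : Measure (ℕ → α)) (N : ℕ) : Prop where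
  measurePreserving : MeasurePreserving shift^[N] Λ Λ
  indepFun : Pairwise fun i j => ProbabilityTheory.IndepFun (restr N ∘ (shift^[N])^[i])
    (restr N ∘ (shift^[N])^[j]) Λ

variable [TopologicalSpace α] [DiscreteTopology α] [Finite α] [DiscreteMeasurableSpace α]
  {Λ : Measure (ℕ → α)} [IsProbabilityMeasure Λ] {N : ℕ} {f : (ℕ → α) → ℝ}

lemma IsBlockIID.tendsto_integral_abs_sub (hΛ : IsBlockIID Λ N)
    (h : (Fin N → α) → ℝ) :
    Tendsto (fun G => ∫ x, |birkhoffAverage ℝ shift^[N] (h ∘ restr N) G x -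
      ∫ y, h (restr N y) ∂Λ| ∂Λ) atTop (𝓝 0) :=
  tendsto_integral_abs_birkhoffAverage_sub hΛ.measurePreserving
    (integrable_of_continuous (continuous_comp_restr h) Λ)
    (fun _ _ hij => (hΛ.indepFun hij).comp .of_discrete .of_discrete)

lemma IsBlockIID.eventually_integral_abs_sub_le [DecidableEq α] [Inhabited α] (hΛ : IsBlockIID Λ N)
    {C : ℝ} {l : ℕ} (hC : 0 ≤ C) (hfc : Continuous f) (hf : HammingLipschitz C l f) {ε : ℝ}
    (hε : 0 < ε) :
    ∃ c : ℝ, ∀ᶠ G in atTop, ∫ x, |birkhoffAverage ℝ shift f (G * N) x - c| ∂Λ ≤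
      C * l ^ 2 / N + ε := by
  set h : (Fin N → α) → ℝ := birkhoffAverage ℝ shift f N ∘ extend
  refine ⟨∫ y, h (restr N y) ∂Λ, ?_⟩
  have hlln := (hΛ.tendsto_integral_abs_sub h).eventually_le_const hε
  filter_upwards [hlln] with G hG
  have hint : Integrable (fun x => |birkhoffAverage ℝ shift^[N] (h ∘ restr N) G x -
    ∫ y, h (restr N y) ∂Λ|) Λ :=
    ((integrable_birkhoffAverage hΛ.measurePreserving (integrable_of_continuous
      (continuous_comp_restr h) Λ) G).sub (integrable_const _)).abs
  calc ∫ x, |birkhoffAverage ℝ shift f (G * N) x - ∫ y, h (restr N y) ∂Λ| ∂Λ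
      ≤ ∫ x, (C * l ^ 2 / N + |birkhoffAverage ℝ shift^[N] (h ∘ restr N) G x -
          ∫ y, h (restr N y) ∂Λ|) ∂Λ := by
        refine integral_mono (integrable_of_continuous ((continuous_birkhoffAverage_shift hfc
          _).sub continuous_const).abs Λ) ((integrable_const _).add hint) fun x => ?_
        have hclose := abs_birkhoffAverage_sub_le_of_forall (T := shift^[N])
          (hf.abs_birkhoffAverage_sub_extend_le hC N) G x
        rw [birkhoffAverage_mul]
        exact (abs_sub_le _ _ _).trans (add_le_add_left hclose _)
    _ ≤ C * l ^ 2 / N + ε := by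
        rw [integral_add (integrable_const _) hint, integral_const, probReal_univ, one_smul]
        gcongr

lemma integral_birkhoffAverage_le_of_forall_le (hΛ : MeasurePreserving shift^[N] Λ Λ)
    (hN : 0 < N) (hf : Continuous f) {c : ℝ} (hc : ∀ r < N, ∀ x, f (shift^[r] x) ≤ f x + c)
    {n : ℕ} (hn : n ≠ 0) : ∫ x, birkhoffAverage ℝ shift f n x ∂Λ ≤ ∫ x, f x ∂Λ + c := by
  have hint : ∀ s, Integrable (fun x => f (shift^[s] x)) Λ := fun s =>
    integrable_of_continuous (hf.comp (continuous_shift.iterate s)) Λ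
  have hs : ∀ s, ∫ x, f (shift^[s] x) ∂Λ ≤ ∫ x, f x ∂Λ + c := fun s => by
    have hsplit : (shift^[s] : (ℕ → α) → ℕ → α) =
        shift^[s % N] ∘ (shift^[N])^[s / N] := by
      rw [← Function.iterate_mul, ← Function.iterate_add, Nat.mod_add_div]
    calc ∫ x, f (shift^[s] x) ∂Λ
        ≤ ∫ x, (f ((shift^[N])^[s / N] x) + c) ∂Λ := by
          rw [hsplit]
          refine integral_mono (hsplit ▸ hint s) (Integrable.add ?_ (integrable_const c)) fun x =>
            hc _ (Nat.mod_lt s hN) _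
          rw [← Function.iterate_mul]
          exact hint _
      _ = ∫ x, f x ∂Λ + c := by
          rw [integral_add (Function.iterate_mul shift N (s / N) ▸ hint _) (integrable_const c),
            integral_comp_of_measurePreserving (hΛ.iterate _) hf.aestronglyMeasurable,
            integral_const, probReal_univ, one_smul]
  rw [integral_birkhoffAverage_eq_inv_mul_sum _ _ fun j _ => hint j,
    inv_mul_le_iff₀ (by positivity)]
  exact (Finset.sum_le_card_nsmul _ _ _ fun s _ => hs s).trans_eq (by
    rw [Finset.card_range, nsmul_eq_mul])

lemma IsBlockIID.eventually_integral_birkhoffAverage_abs_sub_le [DecidableEq α] [Inhabited α]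
    (hΛ : IsBlockIID Λ N) (hN : 0 < N) {C : ℝ} {l : ℕ} (hC : 0 ≤ C) (hfc : Continuous f)
    (hf1 : ∀ x, |f x| ≤ 1) (hf : HammingLipschitz C l f) {ε : ℝ} (hε : 0 < ε) :
    ∃ c : ℝ, ∀ᶠ G in atTop, ∀ S ≠ 0, ∫ x, birkhoffAverage ℝ shift
      (fun y => |birkhoffAverage ℝ shift f (G * N) y - c|) S x ∂Λ ≤ C * l ^ 2 / N + ε := by
  obtain ⟨c, hc⟩ := hΛ.eventually_integral_abs_sub_le hC hfc hf (half_pos hε)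
  refine ⟨c, ?_⟩
  filter_upwards [hc, eventually_gt_atTop 0, (tendsto_const_div_atTop_nhds_zero_nat
    (2 : ℝ)).eventually_le_const (half_pos hε)] with G hG hG0 hGε S hS
  have hcont : Continuous fun y => |birkhoffAverage ℝ shift f (G * N) y - c| :=
    ((continuous_birkhoffAverage_shift hfc _).sub continuous_const).abs
  refine (integral_birkhoffAverage_le_of_forall_le hΛ.measurePreserving hN hcont (c := ε / 2)
    (fun r hr x => ?_) hS).trans (by linarith)
  have hshift : dist (birkhoffAverage ℝ shift f (G * N) (shift^[r] x))
      (birkhoffAverage ℝ shift f (G * N) x) ≤ ε / 2 := by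
    calc dist (birkhoffAverage ℝ shift f (G * N) (shift^[r] x))
          (birkhoffAverage ℝ shift f (G * N) x)
        ≤ r * (2 * 1 / (G * N : ℕ)) := dist_birkhoffAverage_iterate_le hf1 _ r x
      _ ≤ N * (2 * 1 / (G * N : ℕ)) := by gcongr
      _ = (2 : ℝ) / G := by
        push_cast
        field_simp
      _ ≤ ε / 2 := hGε
  have := abs_sub_le (birkhoffAverage ℝ shift f (G * N) (shift^[r] x))
    (birkhoffAverage ℝ shift f (G * N) x) c
  rw [Real.dist_eq] at hshift
  linarith

lemma integral_birkhoffAverage_abs_sub_map_le [DecidableEq α] {Ω : Type*} [MeasurableSpace Ω]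
    {P : Measure Ω} [IsProbabilityMeasure P] {V Y : Ω → ℕ → α} (hV : Measurable V)
    (hY : Measurable Y) {δ : ℝ} (hVY : ∀ ω n, (diffs (V ω) (Y ω) n : ℝ) ≤ δ * n)
    {C : ℝ} {l : ℕ} (hC : 0 ≤ C) (hfc : Continuous f) (hf : HammingLipschitz C l f) (c : ℝ)
    {L S : ℕ} (hL : L ≠ 0) (hlL : l ≤ L) (hLS : 2 * L ≤ S) :
    ∫ x, birkhoffAverage ℝ shift (fun y => |birkhoffAverage ℝ shift f L y - c|) S x ∂P.map V ≤
      ∫ x, birkhoffAverage ℝ shift (fun y => |birkhoffAverage ℝ shift f L y - c|) S x ∂P.map Y +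
        4 * C * l * δ := by
  have hcont : Continuous
      (birkhoffAverage ℝ shift (fun y => |birkhoffAverage ℝ shift f L y - c|) S) :=
    continuous_birkhoffAverage_shift
      ((continuous_birkhoffAverage_shift hfc L).sub continuous_const).abs S
  have hmap : ∀ {Z : Ω → ℕ → α}, Measurable Z → IsProbabilityMeasure (P.map Z) := fun hZ =>
    Measure.isProbabilityMeasure_map hZ.aemeasurable
  have hint : ∀ {Z : Ω → ℕ → α}, Measurable Z → Integrable (fun ω =>
      birkhoffAverage ℝ shift (fun y => |birkhoffAverage ℝ shift f L y - c|) S (Z ω)) P :=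
    fun hZ => have := hmap hZ
      (integrable_of_continuous hcont _).comp_measurable hZ
  rw [integral_map hV.aemeasurable hcont.aestronglyMeasurable,
    integral_map hY.aemeasurable hcont.aestronglyMeasurable,
    ← sub_le_iff_le_add', ← integral_sub (hint hV) (hint hY)]
  have hclose : ∀ ω, birkhoffAverage ℝ shift (fun y => |birkhoffAverage ℝ shift f L y - c|) S (V ω)
      - birkhoffAverage ℝ shift (fun y => |birkhoffAverage ℝ shift f L y - c|) S (Y ω) ≤
        4 * C * l * δ := fun ω => by
    refine (le_abs_self _).trans ((((hf.comp_birkhoffAverage hC L).abs_sub_const c)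
      |>.abs_birkhoffAverage_sub_le_of_diffs_le (by positivity) (by omega) (by omega)
        (hVY ω _)).trans ?_)
    have hδ : 0 ≤ δ := by simpa using (Nat.cast_nonneg _).trans (hVY ω 1)
    have hl : ((L + l : ℕ) : ℝ) ≤ 2 * L := by exact_mod_cast (by omega : L + l ≤ 2 * L)
    calc 2 * (C * l / L) * (L + l : ℕ) * δ ≤ 2 * (C * l / L) * (2 * L) * δ := by gcongr
      _ = 4 * C * l * δ := by
        field_simp
        ring
  exact (integral_mono ((hint hV).sub (hint hY)) (integrable_const _) hclose).trans_eq (by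
    rw [integral_const, probReal_univ, one_smul])

theorem ergodicPM_averageLimit_map_of_isBlockIID [DecidableEq α] [Inhabited α] {Ω : Type*}
    [MeasurableSpace Ω] {P : ProbabilityMeasure Ω} {V : Ω → ℕ → α} (hV : Measurable V)
    (h : ∀ δ : ℝ, 0 < δ → ∃ N : ℕ, 1 / δ ≤ N ∧ ∃ Y : Ω → ℕ → α, Measurable Y ∧
      IsBlockIID ((P : Measure Ω).map Y) N ∧ ∀ ω n, (diffs (V ω) (Y ω) n : ℝ) ≤ δ * n) :
    ErgodicPM (averageLimit (P.map hV.aemeasurable)) := by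
  refine ergodicPM_averageLimit fun m φ hφ ε hε => ?_
  have hD : (0 : ℝ) < 8 * m + 2 * m ^ 2 + 1 := by positivity
  obtain ⟨N, hN, Y, hY, hYiid, hVY⟩ := h (ε / 2 / (8 * m + 2 * m ^ 2 + 1)) (by positivity)
  set δ := ε / 2 / (8 * m + 2 * m ^ 2 + 1) with hδ
  have hδ0 : 0 < δ := by positivity
  have hN0 : (0 : ℝ) < N := (one_div_pos.2 hδ0).trans_le hN
  have hYprob : IsProbabilityMeasure ((P : Measure Ω).map Y) :=
    Measure.isProbabilityMeasure_map hY.aemeasurable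
  have hlip := hammingLipschitz_comp_restr hφ
  have hcont := continuous_comp_restr φ
  obtain ⟨c, hc⟩ := hYiid.eventually_integral_birkhoffAverage_abs_sub_le (Nat.cast_pos.1 hN0)
    zero_le_two hcont (fun x => hφ _) hlip (half_pos hε)
  obtain ⟨G, hG, hGm⟩ := (hc.and (eventually_gt_atTop m)).exists
  have hGN : G ≤ G * N := Nat.le_mul_of_pos_right G (Nat.cast_pos.1 hN0)
  refine ⟨G * N, by omega, c, ?_⟩
  filter_upwards [eventually_ge_atTop (2 * (G * N))] with S hS
  calc _ ≤ _ := integral_birkhoffAverage_abs_sub_map_le hV hY hVY zero_le_two hcont hlip c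
        (by omega) (by omega) hS
    _ ≤ 2 * m ^ 2 / N + ε / 2 + 4 * 2 * m * δ := by
      gcongr
      exact hG S (by omega)
    _ ≤ 2 * m ^ 2 * δ + ε / 2 + 4 * 2 * m * δ := by
      rw [div_eq_mul_inv]
      gcongr
      rw [inv_le_comm₀ hN0 hδ0, ← one_div]
      exact hN
    _ ≤ (8 * m + 2 * m ^ 2 + 1) * δ + ε / 2 := by linarith
    _ = ε := by
      rw [hδ, mul_div_cancel₀ _ hD.ne', add_halves]

end BlockIID

/-! ### Independent sequences of words -/

section IidLaw

variable {F : Type*} [MeasurableSpace F]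

/-- The law of a sequence of independent letters with law `p`. -/
noncomputable def iidLaw (p : ProbabilityMeasure F) : ProbabilityMeasure (ℕ → F) :=
  ⟨Measure.infinitePi fun _ => (p : Measure F), inferInstance⟩

lemma measurePreserving_eval_iidLaw (p : ProbabilityMeasure F) (i : ℕ) :
    MeasurePreserving (fun ω : ℕ → F => ω i) (iidLaw p : Measure (ℕ → F)) p :=
  measurePreserving_eval_infinitePi (fun _ => (p : Measure F)) i

lemma iIndepFun_iidLaw (p : ProbabilityMeasure F) :
    ProbabilityTheory.iIndepFun (fun i (ω : ℕ → F) => ω i) (iidLaw p : Measure (ℕ → F)) :=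
  ProbabilityTheory.iIndepFun_infinitePi (P := fun _ => (p : Measure F)) (X := fun _ x => x)
    fun _ => measurable_id

variable [MeasurableSingletonClass F] [Finite F] {γ γ' : Type*} [MeasurableSpace γ]
  [MeasurableSpace γ']

lemma exists_measurable_comp_of_dependsOn {q : (ℕ → F) → γ} {R : Finset ℕ} [Nonempty γ]
    (hq : DependsOn q R) :
    ∃ Φ : (R → F) → γ, Measurable Φ ∧ q = Φ ∘ fun ω (i : R) => ω i := by
  obtain ⟨Φ, hΦ⟩ := dependsOn_iff_exists_comp.1 hq
  exact ⟨Φ, .of_discrete, hΦ⟩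

lemma measurable_of_dependsOn [Nonempty γ] {q : (ℕ → F) → γ} {R : Finset ℕ}
    (hq : DependsOn q R) : Measurable q := by
  obtain ⟨Φ, hΦ, rfl⟩ := exists_measurable_comp_of_dependsOn hq
  exact hΦ.comp (measurable_pi_lambda _ fun i => measurable_pi_apply (i : ℕ))

lemma indepFun_iidLaw_of_dependsOn [Nonempty γ] [Nonempty γ'] (p : ProbabilityMeasure F)
    {f : (ℕ → F) → γ} {g : (ℕ → F) → γ'} {R S : Finset ℕ} (hRS : Disjoint R S)
    (hf : DependsOn f R) (hg : DependsOn g S) :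
    ProbabilityTheory.IndepFun f g (iidLaw p : Measure (ℕ → F)) := by
  obtain ⟨Φ, hΦ, rfl⟩ := exists_measurable_comp_of_dependsOn hf
  obtain ⟨Ψ, hΨ, rfl⟩ := exists_measurable_comp_of_dependsOn hg
  exact ((iIndepFun_iidLaw p).indepFun_finset R S hRS measurable_pi_apply).comp hΦ hΨ

lemma indepFun_map_of_indepFun_comp {Ω X : Type*} [MeasurableSpace Ω] [MeasurableSpace X]
    {P : Measure Ω} {Φ : Ω → X} {f : X → γ} {g : X → γ'} (hΦ : Measurable Φ) (hf : Measurable f)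
    (hg : Measurable g) (h : ProbabilityTheory.IndepFun (f ∘ Φ) (g ∘ Φ) P) :
    ProbabilityTheory.IndepFun f g (P.map Φ) := by
  rw [ProbabilityTheory.indepFun_iff_measure_inter_preimage_eq_mul] at h ⊢
  intro s t hs ht
  rw [Measure.map_apply hΦ ((hf hs).inter (hg ht)), Measure.map_apply hΦ (hf hs),
    Measure.map_apply hΦ (hg ht)]
  exact h s t hs ht

end IidLaw

section BlockMap

variable {F α : Type}

lemma measurePreserving_shift_iidLaw [MeasurableSpace F] (p : ProbabilityMeasure F) :
    MeasurePreserving shift (iidLaw p : Measure (ℕ → F)) (iidLaw p) := by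
  refine ⟨measurable_shift, ?_⟩
  refine ((iIndepFun_iidLaw p).precomp Nat.succ_injective).map_fun_eq_infinitePi_map
    (fun i => measurable_pi_apply _) |>.trans ?_
  simp only [(measurePreserving_eval_iidLaw p _).map_eq]
  rfl

/-- A map of sequences for which the letter at position `i` of the image is a function of the
letter at position `i / n` of the argument. -/
def IsBlockMap (n : ℕ) (Φ : (ℕ → F) → ℕ → α) : Prop :=
  ∀ i, DependsOn (fun ω => Φ ω i) {i / n}

variable {n : ℕ} {Φ : (ℕ → F) → ℕ → α}

lemma IsBlockMap.dependsOn_restr (hΦ : IsBlockMap n Φ) (hn : 0 < n) (T g : ℕ) :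
    DependsOn (restr (T * n) ∘ (shift^[T * n])^[g] ∘ Φ) (Finset.Ico (g * T) ((g + 1) * T)) := by
  intro ω ω' h
  funext j
  simp only [Function.comp_apply, restr, ← Function.iterate_mul, shift_iterate_apply]
  refine hΦ _ fun i hi => h i ?_
  rw [Set.mem_singleton_iff.1 hi, Finset.mem_coe, Finset.mem_Ico, Nat.le_div_iff_mul_le hn,
    Nat.div_lt_iff_lt_mul hn]
  have := j.2
  constructor <;> nlinarith

variable [MeasurableSpace F] [MeasurableSingletonClass F] [Finite F] [MeasurableSpace α]
  [Nonempty α]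

lemma IsBlockMap.measurable (hΦ : IsBlockMap n Φ) : Measurable Φ :=
  measurable_pi_lambda _ fun i => measurable_of_dependsOn (R := {i / n}) (by simpa using hΦ i)

lemma isBlockIID_map_iidLaw (p : ProbabilityMeasure F) (hn : 0 < n) (hΦ : IsBlockMap n Φ)
    {T : ℕ} (hshift : ∀ ω, Φ (shift^[T] ω) = shift^[T * n] (Φ ω)) :
    IsBlockIID ((iidLaw p : Measure (ℕ → F)).map Φ) (T * n) := by
  have hm := hΦ.measurable
  refine ⟨⟨measurable_shift.iterate _, ?_⟩, fun g g' hg => ?_⟩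
  · rw [Measure.map_map (measurable_shift.iterate _) hm,
      show shift^[T * n] ∘ Φ = Φ ∘ shift^[T] from funext fun ω => (hshift ω).symm,
      ← Measure.map_map hm (measurable_shift.iterate _),
      ((measurePreserving_shift_iidLaw p).iterate T).map_eq]
  · have hmeas (g : ℕ) : Measurable (restr (α := α) (T * n) ∘ (shift^[T * n])^[g]) :=
      (measurable_restr _).comp ((measurable_shift.iterate _).iterate g)
    refine indepFun_map_of_indepFun_comp hm (hmeas g) (hmeas g') ?_
    refine indepFun_iidLaw_of_dependsOn p ?_ (hΦ.dependsOn_restr hn T g)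
      (hΦ.dependsOn_restr hn T g')
    rw [Finset.disjoint_left]
    intro i hi hi'
    rw [Finset.mem_Ico] at hi hi'
    rcases lt_or_gt_of_ne hg with hlt | hlt
    · have : (g + 1) * T ≤ g' * T := Nat.mul_le_mul_right T hlt
      omega
    · have : (g' + 1) * T ≤ g * T := Nat.mul_le_mul_right T hlt
      omega

end BlockMap

/-! ### Random points of the hierarchical shift -/

section HierMeasure

variable {k : ℕ} (ψ : (Fin (blen k) → Bool) → Fin (blen k) → Bool)
  (p : ProbabilityMeasure (Fin (blen k) → Bool))

lemma unblock_shift_iterate {α : Type} {n : ℕ} [NeZero n] (ω : ℕ → Fin n → α) (T : ℕ) :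
    unblock n (shift^[T] ω) = fun i => unblock n ω (T * n + i) := by
  funext i
  have hdiv : (T * n + i) / n = T + i / n := by
    rw [Nat.add_comm, Nat.add_mul_div_right _ _ (NeZero.pos n), Nat.add_comm]
  have hmod : Fin.ofNat n (T * n + i) = Fin.ofNat n i := by
    ext
    rw [Fin.val_ofNat, Fin.val_ofNat, Nat.mul_add_mod_self_right]
  rw [unblock, unblock, shift_iterate_apply, hdiv, hmod]

lemma dependsOn_unblock_comp (i : ℕ) :
    DependsOn (fun ω : ℕ → Fin (blen k) → Bool => unblock (blen k) (ψ ∘ ω) i) {i / blen k} :=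
  fun ω ω' h => by
    simp only [unblock, Function.comp_apply, h _ (Set.mem_singleton _)]

lemma isBlockMap_overwrites_unblock (t : ℕ) :
    IsBlockMap (blen k) fun ω => overwrites k t (unblock (blen k) (ψ ∘ ω)) :=
  fun i _ _ h => overwrites_congr (dependsOn_unblock_comp ψ i h)

lemma isBlockMap_hierPoint : IsBlockMap (blen k) (hierPoint ψ) :=
  fun i _ _ h => shadow_congr (dependsOn_unblock_comp ψ i h)

lemma isBlockIID_overwrites_unblock (t : ℕ) :
    IsBlockIID ((iidLaw p : Measure (ℕ → Fin (blen k) → Bool)).map fun ω =>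
      overwrites k t (unblock (blen k) (ψ ∘ ω))) (blen (k + t)) := by
  obtain ⟨T, hT⟩ := blen_dvd_blen (Nat.le_add_right k t)
  rw [mul_comm] at hT
  rw [hT]
  refine isBlockIID_map_iidLaw p (blen_pos k) (isBlockMap_overwrites_unblock ψ t) fun ω => ?_
  have hψ : ψ ∘ shift^[T] ω = shift^[T] (ψ ∘ ω) := funext fun j => by
    simp only [Function.comp_apply, shift_iterate_apply]
  funext i
  rw [hψ, shift_iterate_apply, ← hT, ← overwrites_add_left dvd_rfl, hT, ← unblock_shift_iterate]

/-- The law of the point `hierPoint ψ ω` of the hierarchical shift, for a sequence `ω` of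
independent words with law `p`. -/
noncomputable def hierLaw : ProbabilityMeasure (ℕ → Bool) :=
  (iidLaw p).map (isBlockMap_hierPoint ψ).measurable.aemeasurable

lemma integral_hierLaw {f : (ℕ → Bool) → ℝ}
    (hf : AEStronglyMeasurable f (hierLaw ψ p : Measure (ℕ → Bool))) :
    ∫ x, f x ∂(hierLaw ψ p : Measure (ℕ → Bool)) =
      ∫ ω, f (hierPoint ψ ω) ∂(iidLaw p : Measure (ℕ → Fin (blen k) → Bool)) :=
  integral_map (isBlockMap_hierPoint ψ).measurable.aemeasurable hf

/-- The invariant measure obtained by averaging the shifts of `hierLaw ψ p`. -/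
noncomputable def hierMeasure : ProbabilityMeasure (ℕ → Bool) :=
  averageLimit (hierLaw ψ p)

lemma hierMeasure_mem_Msigma {ψ : (Fin (blen k) → Bool) → Fin (blen k) → Bool}
    (hψ : ∀ v, List.ofFn (ψ v) ∈ blocks k) : hierMeasure ψ p ∈ Msigma hierShift := by
  refine averageLimit_mem_Msigma shiftSpace_hierShift ?_
  refine (ae_map_iff (isBlockMap_hierPoint ψ).measurable.aemeasurable
    isClosed_hierShift.measurableSet).2 (ae_of_all _ (hierPoint_mem_hierShift hψ))

theorem ergodicPM_hierMeasure : ErgodicPM (hierMeasure ψ p) := by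
  refine ergodicPM_averageLimit_map_of_isBlockIID (isBlockMap_hierPoint ψ).measurable fun δ hδ => ?_
  obtain ⟨t, ht⟩ := exists_nat_ge (1 / δ)
  have htN : t ≤ blen (k + t) := (Nat.le_add_left t k).trans blen_strictMono.le_apply
  refine ⟨blen (k + t), ht.trans (Nat.cast_le.2 htN), _,
    (isBlockMap_overwrites_unblock ψ t).measurable, isBlockIID_overwrites_unblock ψ p t,
    fun ω n => (diffs_shadow_overwrites_le k t _ n).trans ?_⟩
  have hpow : (t : ℝ) ≤ 2 ^ (k + t + 9) := by
    exact_mod_cast Nat.lt_two_pow_self.le.trans (Nat.pow_le_pow_right two_pos (by omega))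
  rw [div_le_iff₀ (by positivity), mul_right_comm]
  exact le_mul_of_one_le_left n.cast_nonneg
    ((div_le_iff₀' hδ).1 (ht.trans hpow))

end HierMeasure

/-! ### Uncountably many ergodic measures -/

section CoinMeasure

/-- The law of a constant word of the length of a block of level `0` whose letter is `true` with
probability `θ`. -/
noncomputable def coinLaw (θ : unitInterval) : ProbabilityMeasure (Fin (blen 0) → Bool) :=
  ⟨ProbabilityTheory.bernoulliMeasure (fun _ => true) (fun _ => false) θ, inferInstance⟩

/-- The value of a letter as a real number. -/
def letter (b : Bool) : ℝ := cond b 1 0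

lemma continuous_letter_apply (j : ℕ) : Continuous fun x : ℕ → Bool => letter (x j) :=
  (continuous_of_discreteTopology (f := letter)).comp (continuous_apply j)

open scoped Classical in
lemma integral_letter_hierLaw (θ : unitInterval) (j : ℕ) :
    ∫ x, letter (x j) ∂(hierLaw (k := 0) id (coinLaw θ) : Measure (ℕ → Bool)) =
      if j ∈ overwritten 0 then letter (shadow 0 (fun _ => false) j) else θ := by
  rw [integral_hierLaw _ _ (continuous_letter_apply j).aestronglyMeasurable]
  split_ifs with hj
  · have hconst (ω : ℕ → Fin (blen 0) → Bool) :
        letter (hierPoint id ω j) = letter (shadow 0 (fun _ => false) j) :=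
      congrArg letter (shadow_eq_of_mem_overwritten hj _ _)
    simp only [hconst, integral_const, probReal_univ, one_smul]
  · have hletter (ω : ℕ → Fin (blen 0) → Bool) :
        letter (hierPoint id ω j) = letter (ω (j / blen 0) (Fin.ofNat (blen 0) j)) :=
      congrArg letter (shadow_eq_of_notMem (t := 0) _ hj)
    simp only [hletter]
    rw [integral_comp_of_measurePreserving (measurePreserving_eval_iidLaw (coinLaw θ) (j / blen 0))
      (f := fun v => letter (v (Fin.ofNat (blen 0) j)))
      (Measurable.of_discrete).aestronglyMeasurable]
    refine (ProbabilityTheory.integral_bernoulliMeasure _ _ θ _).trans ?_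
    simp only [letter, cond_true, cond_false, smul_eq_mul, mul_one, mul_zero, add_zero]

open scoped Classical in
lemma half_le_card_filter_notMem_overwritten (k n : ℕ) :
    (n : ℝ) / 2 ≤ ((Finset.range n).filter (· ∉ overwritten k)).card := by
  have hcard := Finset.card_filter_add_card_filter_not (s := Finset.range n) (· ∈ overwritten k)
  rw [Finset.card_range] at hcard
  have hle : (n : ℝ) / 2 ^ (k + 9) ≤ n / 2 := by
    gcongr
    exact le_self_pow₀ one_le_two (by omega)
  have hn := congrArg (Nat.cast (R := ℝ)) hcard
  push_cast at hn
  linarith [card_overwritten_le k n]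

lemma half_sub_le_integral_birkhoffAverage_sub {θ θ' : unitInterval} (h : θ ≤ θ') {S : ℕ}
    (hS : S ≠ 0) :
    ((θ' : ℝ) - θ) / 2 ≤
      ∫ x, birkhoffAverage ℝ shift (fun y => letter (y 0)) S x
          ∂(hierLaw (k := 0) id (coinLaw θ') : Measure (ℕ → Bool)) -
        ∫ x, birkhoffAverage ℝ shift (fun y => letter (y 0)) S x
          ∂(hierLaw (k := 0) id (coinLaw θ) : Measure (ℕ → Bool)) := by
  classical
  have havg (θ : unitInterval) := integral_birkhoffAverage_eq_inv_mul_sum (T := shift)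
    (f := fun y => letter (y 0)) (hierLaw (k := 0) id (coinLaw θ) : Measure (ℕ → Bool)) S
    fun j _ => by
      simpa only [shift_iterate_apply] using integrable_of_continuous (continuous_letter_apply _) _
  have hS' : (0 : ℝ) < S := by positivity
  rw [havg, havg, ← mul_sub, ← Finset.sum_sub_distrib, inv_mul_eq_div, le_div_iff₀ hS']
  calc ((θ' : ℝ) - θ) / 2 * S = S / 2 * (θ' - θ) := by ring
    _ ≤ ((Finset.range S).filter (· ∉ overwritten 0)).card * (θ' - θ) :=
        mul_le_mul_of_nonneg_right (half_le_card_filter_notMem_overwritten 0 S) (sub_nonneg.2 h)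
    _ = ∑ j ∈ Finset.range S, if j ∉ overwritten 0 then (θ' : ℝ) - θ else 0 := by
        rw [← Finset.sum_filter, Finset.sum_const, nsmul_eq_mul]
    _ ≤ _ := Finset.sum_le_sum fun j _ => by
        simp only [shift_iterate_apply, add_zero, integral_letter_hierLaw]
        split_ifs <;> simp_all

lemma strictMono_integral_hierMeasure_coinLaw :
    StrictMono fun θ : unitInterval =>
      ∫ x, letter (x 0) ∂(hierMeasure (k := 0) id (coinLaw θ) : Measure (ℕ → Bool)) := by
  intro θ θ' h
  have hlim (θ : unitInterval) := tendsto_integral_averageLimit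
    (hierLaw (k := 0) id (coinLaw θ)) (continuous_letter_apply 0)
  have hle := ge_of_tendsto ((hlim θ').sub (hlim θ)) (.of_forall fun S =>
    half_sub_le_integral_birkhoffAverage_sub h.le S.succ_ne_zero)
  exact sub_pos.1 ((half_pos (sub_pos.2 (Subtype.coe_lt_coe.2 h))).trans_le hle)

theorem not_countable_ergodic :
    ¬ {μ : ProbabilityMeasure (ℕ → Bool) | μ ∈ Msigma hierShift ∧ ErgodicPM μ}.Countable := by
  have hid (v : Fin (blen 0) → Bool) : List.ofFn (id v) ∈ blocks 0 := by
    simp [mem_blocks_zero, blen_zero]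
  have hinj : Function.Injective fun θ => hierMeasure (k := 0) id (coinLaw θ) := fun _ _ h =>
    strictMono_integral_hierMeasure_coinLaw.injective <| congrArg
      (fun μ : ProbabilityMeasure (ℕ → Bool) => ∫ x, letter (x 0) ∂(μ : Measure (ℕ → Bool))) h
  intro hcount
  have huniv : (Set.univ : Set unitInterval).Countable :=
    (hcount.preimage hinj).mono fun θ _ => And.intro
      (hierMeasure_mem_Msigma (coinLaw θ) hid) (ergodicPM_hierMeasure id (coinLaw θ))
  exact one_pos.not_ge (Cardinal.Real.Icc_countable_iff.1
    (Set.countable_coe_iff.1 (Set.countable_univ_iff.1 huniv)))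

end CoinMeasure

/-! ### Joinings and averaged laws -/

lemma integral_birkhoffAverage_iterate {X : Type*} [MeasurableSpace X] {μ : Measure X} {T : X → X}
    {n : ℕ} (hT : MeasurePreserving T^[n] μ μ) {f : X → ℝ}
    (hf : ∀ j, Integrable (fun x => f (T^[j] x)) μ) (j : ℕ) :
    ∫ x, birkhoffAverage ℝ T f n (T^[j] x) ∂μ = ∫ x, birkhoffAverage ℝ T f n x ∂μ := by
  have hint (j : ℕ) : Integrable (fun x => birkhoffAverage ℝ T f n (T^[j] x)) μ := by
    simp only [birkhoffAverage, birkhoffSum, ← Function.iterate_add_apply]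
    exact (integrable_finsetSum _ fun i _ => hf (i + j)).const_mul (n : ℝ)⁻¹
  induction j with
  | zero => rfl
  | succ j ih =>
    rw [← ih, ← sub_eq_zero, ← integral_sub (hint (j + 1)) (hint j)]
    simp only [Function.iterate_succ_apply', birkhoffAverage_apply_sub_birkhoffAverage]
    simp only [← Function.iterate_add_apply]
    rw [integral_smul, integral_sub (hf (n + j)) (hf j)]
    simp only [add_comm n j, Function.iterate_add_apply T j n]
    rw [integral_comp_of_measurePreserving hT (hf j).aestronglyMeasurable, sub_self, smul_zero]

section AverageLimit

variable {α β : Type} [TopologicalSpace α] [DiscreteTopology α] [Finite α] [MeasurableSpace α]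
  [DiscreteMeasurableSpace α] [TopologicalSpace β] [DiscreteTopology β] [Finite β]
  [MeasurableSpace β] [DiscreteMeasurableSpace β]

lemma integral_averageLimit_of_measurePreserving {Λ : ProbabilityMeasure (ℕ → α)} {n : ℕ}
    (hΛ : MeasurePreserving shift^[n] (Λ : Measure (ℕ → α)) Λ) (hn : n ≠ 0) {f : (ℕ → α) → ℝ}
    (hf : Continuous f) :
    ∫ x, f x ∂(averageLimit Λ : Measure (ℕ → α)) =
      ∫ x, birkhoffAverage ℝ shift f n x ∂(Λ : Measure (ℕ → α)) := by
  have hg := continuous_birkhoffAverage_shift hf n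
  refine (integral_birkhoffAverage ⟨measurable_shift, invariantPM_averageLimit Λ⟩
    (integrable_of_continuous hf _) hn).symm.trans ?_
  refine tendsto_nhds_unique (tendsto_integral_averageLimit Λ hg)
    (tendsto_const_nhds.congr fun S => ?_)
  rw [integral_birkhoffAverage_eq_inv_mul_sum _ _ fun j _ =>
    integrable_of_continuous (hg.comp (continuous_shift.iterate j)) _]
  simp only [integral_birkhoffAverage_iterate hΛ fun j =>
    integrable_of_continuous (hf.comp (continuous_shift.iterate j)) _, Finset.sum_const,
    Finset.card_range, nsmul_eq_mul]
  exact (inv_mul_cancel_left₀ (by positivity) _).symm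

lemma measureReal_averageLimit_restr_preimage {Λ : ProbabilityMeasure (ℕ → α)} {n : ℕ}
    (hΛ : MeasurePreserving shift^[n] (Λ : Measure (ℕ → α)) Λ) (hn : n ≠ 0) {L : ℕ}
    (T : Set (Fin L → α)) :
    (averageLimit Λ : Measure (ℕ → α)).real (restr L ⁻¹' T) =
      (n : ℝ)⁻¹ * ∑ s ∈ Finset.range n,
        (Λ : Measure (ℕ → α)).real ((restr L ∘ shift^[s]) ⁻¹' T) := by
  have hf := continuous_comp_restr (T.indicator (1 : (Fin L → α) → ℝ))
  have hshift (s : ℕ) : Continuous (shift^[s] : (ℕ → α) → ℕ → α) := continuous_shift.iterate s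
  rw [← integral_indicator_one (measurable_restr L .of_discrete)]
  refine (integral_averageLimit_of_measurePreserving hΛ hn hf).trans ?_
  rw [integral_birkhoffAverage_eq_inv_mul_sum _ _ fun s _ =>
    integrable_of_continuous (hf.comp (hshift s)) _]
  refine congrArg _ (Finset.sum_congr rfl fun s _ => ?_)
  exact integral_indicator_one
    (((measurable_restr L).comp (hshift s).measurable) .of_discrete)

lemma map_averageLimit (Λ : ProbabilityMeasure (ℕ → α)) {F : (ℕ → α) → ℕ → β} (hF : Continuous F)
    (hshift : Function.Semiconj F shift shift) :
    (averageLimit Λ : Measure (ℕ → α)).map F = averageLimit (Λ.map hF.aemeasurable) := by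
  have := Measure.isProbabilityMeasure_map (μ := (averageLimit Λ : Measure (ℕ → α)))
    hF.aemeasurable
  refine ext_of_forall_integral_eq_of_IsFiniteMeasure fun f => ?_
  have havg (S : ℕ) (x : ℕ → α) : birkhoffAverage ℝ shift (f ∘ F) S x =
      birkhoffAverage ℝ shift f S (F x) := by
    simp only [birkhoffAverage, birkhoffSum, Function.comp_apply, (hshift.iterate_right _).eq]
  rw [integral_map hF.aemeasurable f.continuous.aestronglyMeasurable]
  refine tendsto_nhds_unique (tendsto_integral_averageLimit Λ (f.continuous.comp hF)) ?_
  refine (tendsto_integral_averageLimit (Λ.map hF.aemeasurable) f.continuous).congr fun S => ?_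
  refine (integral_map hF.aemeasurable (f := birkhoffAverage ℝ shift f (S + 1))
    (continuous_birkhoffAverage_shift f.continuous _).aestronglyMeasurable).trans ?_
  exact integral_congr_ae (ae_of_all _ fun x => (havg _ x).symm)

end AverageLimit

section Joining

variable {α : Type} {Ω : Type*} [MeasurableSpace Ω]

/-- The pair of sequences of the coordinates of a sequence of pairs. -/
def unzip (z : ℕ → α × α) : (ℕ → α) × (ℕ → α) := (Prod.fst ∘ z, Prod.snd ∘ z)

lemma birkhoffAverage_ite_ne [DecidableEq α] (z : ℕ → α × α) (S : ℕ) :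
    birkhoffAverage ℝ shift (fun z : ℕ → α × α => if (z 0).1 ≠ (z 0).2 then 1 else 0) S z =
      (diffs (unzip z).1 (unzip z).2 S : ℝ) / S := by
  simp only [birkhoffAverage, birkhoffSum, shift_iterate_apply, diffs_eq_sum, unzip,
    Function.comp_apply, smul_eq_mul, inv_mul_eq_div, Nat.cast_sum, Nat.cast_ite, Nat.cast_one,
    Nat.cast_zero]
  rfl

variable [MeasurableSpace α]

lemma measurable_unzip : Measurable (unzip (α := α)) := by
  unfold unzip
  fun_prop

variable {ξ : Measure ((ℕ → α) × (ℕ → α))} {μ ν : ProbabilityMeasure (ℕ → α)}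

lemma IsJoining.measurePreserving_shift (h : IsJoining ξ μ ν) :
    MeasurePreserving (Prod.map shift shift) ξ ξ :=
  ⟨measurable_shift.prodMap measurable_shift, h.1⟩

lemma IsJoining.measurePreserving_fst (h : IsJoining ξ μ ν) : MeasurePreserving Prod.fst ξ μ :=
  ⟨measurable_fst, h.2.1⟩

lemma IsJoining.measurePreserving_snd (h : IsJoining ξ μ ν) : MeasurePreserving Prod.snd ξ ν :=
  ⟨measurable_snd, h.2.2⟩

lemma IsJoining.isProbabilityMeasure (h : IsJoining ξ μ ν) : IsProbabilityMeasure ξ :=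
  ⟨(h.measurePreserving_fst.measure_preimage .univ).trans measure_univ⟩

variable [Finite α] [DiscreteMeasurableSpace α]

lemma measurableSet_apply_ne (j : ℕ) :
    MeasurableSet {p : (ℕ → α) × (ℕ → α) | p.1 j ≠ p.2 j} :=
  (MeasurableSet.of_discrete (s := {a : α × α | a.1 ≠ a.2})).preimage
    (f := fun p : (ℕ → α) × (ℕ → α) => (p.1 j, p.2 j)) (by fun_prop)

lemma measurable_diffs [DecidableEq α] (S : ℕ) :
    Measurable fun p : (ℕ → α) × (ℕ → α) => diffs p.1 p.2 S := by
  simp only [diffs_eq_sum]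
  exact Finset.measurable_fun_sum _ fun j _ =>
    Measurable.ite (measurableSet_apply_ne j) measurable_const measurable_const

lemma IsJoining.measureReal_apply_ne (h : IsJoining ξ μ ν) (j : ℕ) :
    ξ.real {p | p.1 j ≠ p.2 j} = ξ.real {p | p.1 0 ≠ p.2 0} := by
  have hpre := (h.measurePreserving_shift.iterate j).measureReal_preimage
    (measurableSet_apply_ne 0).nullMeasurableSet
  simpa only [Set.preimage_ofPred_eq, Prod.map_iterate, Prod.map_fst, Prod.map_snd,
    shift_iterate_apply, add_zero] using hpre

lemma IsJoining.integral_diffs [DecidableEq α] (h : IsJoining ξ μ ν) (n : ℕ) :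
    ∫ p, (diffs p.1 p.2 n : ℝ) ∂ξ = n * ξ.real {p | p.1 0 ≠ p.2 0} := by
  have := h.isProbabilityMeasure
  have hind (p : (ℕ → α) × (ℕ → α)) (j : ℕ) : ((if p.1 j ≠ p.2 j then 1 else 0 : ℕ) : ℝ) =
      {p : (ℕ → α) × (ℕ → α) | p.1 j ≠ p.2 j}.indicator 1 p := by
    simp [Set.indicator_apply]
  simp only [diffs_eq_sum, Nat.cast_sum, hind]
  rw [integral_finsetSum _ fun j _ => (integrable_const 1).indicator (measurableSet_apply_ne j)]
  simp only [integral_indicator_one (measurableSet_apply_ne _), h.measureReal_apply_ne,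
    Finset.sum_const, Finset.card_range, nsmul_eq_mul]

variable [TopologicalSpace α] [DiscreteTopology α]

lemma measureReal_averageLimit_ne_le [DecidableEq α] {Λ : ProbabilityMeasure (ℕ → α × α)} {δ : ℝ}
    (h : ∀ᶠ S : ℕ in atTop, ∀ᵐ z ∂(Λ : Measure (ℕ → α × α)),
      (diffs (unzip z).1 (unzip z).2 S : ℝ) ≤ δ * S) :
    (averageLimit Λ : Measure (ℕ → α × α)).real {z | (z 0).1 ≠ (z 0).2} ≤ δ := by
  have hcont : Continuous fun z : ℕ → α × α => if (z 0).1 ≠ (z 0).2 then (1 : ℝ) else 0 :=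
    (continuous_of_discreteTopology (f := fun a : α × α => if a.1 ≠ a.2 then (1 : ℝ) else 0)).comp
      (continuous_apply 0)
  have hmeas : MeasurableSet {z : ℕ → α × α | (z 0).1 ≠ (z 0).2} :=
    (measurableSet_apply_ne 0).preimage measurable_unzip
  refine le_of_eq_of_le ?_ (integral_averageLimit_le (Λ := Λ) hcont (c := δ) ?_)
  · rw [← integral_indicator_one hmeas]
    simp only [Set.indicator_apply, Set.mem_ofPred_eq, Pi.one_apply]
  · filter_upwards [h, eventually_gt_atTop 0] with S hS hS0
    refine (integral_mono_ae (integrable_of_continuous (continuous_birkhoffAverage_shift hcont S) _)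
      (integrable_const δ) ?_).trans_eq (by rw [integral_const, probReal_univ, one_smul])
    filter_upwards [hS] with z hz
    rw [birkhoffAverage_ite_ne]
    exact (div_le_iff₀ (Nat.cast_pos.2 hS0)).2 hz

theorem exists_isJoining_averageLimit [DecidableEq α] {P : ProbabilityMeasure Ω}
    {U V : Ω → ℕ → α} (hU : Measurable U) (hV : Measurable V) {δ : ℝ}
    (h : ∀ᶠ S : ℕ in atTop, ∀ᵐ ω ∂(P : Measure Ω), (diffs (U ω) (V ω) S : ℝ) ≤ δ * S) :
    ∃ ξ, IsJoining ξ (averageLimit (P.map hU.aemeasurable)) (averageLimit (P.map hV.aemeasurable)) ∧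
      ξ.real {p | p.1 0 ≠ p.2 0} ≤ δ := by
  have hUV : Measurable fun ω i => (U ω i, V ω i) := by fun_prop
  set Λ := P.map hUV.aemeasurable
  refine ⟨(averageLimit Λ : Measure (ℕ → α × α)).map unzip, ⟨?_, ?_, ?_⟩, ?_⟩
  · rw [Measure.map_map (measurable_shift.prodMap measurable_shift) measurable_unzip]
    conv_rhs => rw [← invariantPM_averageLimit Λ, Measure.map_map measurable_unzip measurable_shift]
    rfl
  · rw [Measure.map_map measurable_fst measurable_unzip]
    refine (map_averageLimit Λ (F := fun z => Prod.fst ∘ z) (by fun_prop) fun _ => rfl).trans ?_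
    congr 2
    exact Subtype.ext (Measure.map_map (by fun_prop) hUV)
  · rw [Measure.map_map measurable_snd measurable_unzip]
    refine (map_averageLimit Λ (F := fun z => Prod.snd ∘ z) (by fun_prop) fun _ => rfl).trans ?_
    congr 2
    exact Subtype.ext (Measure.map_map (by fun_prop) hUV)
  · rw [map_measureReal_apply measurable_unzip (measurableSet_apply_ne 0)]
    refine measureReal_averageLimit_ne_le (h.mono fun S hS => ?_)
    refine (ae_map_iff hUV.aemeasurable (measurableSet_le ?_ measurable_const)).2 hS
    exact measurable_from_top.comp ((measurable_diffs S).comp measurable_unzip)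

lemma IsJoining.abs_integral_sub_le [DecidableEq α] (h : IsJoining ξ μ ν) {C : ℝ} {l : ℕ}
    {f : (ℕ → α) → ℝ} (hfc : Continuous f) (hf : HammingLipschitz C l f) :
    |∫ x, f x ∂(μ : Measure (ℕ → α)) - ∫ x, f x ∂(ν : Measure (ℕ → α))| ≤
      C * l * ξ.real {p | p.1 0 ≠ p.2 0} := by
  have := h.isProbabilityMeasure
  have hi (ρ : ProbabilityMeasure (ℕ → α)) : Integrable f (ρ : Measure (ℕ → α)) :=
    integrable_of_continuous hfc _
  have hdiffs : Integrable (fun p : (ℕ → α) × (ℕ → α) => (diffs p.1 p.2 l : ℝ)) ξ :=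
    .of_bound (measurable_from_top.comp (measurable_diffs l)).aestronglyMeasurable l
      (ae_of_all _ fun p => by simpa using diffs_le p.1 p.2 l)
  rw [← integral_comp_of_measurePreserving h.measurePreserving_fst (hi μ).aestronglyMeasurable,
    ← integral_comp_of_measurePreserving h.measurePreserving_snd (hi ν).aestronglyMeasurable,
    mul_assoc, ← h.integral_diffs, ← integral_const_mul, ← integral_sub
      (by exact h.measurePreserving_fst.integrable_comp_of_integrable (hi μ))
      (by exact h.measurePreserving_snd.integrable_comp_of_integrable (hi ν))]
  exact abs_integral_le_integral_abs.trans (integral_mono_of_nonneg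
    (ae_of_all _ fun _ => abs_nonneg _) (hdiffs.const_mul C) (ae_of_all _ fun p => hf _ _))

end Joining

/-! ### Approximation of invariant measures -/

section WordLaw

variable {α : Type} [MeasurableSpace α]

/-- The law of the first `n` letters. -/
noncomputable def wordLaw (μ : ProbabilityMeasure (ℕ → α)) (n : ℕ) :
    ProbabilityMeasure (Fin n → α) :=
  μ.map (measurable_restr n).aemeasurable

lemma measurePreserving_restr (μ : ProbabilityMeasure (ℕ → α)) (n : ℕ) :
    MeasurePreserving (restr n) (μ : Measure (ℕ → α)) (wordLaw μ n) :=
  ⟨measurable_restr n, rfl⟩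

lemma ae_wordLaw_mem_lang [Finite α] [TopologicalSpace α] [DiscreteTopology α]
    [DiscreteMeasurableSpace α] {X : Set (ℕ → α)} {μ : ProbabilityMeasure (ℕ → α)}
    (hX : IsClosed X) (hμ : μ ∈ Msigma X) (n : ℕ) :
    ∀ᵐ v ∂(wordLaw μ n : Measure (Fin n → α)), List.ofFn v ∈ lang X := by
  have hXμ : (μ : Measure (ℕ → α)) X = 1 := by
    rw [← ProbabilityMeasure.ennreal_coeFn_eq_coeFn_toMeasure, hμ.2, ENNReal.coe_one]
  refine (ae_map_iff (measurable_restr n).aemeasurable MeasurableSet.of_discrete).2 ?_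
  filter_upwards [(mem_ae_iff_prob_eq_one hX.measurableSet).2 hXμ] with x hx
  simpa only [← ofFn_restr_shift_iterate, Function.iterate_zero, id] using wordAt_mem_lang hx 0 n

end WordLaw

section BlockMeasure

variable {α : Type}

lemma isBlockMap_unblock (n : ℕ) [NeZero n] :
    IsBlockMap n (unblock n : (ℕ → Fin n → α) → ℕ → α) :=
  fun i ω ω' h => by simp only [unblock, h _ (Set.mem_singleton _)]

variable [Finite α] [MeasurableSpace α] [DiscreteMeasurableSpace α]

/-- The law of a concatenation of independent words of length `n`, each distributed as the first
`n` letters under `μ`. -/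
noncomputable def blockLaw [Nonempty α] (μ : ProbabilityMeasure (ℕ → α)) (n : ℕ) [NeZero n] :
    ProbabilityMeasure (ℕ → α) :=
  (iidLaw (wordLaw μ n)).map (isBlockMap_unblock n).measurable.aemeasurable

lemma measurePreserving_shift_iterate_blockLaw [Nonempty α] (μ : ProbabilityMeasure (ℕ → α)) (n : ℕ)
    [NeZero n] :
    MeasurePreserving shift^[n] (blockLaw μ n : Measure (ℕ → α)) (blockLaw μ n) := by
  have h := isBlockIID_map_iidLaw (wordLaw μ n) (NeZero.pos n) (isBlockMap_unblock n) (T := 1)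
    fun ω => by
      rw [unblock_shift_iterate]
      exact funext fun i => by rw [shift_iterate_apply, add_comm]
  rw [one_mul] at h
  exact h.measurePreserving

lemma measurePreserving_restr_blockLaw [Nonempty α] (μ : ProbabilityMeasure (ℕ → α)) (n : ℕ)
    [NeZero n] :
    MeasurePreserving (restr n) (blockLaw μ n : Measure (ℕ → α)) (wordLaw μ n) := by
  refine ⟨measurable_restr n, ?_⟩
  refine (Measure.map_map (measurable_restr n) (isBlockMap_unblock n).measurable).trans ?_
  have hrestr : restr n ∘ unblock n = fun ω : ℕ → Fin n → α => ω 0 :=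
    funext fun ω => by simpa using restr_shift_unblock ω 0
  rw [hrestr, (measurePreserving_eval_iidLaw _ 0).map_eq]

variable [TopologicalSpace α] [DiscreteTopology α]

/-- The invariant measure obtained by averaging the shifts of `blockLaw μ n`. -/
noncomputable def blockMeasure [Nonempty α] (μ : ProbabilityMeasure (ℕ → α)) (n : ℕ) [NeZero n] :
    ProbabilityMeasure (ℕ → α) :=
  averageLimit (blockLaw μ n)

lemma abs_integral_blockMeasure_sub_le [DecidableEq α] [Inhabited α]
    {μ : ProbabilityMeasure (ℕ → α)} (hμ : invariantPM μ) (n : ℕ) [NeZero n] {C : ℝ} {l : ℕ}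
    {f : (ℕ → α) → ℝ} (hC : 0 ≤ C) (hfc : Continuous f) (hf : HammingLipschitz C l f) :
    |∫ x, f x ∂(blockMeasure μ n : Measure (ℕ → α)) - ∫ x, f x ∂(μ : Measure (ℕ → α))| ≤
      2 * (C * l ^ 2 / n) := by
  have hn : n ≠ 0 := NeZero.ne n
  have hword : Integrable (fun v => birkhoffAverage ℝ shift f n (extend v))
    (wordLaw μ n : Measure (Fin n → α)) := .of_finite
  have hmid (ρ : ProbabilityMeasure (ℕ → α))
      (hρ : MeasurePreserving (restr n) (ρ : Measure (ℕ → α)) (wordLaw μ n)) :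
      |∫ x, birkhoffAverage ℝ shift f n x ∂(ρ : Measure (ℕ → α)) -
        ∫ v, birkhoffAverage ℝ shift f n (extend v) ∂(wordLaw μ n : Measure (Fin n → α))| ≤
      C * l ^ 2 / n := by
    rw [← integral_comp_of_measurePreserving hρ (Measurable.of_discrete).aestronglyMeasurable,
      ← integral_sub (integrable_of_continuous (continuous_birkhoffAverage_shift hfc n) _)
        (by exact hρ.integrable_comp_of_integrable hword)]
    have hbound := norm_integral_le_of_norm_le_const (μ := (ρ : Measure (ℕ → α)))
      (ae_of_all _ fun x => (Real.norm_eq_abs _).trans_le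
        (hf.abs_birkhoffAverage_sub_extend_le hC n x))
    rwa [probReal_univ, mul_one] at hbound
  rw [blockMeasure, integral_averageLimit_of_measurePreserving
    (measurePreserving_shift_iterate_blockLaw μ n) hn hfc,
    ← integral_birkhoffAverage ⟨measurable_shift, hμ⟩ (integrable_of_continuous hfc _) hn, two_mul]
  exact (abs_sub_le _ _ _).trans (add_le_add (hmid _ (measurePreserving_restr_blockLaw μ n))
    ((abs_sub_comm _ _).trans_le (hmid μ (measurePreserving_restr μ n))))

end BlockMeasure

section HierMeasure

lemma tendsto_of_forall_tendsto_integral_comp_restr {α : Type} [TopologicalSpace α]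
    [DiscreteTopology α] [Finite α] [MeasurableSpace α] [DiscreteMeasurableSpace α]
    {ν : ℕ → ProbabilityMeasure (ℕ → α)} {μ : ProbabilityMeasure (ℕ → α)}
    (h : ∀ (m : ℕ) (φ : (Fin m → α) → ℝ), (∀ v, |φ v| ≤ 1) →
      Tendsto (fun k => ∫ x, φ (restr m x) ∂(ν k : Measure (ℕ → α))) atTop
        (𝓝 (∫ x, φ (restr m x) ∂(μ : Measure (ℕ → α))))) :
    Tendsto ν atTop (𝓝 μ) := by
  rw [tendsto_iff_ultrafilter]
  intro g hg
  suffices ((g.map ν).lim : Measure (ℕ → α)) = μ by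
    rw [← show (g.map ν).lim = μ from Subtype.ext this]
    exact Ultrafilter.le_nhds_lim (g.map ν)
  refine ext_of_generate_finite _ generateFrom_measurableCylinders.symm
    isPiSystem_measurableCylinders (fun C hC => ?_) (by simp only [measure_univ])
  obtain ⟨m, T, rfl⟩ := exists_eq_restr_preimage hC
  have hreal (ρ : ProbabilityMeasure (ℕ → α)) : ∫ x, (T.indicator 1 : (Fin m → α) → ℝ) (restr m x)
      ∂(ρ : Measure (ℕ → α)) = (ρ : Measure (ℕ → α)).real (restr m ⁻¹' T) :=
    integral_indicator_one (measurable_restr m .of_discrete)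
  have hlim := ProbabilityMeasure.tendsto_iff_forall_integral_tendsto.1
    (Ultrafilter.le_nhds_lim (g.map ν) : Tendsto ν g _)
    (BoundedContinuousFunction.mkOfCompact
      ⟨_, continuous_comp_restr (T.indicator (1 : (Fin m → α) → ℝ))⟩)
  have heq := tendsto_nhds_unique hlim ((h m (T.indicator 1) fun v => by
    by_cases hv : v ∈ T <;> simp [hv]).mono_left hg)
  exact (measureReal_eq_measureReal_iff (measure_ne_top _ _) (measure_ne_top _ _)).1
    ((hreal _).symm.trans (heq.trans (hreal μ)))

variable {μ : ProbabilityMeasure (ℕ → Bool)}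

theorem exists_isJoining_hierMeasure (hμ : μ ∈ Msigma hierShift) (k : ℕ) :
    ∃ ξ, IsJoining ξ (hierMeasure (blockCode k) (wordLaw μ (blen (k + 1))))
        (blockMeasure μ (blen (k + 1))) ∧
      ξ.real {p | p.1 0 ≠ p.2 0} ≤ 2 / 2 ^ (k + 6) := by
  classical
  refine exists_isJoining_averageLimit (isBlockMap_hierPoint _).measurable
    (isBlockMap_unblock _).measurable ?_
  have hlang : ∀ᵐ ω ∂(iidLaw (wordLaw μ (blen (k + 1))) : Measure (ℕ → Fin (blen (k + 1)) → Bool)),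
      ∀ g, List.ofFn (ω g) ∈ lang hierShift :=
    ae_all_iff.2 fun g => (measurePreserving_eval_iidLaw _ g).quasiMeasurePreserving.ae
      (ae_wordLaw_mem_lang isClosed_hierShift hμ _)
  filter_upwards [eventually_ge_atTop (blen (k + 1))] with S hS
  filter_upwards [hlang] with ω hω
  refine (diffs_hierPoint_blockCode_le k ω S).trans ?_
  simp only [hω, not_true_eq_false, Finset.filter_false, Finset.card_empty, Nat.cast_zero, mul_zero,
    add_zero]
  rw [div_mul_eq_mul_div, two_mul]
  gcongr

theorem tendsto_hierMeasure (hμ : μ ∈ Msigma hierShift) :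
    Tendsto (fun k => hierMeasure (blockCode k) (wordLaw μ (blen (k + 1)))) atTop (𝓝 μ) := by
  refine tendsto_of_forall_tendsto_integral_comp_restr fun m φ hφ => ?_
  rw [tendsto_iff_dist_tendsto_zero]
  have hf := hammingLipschitz_comp_restr hφ
  have hfc := continuous_comp_restr φ
  have hpow : Tendsto (fun k : ℕ => 2 * (m : ℝ) * (2 / 2 ^ (k + 6))) atTop (𝓝 0) := by
    simpa only [mul_zero] using (tendsto_const_div_two_pow 2 6).const_mul (2 * (m : ℝ))
  have hblen : Tendsto (fun k : ℕ => 2 * (2 * (m : ℝ) ^ 2 / blen (k + 1))) atTop (𝓝 0) := by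
    have hlim := (tendsto_const_div_atTop_nhds_zero_nat (2 * (m : ℝ) ^ 2)).comp
      (blen_strictMono.tendsto_atTop.comp (tendsto_add_atTop_nat 1))
    simpa only [mul_zero, Function.comp_apply] using hlim.const_mul (2 : ℝ)
  refine squeeze_zero (fun _ => dist_nonneg) (fun k => ?_) (by simpa using hpow.add hblen)
  obtain ⟨ξ, hξ, hξ'⟩ := exists_isJoining_hierMeasure hμ k
  refine (abs_sub_le _ _ _).trans (add_le_add ((hξ.abs_integral_sub_le hfc hf).trans ?_)
    (abs_integral_blockMeasure_sub_le hμ.1 (blen (k + 1)) zero_le_two hfc hf))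
  gcongr

end HierMeasure

/-! ### Shannon entropy -/

section Gibbs

lemma negMulLog_le_neg_mul_log_add {r t : ℝ} (hr : 0 ≤ r) (ht : 0 ≤ t) (h : t = 0 → r = 0) :
    Real.negMulLog r ≤ -(r * Real.log t) + (t - r) := by
  rcases ht.eq_or_lt with rfl | ht
  · simp [h rfl]
  have hle := mul_le_mul_of_nonneg_left (Real.negMulLog_le_one_sub_self (div_nonneg hr ht.le)) ht.le
  have hmul := Real.negMulLog_mul t (r / t)
  rw [mul_div_cancel₀ r ht.ne'] at hmul
  rw [mul_sub, mul_one, mul_div_cancel₀ r ht.ne'] at hle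
  have hlog : r / t * Real.negMulLog t = -(r * Real.log t) := by
    rw [Real.negMulLog]
    field_simp
  linarith

lemma sum_negMulLog_le_neg_sum_mul_log {ι : Type*} {s : Finset ι} {r t : ι → ℝ}
    (hr : ∀ i ∈ s, 0 ≤ r i) (ht : ∀ i ∈ s, 0 ≤ t i) (hrt : ∀ i ∈ s, t i = 0 → r i = 0)
    (hsum : ∑ i ∈ s, t i ≤ ∑ i ∈ s, r i) :
    ∑ i ∈ s, Real.negMulLog (r i) ≤ -∑ i ∈ s, r i * Real.log (t i) := by
  have h := Finset.sum_le_sum fun i hi =>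
    negMulLog_le_neg_mul_log_add (hr i hi) (ht i hi) (hrt i hi)
  rw [Finset.sum_add_distrib, Finset.sum_neg_distrib, Finset.sum_sub_distrib] at h
  linarith

lemma sum_negMulLog_prod {F : Type*} [Fintype F] {n : ℕ} {p : Fin n → F → ℝ}
    (hp : ∀ j, ∑ a, p j a = 1) :
    ∑ w : Fin n → F, Real.negMulLog (∏ j, p j (w j)) = ∑ j, ∑ a, Real.negMulLog (p j a) := by
  induction n with
  | zero => simp
  | succ n ih =>
    have hprod : ∑ w : Fin n → F, ∏ j, p j.succ (w j) = 1 := by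
      classical
      simp only [← Fintype.piFinset_univ, ← Finset.prod_univ_sum, hp, Finset.prod_const_one]
    rw [← (Fin.consEquiv fun _ => F).sum_comp, Fintype.sum_prod_type, Fin.sum_univ_succ]
    simp only [Fin.consEquiv_apply, Fin.prod_univ_succ, Fin.cons_zero, Fin.cons_succ,
      Real.negMulLog_mul, Finset.sum_add_distrib]
    simp only [← Finset.sum_mul, ← Finset.mul_sum, hprod, hp, ih fun j => hp j.succ, one_mul]

end Gibbs

section Entropy

variable {Ω Ω' F G : Type*} [MeasurableSpace Ω] [MeasurableSpace Ω'] [Fintype F] [Fintype G]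
  {P : Measure Ω} {Q : Measure Ω'}

/-- The Shannon entropy of a finite-valued random variable. -/
noncomputable def entropy (P : Measure Ω) (f : Ω → F) : ℝ :=
  ∑ a, Real.negMulLog (P.real (f ⁻¹' {a}))

lemma entropy_nonneg [IsProbabilityMeasure P] (f : Ω → F) : 0 ≤ entropy P f :=
  Finset.sum_nonneg fun _ _ => Real.negMulLog_nonneg measureReal_nonneg measureReal_le_one

variable [MeasurableSpace F] [DiscreteMeasurableSpace F]

lemma entropy_comp_of_measurePreserving {T : Ω → Ω'} (hT : MeasurePreserving T P Q) {f : Ω' → F}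
    (hf : Measurable f) : entropy P (f ∘ T) = entropy Q f := by
  simp only [entropy, Set.preimage_comp,
    hT.measureReal_preimage (hf (measurableSet_singleton _)).nullMeasurableSet]

lemma sum_measureReal_preimage_singleton_eq_one [IsProbabilityMeasure P] {f : Ω → F}
    (hf : Measurable f) : ∑ a, P.real (f ⁻¹' {a}) = 1 := by
  rw [sum_measureReal_preimage_singleton _ fun a _ => hf (measurableSet_singleton a),
    Finset.coe_univ, Set.preimage_univ, probReal_univ]

lemma entropy_comp_eq [IsFiniteMeasure P] {f : Ω → F} (hf : Measurable f) (h : F → G) :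
    entropy P (h ∘ f) =
      -∑ a, P.real (f ⁻¹' {a}) * Real.log (P.real ((h ∘ f) ⁻¹' {h a})) := by
  classical
  rw [entropy, ← Finset.sum_fiberwise Finset.univ h, ← Finset.sum_neg_distrib]
  refine Finset.sum_congr rfl fun b _ => ?_
  have hfiber : P.real ((h ∘ f) ⁻¹' {b}) = ∑ a with h a = b, P.real (f ⁻¹' {a}) := by
    rw [sum_measureReal_preimage_singleton _ fun a _ => hf (measurableSet_singleton a)]
    congr 1
    ext ω
    simp
  rw [Finset.sum_congr rfl fun a ha => by rw [(Finset.mem_filter.1 ha).2], ← Finset.sum_mul,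
    ← hfiber, Real.negMulLog, neg_mul]

lemma entropy_comp_le [IsFiniteMeasure P] {f : Ω → F} (hf : Measurable f) (h : F → G) :
    entropy P (h ∘ f) ≤ entropy P f := by
  rw [entropy_comp_eq hf, ← Finset.sum_neg_distrib]
  refine Finset.sum_le_sum fun a _ => ?_
  rw [Real.negMulLog, neg_mul, neg_le_neg_iff]
  rcases (measureReal_nonneg (μ := P) (s := f ⁻¹' {a})).eq_or_lt with h0 | hpos
  · simp [← h0]
  · refine mul_le_mul_of_nonneg_left (Real.log_le_log hpos (measureReal_mono ?_)) hpos.le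
    rintro ω rfl
    rfl

variable [MeasurableSpace G] [DiscreteMeasurableSpace G]

lemma entropy_prodMk_le [IsProbabilityMeasure P] {f : Ω → F} {g : Ω → G} (hf : Measurable f)
    (hg : Measurable g) : entropy P (fun ω => (f ω, g ω)) ≤ entropy P f + entropy P g := by
  set r : F × G → ℝ := fun c => P.real ((fun ω => (f ω, g ω)) ⁻¹' {c})
  have hfg : Measurable fun ω => (f ω, g ω) := hf.prodMk hg
  have hrf (c) : r c ≤ P.real (f ⁻¹' {c.1}) := measureReal_mono fun ω hω => congrArg Prod.fst hω
  have hrg (c) : r c ≤ P.real (g ⁻¹' {c.2}) := measureReal_mono fun ω hω => congrArg Prod.snd hω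
  have hr0 (c) : 0 ≤ r c := measureReal_nonneg
  have hgibbs := sum_negMulLog_le_neg_sum_mul_log (s := Finset.univ) (r := r)
    (t := fun c => P.real (f ⁻¹' {c.1}) * P.real (g ⁻¹' {c.2})) (fun c _ => hr0 c)
    (fun _ _ => by positivity) (fun c _ h => (hr0 c).antisymm' ?_) ?_
  · refine hgibbs.trans_eq ?_
    rw [show entropy P f = _ from entropy_comp_eq hfg Prod.fst,
      show entropy P g = _ from entropy_comp_eq hfg Prod.snd, ← neg_add, ← Finset.sum_add_distrib]
    refine congrArg Neg.neg (Finset.sum_congr rfl fun c _ => ?_)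
    rw [← mul_add]
    rcases (hr0 c).eq_or_lt with h0 | hpos
    · rw [show P.real ((fun ω => (f ω, g ω)) ⁻¹' {c}) = 0 from h0.symm, ← h0, zero_mul, zero_mul]
    · rw [Real.log_mul (hpos.trans_le (hrf c)).ne' (hpos.trans_le (hrg c)).ne']
      rfl
  · exact (mul_eq_zero.1 h).elim (fun h => h ▸ hrf c) fun h => h ▸ hrg c
  · simp only [Fintype.sum_prod_type (fun _ : F × G => P.real _ * P.real _)]
    rw [← Finset.sum_mul_sum,
      sum_measureReal_preimage_singleton_eq_one hf, sum_measureReal_preimage_singleton_eq_one hg,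
      sum_measureReal_preimage_singleton_eq_one hfg, one_mul]

lemma entropy_pi_le [IsProbabilityMeasure P] {n : ℕ} {f : Fin n → Ω → F}
    (hf : ∀ j, Measurable (f j)) : entropy P (fun ω j => f j ω) ≤ ∑ j, entropy P (f j) := by
  induction n with
  | zero =>
    have h := sum_measureReal_preimage_singleton_eq_one (P := P) (measurable_pi_lambda _ hf)
    rw [Fintype.sum_unique] at h
    rw [entropy, Fintype.sum_unique, h, Real.negMulLog_one, Fin.sum_univ_zero]
  | succ n ih =>
    have htail : Measurable fun ω (j : Fin n) => f j.succ ω :=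
      measurable_pi_lambda _ fun j => hf j.succ
    have hcons : (fun ω j => f j ω) = (Fin.consEquiv fun _ => F) ∘
        fun ω => (f 0 ω, fun j : Fin n => f j.succ ω) :=
      funext fun ω => (Fin.cons_self_tail fun j => f j ω).symm
    rw [hcons, Fin.sum_univ_succ]
    refine (entropy_comp_le ((hf 0).prodMk htail) _).trans
      ((entropy_prodMk_le (hf 0) htail).trans ?_)
    gcongr
    exact ih fun j => hf j.succ

lemma entropy_pi_of_iIndepFun [IsProbabilityMeasure P] {n : ℕ} {f : Fin n → Ω → F}
    (hf : ∀ j, Measurable (f j)) (hind : ProbabilityTheory.iIndepFun f P) :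
    entropy P (fun ω j => f j ω) = ∑ j, entropy P (f j) := by
  simp only [entropy]
  rw [← sum_negMulLog_prod fun j => sum_measureReal_preimage_singleton_eq_one (hf j)]
  refine Finset.sum_congr rfl fun w _ => congrArg Real.negMulLog ?_
  have hinter : (fun ω j => f j ω) ⁻¹' {w} = ⋂ j ∈ Finset.univ, f j ⁻¹' {w j} := by
    ext ω
    simp [funext_iff]
  rw [hinter, measureReal_def, hind.measure_inter_preimage_eq_mul Finset.univ
    fun j _ => measurableSet_singleton (w j), ENNReal.toReal_prod]
  rfl

lemma entropy_eq_binEntropy [IsProbabilityMeasure P] {f : Ω → Bool} (hf : Measurable f) :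
    entropy P f = Real.binEntropy (P.real (f ⁻¹' {true})) := by
  have h := sum_measureReal_preimage_singleton_eq_one (P := P) hf
  rw [Fintype.sum_bool] at h
  rw [entropy, Fintype.sum_bool, Real.binEntropy_eq_negMulLog_add_negMulLog_one_sub,
    ← eq_sub_of_add_eq' h]

lemma entropy_le_add_sum_binEntropy [IsProbabilityMeasure P] {n : ℕ} {f g : Ω → Fin n → Bool}
    (hf : Measurable f) (hg : Measurable g) :
    entropy P f ≤ entropy P g + ∑ j, Real.binEntropy (P.real {ω | f ω j ≠ g ω j}) := by
  set d : Fin n → Ω → Bool := fun j ω => f ω j ^^ g ω j with hd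
  have hdm (j) : Measurable (d j) :=
    (Measurable.of_discrete (f := fun c : (Fin n → Bool) × (Fin n → Bool) => c.1 j ^^ c.2 j)).comp
      (hf.prodMk hg)
  have hfd : f = (fun c : (Fin n → Bool) × (Fin n → Bool) => fun j => c.2 j ^^ c.1 j) ∘
      fun ω => (g ω, fun j => d j ω) := by
    ext ω j
    simp [hd]
  have hdbin (j) : entropy P (d j) = Real.binEntropy (P.real {ω | f ω j ≠ g ω j}) := by
    rw [entropy_eq_binEntropy (hdm j)]
    congr 2
    ext ω
    simp [hd]
  calc entropy P f ≤ entropy P fun ω => (g ω, fun j => d j ω) := by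
        rw [hfd]
        exact entropy_comp_le (hg.prodMk (measurable_pi_lambda _ hdm)) _
    _ ≤ entropy P g + entropy P (fun ω j => d j ω) :=
        entropy_prodMk_le hg (measurable_pi_lambda _ hdm)
    _ ≤ entropy P g + ∑ j, entropy P (d j) := by
        gcongr
        exact entropy_pi_le hdm
    _ = _ := by simp only [hdbin]

end Entropy

/-! ### Entropy of invariant measures -/

section BlockEntropy

variable {α : Type} [Fintype α] [MeasurableSpace α]

lemma blockEntropy_eq_entropy (μ : ProbabilityMeasure (ℕ → α)) (n : ℕ) :
    blockEntropy μ n = entropy (μ : Measure (ℕ → α)) (restr n) := by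
  rw [blockEntropy, entropy, ← Finset.sum_neg_distrib]
  refine Finset.sum_congr rfl fun w _ => ?_
  have hcyl : {x : ℕ → α | ∀ k : Fin n, x (k : ℕ) = w k} = restr n ⁻¹' {w} :=
    Set.ext fun x => funext_iff.symm
  rw [cylMeasure, hcyl, Real.negMulLog, neg_mul]
  rfl

lemma bddBelow_blockEntropy_div (μ : ProbabilityMeasure (ℕ → α)) :
    BddBelow (Set.range fun n => blockEntropy μ n / (n : ℝ)) := by
  refine ⟨0, Set.forall_mem_range.2 fun n => ?_⟩
  rw [blockEntropy_eq_entropy]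
  exact div_nonneg (entropy_nonneg _) n.cast_nonneg

variable [DiscreteMeasurableSpace α]

lemma entropy_restr_shift_le {Ω : Type*} [MeasurableSpace Ω] {P : Measure Ω} [IsFiniteMeasure P]
    {U : Ω → ℕ → α} (hU : Measurable U) {j m L : ℕ} (h : j + m ≤ L) :
    entropy P (restr m ∘ shift^[j] ∘ U) ≤ entropy P (restr L ∘ U) := by
  have hcomp : restr m ∘ shift^[j] ∘ U =
      (fun v i => v (Fin.castLE h (Fin.natAdd j i))) ∘ restr L ∘ U :=
    funext fun ω => funext fun i => shift_iterate_apply (U ω) j i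
  rw [hcomp]
  exact entropy_comp_le ((measurable_restr L).comp hU) _

lemma subadditive_blockEntropy {μ : ProbabilityMeasure (ℕ → α)} (hμ : invariantPM μ) :
    Subadditive (blockEntropy μ) := by
  intro m n
  have hshift : MeasurePreserving shift^[m] (μ : Measure (ℕ → α)) μ :=
    MeasurePreserving.iterate ⟨measurable_shift, hμ⟩ m
  have happend : (restr (m + n) : (ℕ → α) → Fin (m + n) → α) =
      (fun c : (Fin m → α) × (Fin n → α) => Fin.append c.1 c.2) ∘
        fun x => (restr m x, (restr n ∘ shift^[m]) x) := by
    ext x j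
    refine Fin.addCases (fun i => ?_) (fun i => ?_) j
    · simp [restr]
    · simp [restr, shift_iterate_apply]
  simp only [blockEntropy_eq_entropy]
  rw [← entropy_comp_of_measurePreserving hshift (measurable_restr n), happend]
  have hn : Measurable (restr n ∘ shift^[m] : (ℕ → α) → Fin n → α) :=
    (measurable_restr n).comp hshift.measurable
  exact (entropy_comp_le ((measurable_restr m).prodMk hn) _).trans
    (entropy_prodMk_le (measurable_restr m) hn)

lemma tendsto_blockEntropy_div {μ : ProbabilityMeasure (ℕ → α)} (hμ : invariantPM μ) :
    Tendsto (fun n => blockEntropy μ n / (n : ℝ)) atTop (𝓝 (ksEntropy μ)) := by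
  have h := (subadditive_blockEntropy hμ).tendsto_lim (bddBelow_blockEntropy_div μ)
  rwa [ksEntropy, h.limsup_eq]

lemma ksEntropy_le_blockEntropy_div {μ : ProbabilityMeasure (ℕ → α)} (hμ : invariantPM μ) {n : ℕ}
    (hn : n ≠ 0) : ksEntropy μ ≤ blockEntropy μ n / n := by
  rw [tendsto_nhds_unique (tendsto_blockEntropy_div hμ)
    ((subadditive_blockEntropy hμ).tendsto_lim (bddBelow_blockEntropy_div μ))]
  exact (subadditive_blockEntropy hμ).lim_le_div (bddBelow_blockEntropy_div μ) hn

variable [TopologicalSpace α] [DiscreteTopology α]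

lemma continuous_blockEntropy (n : ℕ) :
    Continuous fun μ : ProbabilityMeasure (ℕ → α) => blockEntropy μ n := by
  simp only [blockEntropy_eq_entropy, entropy]
  refine continuous_finsetSum _ fun w _ => Real.continuous_negMulLog.comp ?_
  simp only [← integral_indicator_one (measurable_restr n (measurableSet_singleton w))]
  exact ProbabilityMeasure.continuous_integral_boundedContinuousFunction
    (BoundedContinuousFunction.mkOfCompact
      ⟨_, continuous_comp_restr (({w} : Set (Fin n → α)).indicator (1 : (Fin n → α) → ℝ))⟩)

lemma le_blockEntropy_averageLimit {Λ : ProbabilityMeasure (ℕ → α)} {n : ℕ}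
    (hΛ : MeasurePreserving shift^[n] (Λ : Measure (ℕ → α)) Λ) (hn : n ≠ 0) {L : ℕ} {c : ℝ}
    (hc : ∀ s < n, c ≤ entropy (Λ : Measure (ℕ → α)) (restr L ∘ shift^[s])) :
    c ≤ blockEntropy (averageLimit Λ) L := by
  have hweights : ∑ _s ∈ Finset.range n, (n : ℝ)⁻¹ = 1 := by
    rw [Finset.sum_const, Finset.card_range, nsmul_eq_mul, mul_inv_cancel₀ (Nat.cast_ne_zero.2 hn)]
  calc c = ∑ _s ∈ Finset.range n, (n : ℝ)⁻¹ * c := by rw [← Finset.sum_mul, hweights, one_mul]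
    _ ≤ ∑ s ∈ Finset.range n,
        (n : ℝ)⁻¹ * entropy (Λ : Measure (ℕ → α)) (restr L ∘ shift^[s]) := by
      gcongr with s hs
      exact hc s (Finset.mem_range.1 hs)
    _ = ∑ w, ∑ s ∈ Finset.range n, (n : ℝ)⁻¹ •
        Real.negMulLog ((Λ : Measure (ℕ → α)).real ((restr L ∘ shift^[s]) ⁻¹' {w})) := by
      simp only [entropy, Finset.mul_sum, smul_eq_mul]
      exact Finset.sum_comm
    _ ≤ blockEntropy (averageLimit Λ) L := by
      rw [blockEntropy_eq_entropy, entropy]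
      refine Finset.sum_le_sum fun w _ => ?_
      rw [measureReal_averageLimit_restr_preimage hΛ hn, Finset.mul_sum]
      exact Real.concaveOn_negMulLog.le_map_sum (fun _ _ => by positivity) hweights
        fun _ _ => measureReal_nonneg

end BlockEntropy

section BlockMeasureEntropy

variable {α : Type} [Fintype α] [MeasurableSpace α] [DiscreteMeasurableSpace α]

lemma entropy_wordLaw_id (μ : ProbabilityMeasure (ℕ → α)) (n : ℕ) :
    entropy (wordLaw μ n : Measure (Fin n → α)) id = blockEntropy μ n := by
  rw [blockEntropy_eq_entropy, ← Function.id_comp (restr n),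
    entropy_comp_of_measurePreserving (measurePreserving_restr μ n) measurable_id]

variable [Nonempty α]

lemma mul_blockEntropy_le_entropy_blockLaw (μ : ProbabilityMeasure (ℕ → α)) (n : ℕ) [NeZero n]
    (q : ℕ) :
    q * blockEntropy μ n ≤ entropy (blockLaw μ n : Measure (ℕ → α)) (restr (q * n)) := by
  set P := (iidLaw (wordLaw μ n) : Measure (ℕ → Fin n → α))
  have hunblock : MeasurePreserving (unblock n) P (blockLaw μ n : Measure (ℕ → α)) :=
    ⟨(isBlockMap_unblock n).measurable, rfl⟩
  have hind : ProbabilityTheory.iIndepFun (fun (i : Fin q) (ω : ℕ → Fin n → α) => ω i) P :=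
    (iIndepFun_iidLaw (wordLaw μ n)).precomp Fin.val_injective
  have hblocks : (fun (ω : ℕ → Fin n → α) (i : Fin q) => ω i) =
      (fun v i j => v (finProdFinEquiv (i, j))) ∘ restr (q * n) ∘ unblock n := by
    ext ω i j
    rw [← restr_shift_unblock ω i]
    simp [restr, shift_iterate_apply, add_comm, mul_comm]
  have hmeas : Measurable (restr (q * n) ∘ unblock n : (ℕ → Fin n → α) → Fin (q * n) → α) :=
    (measurable_restr _).comp hunblock.measurable
  calc q * blockEntropy μ n = ∑ i : Fin q, entropy P (id ∘ fun ω => ω i) := by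
        simp only [P, entropy_comp_of_measurePreserving (measurePreserving_eval_iidLaw _ _)
          measurable_id, entropy_wordLaw_id, Finset.sum_const, Finset.card_univ, Fintype.card_fin,
          nsmul_eq_mul]
    _ = entropy P (fun ω (i : Fin q) => ω i) :=
        (entropy_pi_of_iIndepFun (fun i => measurable_pi_apply (i : ℕ)) hind).symm
    _ ≤ entropy P (restr (q * n) ∘ unblock n) := by
        rw [hblocks]
        exact entropy_comp_le hmeas _
    _ = entropy (blockLaw μ n : Measure (ℕ → α)) (restr (q * n)) :=
        entropy_comp_of_measurePreserving hunblock (measurable_restr _)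

variable [TopologicalSpace α] [DiscreteTopology α]

lemma mul_blockEntropy_le_blockEntropy_blockMeasure (μ : ProbabilityMeasure (ℕ → α)) (n : ℕ)
    [NeZero n] (q : ℕ) :
    q * blockEntropy μ n ≤ blockEntropy (blockMeasure μ n) ((q + 1) * n) := by
  have hinv := measurePreserving_shift_iterate_blockLaw μ n
  refine le_blockEntropy_averageLimit hinv (NeZero.ne n) fun s hs =>
    (mul_blockEntropy_le_entropy_blockLaw μ n q).trans ?_
  have hle := entropy_restr_shift_le (P := (blockLaw μ n : Measure (ℕ → α)))
    (continuous_shift.iterate s).measurable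
    (show n - s + q * n ≤ (q + 1) * n by rw [Nat.succ_mul]; omega)
  rwa [← Function.iterate_add, Nat.sub_add_cancel hs.le,
    entropy_comp_of_measurePreserving hinv (measurable_restr _)] at hle

theorem ksEntropy_le_ksEntropy_blockMeasure {μ : ProbabilityMeasure (ℕ → α)} (hμ : invariantPM μ)
    (n : ℕ) [NeZero n] : ksEntropy μ ≤ ksEntropy (blockMeasure μ n) := by
  have hn : (0 : ℝ) < n := Nat.cast_pos.2 (NeZero.pos n)
  have hle (q : ℕ) : (q / (q + 1 : ℝ)) * ksEntropy μ ≤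
      blockEntropy (blockMeasure μ n) ((q + 1) * n) / ((q + 1) * n : ℕ) := by
    have hμn := ksEntropy_le_blockEntropy_div hμ (NeZero.ne n)
    have hq := mul_blockEntropy_le_blockEntropy_blockMeasure μ n q
    push_cast
    calc (q / (q + 1 : ℝ)) * ksEntropy μ ≤ (q / (q + 1 : ℝ)) * (blockEntropy μ n / n) := by gcongr
      _ = q * blockEntropy μ n / ((q + 1) * n) := by rw [div_mul_div_comm]
      _ ≤ _ := by gcongr
  have hleft := (tendsto_natCast_div_add_atTop (1 : ℝ)).mul_const (ksEntropy μ)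
  rw [one_mul] at hleft
  have hright := (tendsto_blockEntropy_div (μ := blockMeasure μ n)
    (invariantPM_averageLimit _)).comp (tendsto_atTop_mono
      (fun q => (Nat.le_succ q).trans (Nat.le_mul_of_pos_right _ (NeZero.pos n))) tendsto_id)
  exact le_of_tendsto_of_tendsto' hleft hright hle

end BlockMeasureEntropy

section Joining

variable {ξ : Measure ((ℕ → Bool) × (ℕ → Bool))} {μ ν : ProbabilityMeasure (ℕ → Bool)}

lemma IsJoining.blockEntropy_le (h : IsJoining ξ μ ν) (n : ℕ) :
    blockEntropy ν n ≤
      blockEntropy μ n + n * Real.binEntropy (ξ.real {p | p.1 0 ≠ p.2 0}) := by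
  have := h.isProbabilityMeasure
  have hle := entropy_le_add_sum_binEntropy (P := ξ) (f := restr n ∘ Prod.snd)
    (g := restr n ∘ Prod.fst) ((measurable_restr n).comp measurable_snd)
    ((measurable_restr n).comp measurable_fst)
  have hne (j : Fin n) : ξ.real {p | (restr n ∘ Prod.snd) p j ≠ (restr n ∘ Prod.fst) p j} =
      ξ.real {p | p.1 0 ≠ p.2 0} := by
    simp only [ne_comm, ← h.measureReal_apply_ne j]
    rfl
  simp only [hne, Finset.sum_const, Finset.card_univ, Fintype.card_fin, nsmul_eq_mul] at hle
  rwa [entropy_comp_of_measurePreserving h.measurePreserving_fst (measurable_restr n),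
    entropy_comp_of_measurePreserving h.measurePreserving_snd (measurable_restr n),
    ← blockEntropy_eq_entropy, ← blockEntropy_eq_entropy] at hle

theorem IsJoining.ksEntropy_le (h : IsJoining ξ μ ν) (hμ : invariantPM μ) (hν : invariantPM ν) :
    ksEntropy ν ≤ ksEntropy μ + Real.binEntropy (ξ.real {p | p.1 0 ≠ p.2 0}) := by
  refine le_of_tendsto_of_tendsto (tendsto_blockEntropy_div hν)
    ((tendsto_blockEntropy_div hμ).add_const _) ?_
  filter_upwards [eventually_gt_atTop 0] with n hn
  have hn' : (0 : ℝ) < n := Nat.cast_pos.2 hn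
  rw [div_add' _ _ _ hn'.ne', mul_comm (Real.binEntropy _)]
  exact div_le_div_of_nonneg_right (h.blockEntropy_le n) hn'.le

end Joining

/-! ### Entropy density -/

lemma eventually_ksEntropy_lt {α : Type} {ι : Type*} [Fintype α] [TopologicalSpace α]
    [DiscreteTopology α] [MeasurableSpace α] [DiscreteMeasurableSpace α]
    {μ : ProbabilityMeasure (ℕ → α)} (hμ : invariantPM μ)
    {l : Filter ι} {ν : ι → ProbabilityMeasure (ℕ → α)} (hlim : Tendsto ν l (𝓝 μ))
    (hν : ∀ᶠ i in l, invariantPM (ν i)) {ε : ℝ} (hε : 0 < ε) :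
    ∀ᶠ i in l, ksEntropy (ν i) < ksEntropy μ + ε := by
  obtain ⟨n, hn, hn0⟩ := (((tendsto_blockEntropy_div hμ).eventually_lt_const
    (lt_add_of_pos_right _ hε)).and (eventually_ne_atTop 0)).exists
  have hblock : ∀ᶠ i in l, blockEntropy (ν i) n / n < ksEntropy μ + ε :=
    ((((continuous_blockEntropy n).tendsto μ).comp hlim).div_const _).eventually_lt_const hn
  filter_upwards [hblock, hν] with i hi hinv
  exact (ksEntropy_le_blockEntropy_div hinv hn0).trans_lt hi

lemma eventually_lt_ksEntropy_hierMeasure {μ : ProbabilityMeasure (ℕ → Bool)}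
    (hμ : μ ∈ Msigma hierShift) {ε : ℝ} (hε : 0 < ε) :
    ∀ᶠ k in atTop, ksEntropy μ - ε <
      ksEntropy (hierMeasure (blockCode k) (wordLaw μ (blen (k + 1)))) := by
  have hbin := (Real.binEntropy_continuous.tendsto 0).comp (tendsto_const_div_two_pow 2 6)
  rw [Real.binEntropy_zero] at hbin
  filter_upwards [hbin.eventually_lt_const hε] with k hk
  obtain ⟨ξ, hξ, hδ⟩ := exists_isJoining_hierMeasure hμ k
  have hhalf : (2 : ℝ) / 2 ^ (k + 6) ≤ 2⁻¹ := by
    rw [div_le_iff₀ (by positivity), pow_add]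
    linarith [one_le_pow₀ (one_le_two (α := ℝ)) (n := k)]
  have hmono := Real.binEntropy_strictMonoOn.monotoneOn
    ⟨measureReal_nonneg, hδ.trans hhalf⟩ ⟨by positivity, hhalf⟩ hδ
  have hjoin := hξ.ksEntropy_le (hierMeasure_mem_Msigma _ (ofFn_blockCode_mem k)).1
    (invariantPM_averageLimit _)
  have hblock := ksEntropy_le_ksEntropy_blockMeasure hμ.1 (blen (k + 1))
  simp only [Function.comp_apply] at hk
  linarith

theorem entropyDense_hierShift : EntropyDense hierShift := by
  intro μ hμ U hU hμU ε hε
  have hlim := tendsto_hierMeasure hμ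
  have hmem (k : ℕ) : hierMeasure (blockCode k) (wordLaw μ (blen (k + 1))) ∈ Msigma hierShift :=
    hierMeasure_mem_Msigma _ (ofFn_blockCode_mem k)
  obtain ⟨k, hkU, hlower, hupper⟩ := ((hlim.eventually (hU.mem_nhds hμU)).and
    ((eventually_lt_ksEntropy_hierMeasure hμ hε).and
      (eventually_ksEntropy_lt hμ.1 hlim (Eventually.of_forall fun k => (hmem k).1) hε))).exists
  exact ⟨_, hmem k, hkU, ergodicPM_hierMeasure _ _, abs_sub_lt_iff.2 ⟨by linarith, by linarith⟩⟩

/-- there exists a minimal, topologically mixing shift space over `{0,1}`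
with positive topological entropy and the `d̄`-shadowing property, whose ergodic measures
are entropy dense and form an uncountable set. -/
theorem statement19 :
    ∃ X : Set (ℕ → Bool), MinimalShift X ∧ MixingShift X ∧ 0 < topEntropy X ∧
      DbarShadowing X ∧ EntropyDense X ∧
      ¬ ({μ : ProbabilityMeasure (ℕ → Bool) | μ ∈ Msigma X ∧ ErgodicPM μ}).Countable :=
  ⟨hierShift, minimalShift_hierShift, mixingShift_hierShift, topEntropy_hierShift_pos,
    dbarShadowing_hierShift, entropyDense_hierShift, not_countable_ergodic⟩

end DbarPaper
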